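/- For every integer s ≥ 1, the dimension over F_2 of the subspace of GL_4(F_2)-invariants of Q_n in degree n = 2(2^s − 1) + 2^s = 3·2^s − 2 equals 0 if s ∈ {1, 2, 4} and equals 1 if s ∉ {1, 2, 4}. -/

import Mathlib

/-!
Common setup: the polynomial algebra `P_4 = F_2[x_1,x_2,x_3,x_4]` (variables `X 0, ..., X 3`),
the Steenrod action, hit polynomials, the cohit spaces `Q_n`, and the (induced) actions of
`GL_4(F_2)` and of the symmetric group `Σ_4` on `Q_n`.
-/

open MvPolynomial

noncomputable section

abbrev kk : Type := ZMod 2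
abbrev P4 : Type := MvPolynomial (Fin 4) kk

/-- The total Steenrod square: the algebra endomorphism of `P4` with `X i ↦ X i + (X i)^2`.
For `g` homogeneous of degree `d`, `Sq^t g` is the degree-`d+t` homogeneous component
of `sqTotal g`. -/
def sqTotal : P4 →ₐ[kk] P4 := aeval fun i => X i + X i ^ 2

/-- The homogeneous polynomials of degree `n`, i.e. `(P_4)_n`, as a submodule. -/
def homog (n : ℕ) : Submodule kk P4 := homogeneousSubmodule (Fin 4) kk n

/-- The subspace `H_n` of hit polynomials of degree `n`: it is spanned by the elements
`Sq^{n-d}(g) = (sqTotal g)_n` for `g` homogeneous of degree `d < n`, i.e. by all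
`∑_{t>0} Sq^t(f_t)` with `f_t ∈ (P_4)_{n-t}`. -/
def hitSub (n : ℕ) : Submodule kk P4 :=
  Submodule.span kk
    {p | ∃ d, d < n ∧ ∃ g ∈ homog d, p = homogeneousComponent n (sqTotal g)}

/-- The cohit space `Q_n = (P_4)_n / H_n`. -/
abbrev Qn (n : ℕ) :=
  ↥(homog n) ⧸ ((hitSub n).comap (homog n).subtype)

/-- Projection of a polynomial onto its degree-`n` part, landing in `homog n`. -/
def toHomog (n : ℕ) : P4 →ₗ[kk] homog n :=
  (homogeneousComponent n).codRestrict (homog n) fun f => homogeneousComponent_mem n f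

/-- The class in `Q_n` of (the degree-`n` component of) a polynomial.  For `f`
homogeneous of degree `n` this is the class `[f]` of `f`. -/
def Qmk (n : ℕ) : P4 →ₗ[kk] Qn n :=
  ((hitSub n).comap (homog n).subtype).mkQ.comp (toHomog n)

/-- Substitution action of a matrix `M`: the algebra endomorphism `X i ↦ ∑ j M i j • X j`. -/
def substM (M : Matrix (Fin 4) (Fin 4) kk) : P4 →ₐ[kk] P4 :=
  aeval fun i => ∑ j, M i j • X j

/-- The set of invertible `4 × 4` matrices over `F_2`, i.e. `GL_4(F_2)`. -/
def glSet : Set (Matrix (Fin 4) (Fin 4) kk) := {M | IsUnit M}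

/-- The set of permutation matrices, i.e. `Σ_4 ⊆ GL_4(F_2)`. -/
def permSet : Set (Matrix (Fin 4) (Fin 4) kk) :=
  {M | ∃ σ : Equiv.Perm (Fin 4), M = σ.toPEquiv.toMatrix}

/-- Homogeneous polynomials of degree `n` whose class in `Q_n` is invariant under every
element of `G` (the action on classes being induced by `substM`): for every `M ∈ G`,
`M·f - f` is hit. -/
def invPre (n : ℕ) (G : Set (Matrix (Fin 4) (Fin 4) kk)) : Submodule kk P4 :=
  homog n ⊓ ⨅ M ∈ G, (hitSub n).comap ((substM M).toLinearMap - LinearMap.id)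

/-- The subspace `(Q_n)^G` of `G`-invariant classes in `Q_n`. -/
def QInv (n : ℕ) (G : Set (Matrix (Fin 4) (Fin 4) kk)) : Submodule kk (Qn n) :=
  (invPre n G).map (Qmk n)

/-- The `Σ_4`-submodule of `Q_n` generated by the classes of the polynomials in `S`:
the span of the classes of all the permuted polynomials `σ · f`, `σ ∈ Σ_4`, `f ∈ S`. -/
def permSpan (n : ℕ) (S : Set P4) : Submodule kk (Qn n) :=
  Submodule.span kk
    {c | ∃ σ : Equiv.Perm (Fin 4), ∃ f ∈ S, c = Qmk n (rename (⇑σ) f)}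

abbrev hc (n : ℕ) : P4 →ₗ[kk] P4 := homogeneousComponent n

theorem kk_cases (c : kk) : c = 0 ∨ c = 1 := by revert c; decide

theorem add_self2 (f : P4) : f + f = 0 := CharTwo.add_self_eq_zero f
theorem sub2 (f g : P4) : f - g = f + g := CharTwo.sub_eq_add f g
theorem sq_add2 (f g : P4) : (f + g) ^ 2 = f ^ 2 + g ^ 2 := CharTwo.add_sq f g

/-- the linear map `f ↦ p f²` -/
def sqm (p : P4) : P4 →ₗ[kk] P4 where
  toFun f := p * f ^ 2
  map_add' f g := by rw [sq_add2, mul_add]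
  map_smul' c f := by
    rcases kk_cases c with rfl | rfl <;> simp

@[simp] theorem sqm_apply (p f : P4) : sqm p f = p * f ^ 2 := rfl

theorem homog_iff (n : ℕ) (f : P4) : f ∈ homog n ↔ f.IsHomogeneous n := Iff.rfl

theorem hc_of_homog {n : ℕ} {f : P4} (h : f ∈ homog n) : hc n f = f := by
  rw [hc, homogeneousComponent_of_mem h, if_pos rfl]

theorem hc_of_homog_ne {n m : ℕ} {f : P4} (h : f ∈ homog m) (hne : n ≠ m) : hc n f = 0 := by
  rw [hc, homogeneousComponent_of_mem h, if_neg hne]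

theorem hc_mem (n : ℕ) (f : P4) : hc n f ∈ homog n := homogeneousComponent_mem n f

theorem hc_hc (n : ℕ) (f : P4) : hc n (hc n f) = hc n f := hc_of_homog (hc_mem n f)

theorem hom_ind {p : P4 → Prop} (h : ∀ d, ∀ f ∈ homog d, p f)
    (hadd : ∀ f g, p f → p g → p (f + g)) (f : P4) : p f := by
  rw [← sum_homogeneousComponent f]
  refine Finset.sum_induction _ p hadd (h 0 0 (Submodule.zero_mem _)) ?_
  intro i _
  exact h i _ (hc_mem i f)

theorem hc_pmul {e : ℕ} {p : P4} (hp : p ∈ homog e) (k : ℕ) (f : P4) :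
    hc (e + 2 * k) (p * f ^ 2) = p * (hc k f) ^ 2 := by
  induction f using hom_ind with
  | h d f hf =>
    have h2 : p * f ^ 2 ∈ homog (e + d * 2) := by
      rw [homog_iff] at *; exact hp.mul (hf.pow 2)
    by_cases hk : k = d
    · subst hk
      rw [mul_comm 2 k, hc_of_homog h2, hc_of_homog hf]
    · rw [hc_of_homog_ne h2 (by omega), hc_of_homog_ne hf hk]; simp
  | hadd f g hf hg => rw [sq_add2, mul_add, map_add, hf, hg, map_add, sq_add2, mul_add]

theorem hc_pmul_zero {e n : ℕ} {p : P4} (hp : p ∈ homog e) (f : P4)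
    (hn : ∀ k, n ≠ e + 2 * k) : hc n (p * f ^ 2) = 0 := by
  induction f using hom_ind with
  | h d f hf =>
    have h2 : p * f ^ 2 ∈ homog (e + d * 2) := by
      rw [homog_iff] at *; exact hp.mul (hf.pow 2)
    rw [hc_of_homog_ne h2]
    have := hn d; omega
  | hadd f g hf hg => rw [sq_add2, mul_add, map_add, hf, hg, add_zero]

theorem hc_pm {e : ℕ} {p : P4} (hp : p ∈ homog e) (k : ℕ) (f : P4) :
    hc (e + k) (p * f) = p * (hc k f) := by
  induction f using hom_ind with
  | h d f hf =>
    have h2 : p * f ∈ homog (e + d) := by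
      rw [homog_iff] at *; exact hp.mul hf
    by_cases hk : k = d
    · subst hk
      rw [hc_of_homog h2, hc_of_homog hf]
    · rw [hc_of_homog_ne h2 (by omega), hc_of_homog_ne hf hk]; simp
  | hadd f g hf hg => rw [mul_add, map_add, hf, hg, map_add, mul_add]

theorem hc_pm_zero {e n : ℕ} {p : P4} (hp : p ∈ homog e) (f : P4)
    (hn : n < e) : hc n (p * f) = 0 := by
  induction f using hom_ind with
  | h d f hf =>
    have h2 : p * f ∈ homog (e + d) := by
      rw [homog_iff] at *; exact hp.mul hf
    rw [hc_of_homog_ne h2]; omega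
  | hadd f g hf hg => rw [mul_add, map_add, hf, hg, add_zero]

theorem X_homog (i : Fin 4) : (X i : P4) ∈ homog 1 := isHomogeneous_X _ i
theorem one_homog : (1 : P4) ∈ homog 0 := isHomogeneous_one _ _
theorem mul_homog {a b : ℕ} {p q : P4} (hp : p ∈ homog a) (hq : q ∈ homog b) :
    p * q ∈ homog (a + b) := by
  rw [homog_iff] at *; exact hp.mul hq

@[simp] theorem sq_X (i : Fin 4) : sqTotal (X i) = X i + X i ^ 2 := by simp [sqTotal]

/-- squarefree monomials -/
def xx (A : Finset (Fin 4)) : P4 := ∏ i ∈ A, X i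

theorem xx_homog (A : Finset (Fin 4)) : xx A ∈ homog A.card := by
  rw [homog_iff, xx]
  have := IsHomogeneous.prod A (fun i => (X i : P4)) (fun _ => 1) (fun i _ => isHomogeneous_X _ i)
  simpa using this

theorem sq_xx (I : Finset (Fin 4)) (q : P4) :
    sqTotal (xx I * q ^ 2) = ∑ A ∈ I.powerset, xx (I \ A) * (xx A * sqTotal q) ^ 2 := by
  rw [map_mul, map_pow, xx, map_prod]
  simp only [sq_X]
  simp_rw [add_comm (X _ : P4)]
  rw [Finset.prod_add, Finset.sum_mul]
  refine Finset.sum_congr rfl fun A hA => ?_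
  rw [Finset.prod_pow]
  simp only [xx]; ring

theorem mono_xx (a : Fin 4 →₀ ℕ) : ∃ A : Finset (Fin 4), ∃ b : Fin 4 →₀ ℕ,
    (monomial a (1:kk)) = xx A * (monomial b 1) ^ 2 := by
  refine ⟨Finset.univ.filter fun i => a i % 2 = 1, Finsupp.equivFunOnFinite.symm fun i => a i / 2, ?_⟩
  have : xx (Finset.univ.filter fun i => a i % 2 = 1) =
      monomial (Finsupp.equivFunOnFinite.symm fun i => a i % 2) 1 := by
    rw [xx, Finset.prod_filter, monomial_eq]
    simp only [C_1, one_mul]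
    rw [Finsupp.prod_fintype _ _ (by simp)]
    refine Finset.prod_congr rfl fun i _ => ?_
    simp only [Finsupp.equivFunOnFinite_symm_apply_apply]
    rcases Nat.mod_two_eq_zero_or_one (a i) with h | h <;> simp [h]
  rw [this, monomial_pow, monomial_mul]
  have h3 : (Finsupp.equivFunOnFinite.symm fun i => a i % 2) +
      2 • (Finsupp.equivFunOnFinite.symm fun i => a i / 2) = a := by
    ext i
    simp only [Finsupp.add_apply, Finsupp.smul_apply, Finsupp.equivFunOnFinite_symm_apply_apply,
      smul_eq_mul]
    omega
  rw [h3]; simp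

theorem xx_ind {p : P4 → Prop} (h : ∀ A q, p (xx A * q ^ 2))
    (hadd : ∀ f g, p f → p g → p (f + g)) (f : P4) : p f := by
  induction f using MvPolynomial.induction_on' with
  | add f g hf hg => exact hadd _ _ hf hg
  | monomial a b =>
    rcases kk_cases b with rfl | rfl
    · simpa using h ∅ 0
    · obtain ⟨A, c, hc⟩ := mono_xx a
      rw [hc]; exact h _ _

/-- the total square does not lower degree and is the identity in lowest degree -/
theorem sq_low {d : ℕ} {f : P4} (hf : f ∈ homog d) :
    hc d (sqTotal f) = f ∧ ∀ n < d, hc n (sqTotal f) = 0 := by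
  have key : ∀ a : Fin 4 →₀ ℕ, ∃ g : P4, sqTotal (monomial a 1) = monomial a 1 * g ∧ hc 0 g = 1 := by
    intro a
    refine ⟨∏ i, (1 + X i) ^ (a i), ?_, ?_⟩
    · rw [sqTotal, aeval_monomial, monomial_eq, Finsupp.prod_fintype _ _ (by simp),
        Finsupp.prod_fintype _ _ (by simp)]
      simp only [map_one, one_mul]
      rw [← Finset.prod_mul_distrib]
      refine Finset.prod_congr rfl fun i _ => ?_
      rw [← mul_pow]; congr 1; ring
    · rw [hc, homogeneousComponent_zero]
      simp [← constantCoeff_eq]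
  have h1 : ∀ g ∈ homog d, hc d (sqTotal g) = g ∧ ∀ n < d, hc n (sqTotal g) = 0 := by
    intro g hg
    rw [g.as_sum] 
    have hmem : ∀ a ∈ g.support, a.degree = d := by
      intro a ha
      have := hg (mem_support_iff.1 ha)
      rw [Finsupp.degree_eq_weight_one]; exact this
    have hc1 : ∀ a ∈ g.support, coeff a g = 1 := by
      intro a ha
      exact (kk_cases _).resolve_left (mem_support_iff.1 ha)
    simp only [map_sum]
    constructor
    · refine Finset.sum_congr rfl fun a ha => ?_
      obtain ⟨q, hq, h0⟩ := key a
      rw [hc1 a ha, hq]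
      have hm : (monomial a (1:kk)) ∈ homog d := isHomogeneous_monomial _ (hmem a ha)
      have := hc_pm hm 0 q
      rw [add_zero] at this; rw [this, h0, mul_one]
    · intro n hn
      refine Finset.sum_eq_zero fun a ha => ?_
      obtain ⟨q, hq, h0⟩ := key a
      rw [hc1 a ha, hq]
      have hm : (monomial a (1:kk)) ∈ homog d := isHomogeneous_monomial _ (hmem a ha)
      exact hc_pm_zero hm q hn
  exact h1 f hf

/-- `HH n`: polynomials whose degree `n` part is hit -/
def HH (n : ℕ) : Submodule kk P4 := (hitSub n).comap (hc n)

theorem hit_homog {n : ℕ} {f : P4} (h : f ∈ hitSub n) : f ∈ homog n := by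
  have : hitSub n ≤ homog n := by
    rw [hitSub, Submodule.span_le]
    rintro p ⟨d, _, g, _, rfl⟩
    exact hc_mem _ _
  exact this h

theorem mem_HH {n : ℕ} {f : P4} : f ∈ HH n ↔ hc n f ∈ hitSub n := Iff.rfl

theorem HH_of_hit {n : ℕ} {f : P4} (h : f ∈ hitSub n) : f ∈ HH n := by
  rw [mem_HH, hc_of_homog (hit_homog h)]; exact h

theorem hit_of_HH {n : ℕ} {f : P4} (hf : f ∈ homog n) (h : f ∈ HH n) : f ∈ hitSub n := by
  rw [mem_HH, hc_of_homog hf] at h; exact h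

theorem HH_hc {n : ℕ} {f : P4} : hc n f ∈ HH n ↔ f ∈ HH n := by
  rw [mem_HH, mem_HH, hc_hc]

theorem HH_zero_hc {n : ℕ} {f : P4} (h : hc n f = 0) : f ∈ HH n := by
  rw [mem_HH, h]; exact Submodule.zero_mem _

/-- `Sq g ≡ g`. -/
theorem sq_HH (n : ℕ) (g : P4) : sqTotal g + g ∈ HH n := by
  induction g using hom_ind with
  | h d g hg =>
    rcases lt_trichotomy d n with h | h | h
    · rw [mem_HH, map_add, hc_of_homog_ne hg (by omega), add_zero]
      exact Submodule.subset_span ⟨d, h, g, hg, rfl⟩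
    · subst h
      apply HH_zero_hc
      rw [map_add, (sq_low hg).1, hc_of_homog hg, add_self2]
    · apply HH_zero_hc
      rw [map_add, (sq_low hg).2 n h, hc_of_homog_ne hg (by omega), add_zero]
  | hadd f g hf hg =>
    have : sqTotal (f + g) + (f + g) = (sqTotal f + f) + (sqTotal g + g) := by
      rw [map_add]; ring
    rw [this]; exact Submodule.add_mem _ hf hg

/-- induction for hit elements, via HH -/
theorem HH_sub_of {n : ℕ} (W : Submodule kk P4)
    (h : ∀ d, d < n → ∀ g ∈ homog d, hc n (sqTotal g) ∈ W) : hitSub n ≤ W := by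
  rw [hitSub, Submodule.span_le]
  rintro p ⟨d, hd, g, hg, rfl⟩
  exact h d hd g hg

/-- congruence modulo a submodule in char 2 -/
theorem mem_of_add {W : Submodule kk P4} {f g : P4} (h : f + g ∈ W) (hg : g ∈ W) : f ∈ W := by
  have := W.add_mem h hg
  rwa [add_assoc, add_self2, add_zero] at this

def indF (I : Finset (Fin 4)) : Fin 4 →₀ ℕ :=
  Finsupp.equivFunOnFinite.symm fun i => if i ∈ I then 1 else 0

theorem xx_mono (I : Finset (Fin 4)) : xx I = monomial (indF I) 1 := by
  rw [xx, monomial_eq, Finsupp.prod_fintype _ _ (by simp)]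
  simp only [C_1, one_mul, indF, Finsupp.equivFunOnFinite_symm_apply_apply]
  rw [← Finset.prod_subset (Finset.subset_univ I)]
  · refine Finset.prod_congr rfl fun i hi => by simp [hi]
  · intro i _ hi; simp [hi]

/-- Kameko-type maps: `x_I q² ↦ [I = K] q`. -/
def bet (K : Finset (Fin 4)) : P4 →ₗ[kk] P4 :=
  (basisMonomials (Fin 4) kk).constr kk fun a =>
    if (Finset.univ.filter fun i => a i % 2 = 1) = K then
      monomial (Finsupp.equivFunOnFinite.symm fun i => a i / 2) 1 else 0

theorem bet_mono (K : Finset (Fin 4)) (a : Fin 4 →₀ ℕ) : bet K (monomial a 1) =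
    if (Finset.univ.filter fun i => a i % 2 = 1) = K then
      monomial (Finsupp.equivFunOnFinite.symm fun i => a i / 2) 1 else 0 := by
  have h := Module.Basis.constr_basis (basisMonomials (Fin 4) kk) kk (fun a : Fin 4 →₀ ℕ =>
    if (Finset.univ.filter fun i => a i % 2 = 1) = K then
      (monomial (Finsupp.equivFunOnFinite.symm fun i => a i / 2) 1 : P4) else 0) a
  rw [coe_basisMonomials] at h
  exact h

theorem mono_ind {p : P4 → Prop} (h : ∀ a, p (monomial a 1)) (h0 : p 0)
    (hadd : ∀ f g, p f → p g → p (f + g)) (f : P4) : p f := by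
  induction f using MvPolynomial.induction_on' with
  | add f g hf hg => exact hadd _ _ hf hg
  | monomial a b =>
    rcases kk_cases b with rfl | rfl
    · simpa using h0
    · exact h a

theorem bet_xx (K I : Finset (Fin 4)) (q : P4) :
    bet K (xx I * q ^ 2) = if I = K then q else 0 := by
  induction q using mono_ind with
  | h0 => simp
  | hadd f g hf hg =>
    rw [sq_add2, mul_add, map_add, hf, hg]; split_ifs <;> simp
  | h b =>
    rw [xx_mono, monomial_pow, monomial_mul, one_pow, one_mul, bet_mono]
    have e1 : (Finset.univ.filter fun i => (indF I + 2 • b) i % 2 = 1) = I := by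
      ext i
      simp only [indF, Finsupp.add_apply, Finsupp.smul_apply, Finset.mem_filter, Finset.mem_univ,
        true_and, Finsupp.equivFunOnFinite_symm_apply_apply, smul_eq_mul]
      split_ifs with h <;> simp [h]
    have e2 : (Finsupp.equivFunOnFinite.symm fun i => (indF I + 2 • b) i / 2) = b := by
      ext i
      simp only [indF, Finsupp.add_apply, Finsupp.smul_apply,
        Finsupp.equivFunOnFinite_symm_apply_apply, smul_eq_mul]
      split_ifs with h <;> omega
    rw [e1, e2]

theorem decomp (f : P4) : f = ∑ A, xx A * (bet A f) ^ 2 := by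
  induction f using xx_ind with
  | h A q =>
    rw [Finset.sum_eq_single A]
    · rw [bet_xx, if_pos rfl]
    · intro B _ hB
      rw [bet_xx, if_neg (Ne.symm hB)]; simp
    · simp
  | hadd f g hf hg =>
    conv_lhs => rw [hf, hg]
    rw [← Finset.sum_add_distrib]
    refine Finset.sum_congr rfl fun A _ => ?_
    rw [map_add, sq_add2, mul_add]

theorem bet_hc (K : Finset (Fin 4)) (k : ℕ) (f : P4) :
    bet K (hc (K.card + 2 * k) f) = hc k (bet K f) := by
  induction f using xx_ind with
  | h A q =>
    by_cases h : A = K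
    · subst h
      rw [hc_pmul (xx_homog A), bet_xx, bet_xx]; simp
    · rw [bet_xx, if_neg h, map_zero]
      by_cases h2 : ∃ j, K.card + 2 * k = A.card + 2 * j
      · obtain ⟨j, hj⟩ := h2
        rw [hj, hc_pmul (xx_homog A), bet_xx, if_neg h]
      · push Not at h2
        rw [hc_pmul_zero (xx_homog A) _ h2, map_zero]
  | hadd f g hf hg => rw [map_add, map_add, map_add, map_add, hf, hg]

theorem bet_sq (K I : Finset (Fin 4)) (q : P4) : bet K (sqTotal (xx I * q ^ 2)) =
    ∑ A ∈ I.powerset, if I \ A = K then xx A * sqTotal q else 0 := by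
  rw [sq_xx, map_sum]
  refine Finset.sum_congr rfl fun A _ => ?_
  rw [bet_xx]

theorem top_sq (d k : ℕ) (a : Fin 4 →₀ ℕ) (ha : a.degree = d) :
    hc (2 * d + k) (sqTotal (monomial a 1)) = if k = 0 then (monomial a 1) ^ 2 else 0 := by
  have key : ∀ (a : Fin 4 →₀ ℕ) (c : kk), ∃ d, monomial a c ∈ homog d ∧ ∀ k,
      hc (2 * d + k) (sqTotal (monomial a c)) = if k = 0 then (monomial a c) ^ 2 else 0 := by
    intro a c
    refine MvPolynomial.induction_on_monomial (motive := fun f : P4 => ∃ d, f ∈ homog d ∧ ∀ k,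
      hc (2 * d + k) (sqTotal f) = if k = 0 then f ^ 2 else 0) ?_ ?_ a c
    · intro c
      refine ⟨0, isHomogeneous_C _ _, ?_⟩
      intro k
      rw [sqTotal, aeval_C, algebraMap_eq]
      split_ifs with h
      · subst h
        rw [hc_of_homog (isHomogeneous_C _ _)]
        rcases kk_cases c with rfl | rfl <;> simp
      · rw [hc_of_homog_ne (isHomogeneous_C _ _)]; omega
    · intro p i hp
      obtain ⟨d, h1, h2⟩ := hp
      refine ⟨d + 1, mul_homog h1 (X_homog i), ?_⟩
      intro k
      have e : sqTotal (p * X i) = X i * sqTotal p + (X i * X i) * sqTotal p := by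
        rw [map_mul, sq_X]; ring
      rw [e, map_add]
      have a1 := hc_pm (X_homog i) (2 * d + (k + 1)) (sqTotal p)
      have a2 := hc_pm (mul_homog (X_homog i) (X_homog i)) (2 * d + k) (sqTotal p)
      rw [show 2 * (d + 1) + k = 1 + (2 * d + (k+1)) by omega, a1,
        show 1 + (2 * d + (k + 1)) = 1 + 1 + (2 * d + k) by omega, a2, h2, h2]
      simp only [Nat.add_eq_zero_iff, one_ne_zero, and_false, if_false, mul_zero, zero_add]
      split_ifs
      · ring
      · simp
  obtain ⟨d', h1, h2⟩ := key a 1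
  have : d' = d := by
    have h3 : monomial a (1:kk) ∈ homog d := isHomogeneous_monomial _ ha
    by_contra hne
    have h4 := hc_of_homog_ne h1 (Ne.symm hne)
    rw [hc_of_homog h3] at h4
    simp at h4
  subst this
  exact h2 k

theorem sq_hit {n : ℕ} (hn : 0 < n) (f : P4) : f ^ 2 ∈ HH n := by
  induction f using mono_ind with
  | h0 => simp
  | hadd f g hf hg => rw [sq_add2]; exact Submodule.add_mem _ hf hg
  | h a =>
    have h1 : (monomial a (1:kk)) ∈ homog a.degree := isHomogeneous_monomial _ rfl
    have h2 : (monomial a (1:kk)) ^ 2 ∈ homog (2 * a.degree) := by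
      rw [two_mul, pow_two]; exact mul_homog h1 h1
    by_cases h : n = 2 * a.degree
    · subst h
      have h3 := top_sq a.degree 0 a rfl
      rw [if_pos rfl, add_zero] at h3
      have h4 := sq_HH (2 * a.degree) (monomial a (1:kk))
      rw [mem_HH, map_add, h3, hc_of_homog_ne h1 (by omega), add_zero] at h4
      exact HH_of_hit h4
    · exact HH_zero_hc (hc_of_homog_ne h2 h)

theorem par {n e : ℕ} {p : P4} (hp : p ∈ homog e) (h : n % 2 ≠ e % 2) (f : P4) :
    p * f ^ 2 ∈ HH n := HH_zero_hc (hc_pmul_zero hp f fun k hk => by omega)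

theorem X2_homog (i j : Fin 4) : (X i * X j : P4) ∈ homog 2 := mul_homog (X_homog i) (X_homog j)
theorem X3_homog (i j k : Fin 4) : (X i * X j * X k : P4) ∈ homog 3 :=
  mul_homog (X2_homog i j) (X_homog k)
theorem X4_homog (i j k l : Fin 4) : (X i * X j * X k * X l : P4) ∈ homog 4 :=
  mul_homog (X3_homog i j k) (X_homog l)

theorem sq2_X (i j : Fin 4) (g : P4) : sqTotal (X i * X j * g ^ 2) =
    X i * X j * (sqTotal g) ^ 2 + X i * (X j * sqTotal g) ^ 2 + X j * (X i * sqTotal g) ^ 2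
    + (X i * X j * sqTotal g) ^ 2 := by
  simp only [map_mul, map_pow, sq_X]; ring

theorem sq3_X (i j k : Fin 4) (g : P4) : sqTotal (X i * X j * X k * g ^ 2) =
    X i * X j * X k * (sqTotal g) ^ 2 + (X j * X k * (X i * sqTotal g) ^ 2
    + X i * X k * (X j * sqTotal g) ^ 2 + X i * X j * (X k * sqTotal g) ^ 2)
    + (X i * (X j * X k * sqTotal g) ^ 2 + X j * (X i * X k * sqTotal g) ^ 2
    + X k * (X i * X j * sqTotal g) ^ 2) + (X i * X j * X k * sqTotal g) ^ 2 := by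
  simp only [map_mul, map_pow, sq_X]; ring

theorem sq4_X (i j k l : Fin 4) (g : P4) : sqTotal (X i * X j * X k * X l * g ^ 2) =
    X i * X j * X k * X l * (sqTotal g) ^ 2
    + (X j * X k * X l * (X i * sqTotal g) ^ 2 + X i * X k * X l * (X j * sqTotal g) ^ 2
      + X i * X j * X l * (X k * sqTotal g) ^ 2 + X i * X j * X k * (X l * sqTotal g) ^ 2)
    + (X i * X j * (X k * X l * sqTotal g) ^ 2 + X k * X l * (X i * X j * sqTotal g) ^ 2
      + X i * X k * (X j * X l * sqTotal g) ^ 2 + X j * X l * (X i * X k * sqTotal g) ^ 2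
      + X i * X l * (X j * X k * sqTotal g) ^ 2 + X j * X k * (X i * X l * sqTotal g) ^ 2)
    + (X i * (X j * X k * X l * sqTotal g) ^ 2 + X j * (X i * X k * X l * sqTotal g) ^ 2
      + X k * (X i * X j * X l * sqTotal g) ^ 2 + X l * (X i * X j * X k * sqTotal g) ^ 2)
    + (X i * X j * X k * X l * sqTotal g) ^ 2 := by
  simp only [map_mul, map_pow, sq_X]; ring

theorem hcT {e e' : ℕ} {p p' : P4} (hp : p ∈ homog e) (hp' : p' ∈ homog e') (n d : ℕ)
    (f : P4) (hn : n = e + 2 * (e' + d)) : hc n (p * (p' * f) ^ 2) = p * (p' * hc d f) ^ 2 := by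
  rw [hn, hc_pmul hp, hc_pm hp']

theorem hcT0 {e e' : ℕ} {p p' : P4} (hp : p ∈ homog e) (hp' : p' ∈ homog e') (n d : ℕ)
    (f : P4) (hn : n ≠ e + 2 * (e' + d)) (hf : f ∈ homog d) : hc n (p * (p' * f) ^ 2) = 0 := by
  apply hc_of_homog_ne _ hn
  rw [pow_two, two_mul]
  exact mul_homog hp (mul_homog (mul_homog hp' hf) (mul_homog hp' hf))

/-- `Sq¹(x_i x_j h²)`. -/
theorem rel2 {n : ℕ} (hn : n % 2 = 1) (i j : Fin 4) (h : P4) :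
    X j * (X i * h) ^ 2 + X i * (X j * h) ^ 2 ∈ HH n := by
  induction h using hom_ind with
  | hadd f g hf hg =>
    have := Submodule.add_mem _ hf hg
    convert this using 1
    simp only [mul_add, sq_add2]; ring
  | h d h hh =>
    by_cases hd : n = 1 + 2 * (1 + d)
    · have h1 := sq_HH n (X i * X j * h ^ 2)
      rw [sq2_X] at h1
      have p1 := par (n := n) (X2_homog i j) (by omega) h
      have p2 := par (n := n) (X2_homog i j) (by omega) (sqTotal h)
      have p3 := par (n := n) one_homog (by omega) (X i * X j * sqTotal h)
      rw [one_mul] at p3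
      have h2 : X j * (X i * sqTotal h) ^ 2 + X i * (X j * sqTotal h) ^ 2 ∈ HH n := by
        convert sub_mem h1 (add_mem p1 (add_mem p2 p3)) using 1; ring
      rw [← HH_hc, map_add, hcT (X_homog j) (X_homog i) n d _ hd,
        hcT (X_homog i) (X_homog j) n d _ hd, (sq_low hh).1] at h2
      exact h2
    · apply HH_zero_hc
      rw [map_add, hcT0 (X_homog j) (X_homog i) n d _ hd hh,
        hcT0 (X_homog i) (X_homog j) n d _ hd hh, add_zero]

/-- `Sq¹(x_i x_j x_k h²)`. -/
theorem rel3 {n : ℕ} (hn : n % 2 = 0) (hn0 : 0 < n) (i j k : Fin 4) (h : P4) :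
    X j * X k * (X i * h) ^ 2 + X i * X k * (X j * h) ^ 2 + X i * X j * (X k * h) ^ 2 ∈ HH n := by
  induction h using hom_ind with
  | hadd f g hf hg =>
    have := Submodule.add_mem _ hf hg
    convert this using 1
    simp only [mul_add, sq_add2]; ring
  | h d h hh =>
    by_cases hd : n = 2 + 2 * (1 + d)
    · have h1 := sq_HH n (X i * X j * X k * h ^ 2)
      rw [sq3_X] at h1
      have p1 := par (n := n) (X3_homog i j k) (by omega) h
      have p2 := par (n := n) (X3_homog i j k) (by omega) (sqTotal h)
      have p3 := par (n := n) (X_homog i) (by omega) (X j * X k * sqTotal h)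
      have p4 := par (n := n) (X_homog j) (by omega) (X i * X k * sqTotal h)
      have p5 := par (n := n) (X_homog k) (by omega) (X i * X j * sqTotal h)
      have p6 := sq_hit hn0 (X i * X j * X k * sqTotal h)
      have h2 : X j * X k * (X i * sqTotal h) ^ 2 + X i * X k * (X j * sqTotal h) ^ 2
          + X i * X j * (X k * sqTotal h) ^ 2 ∈ HH n := by
        convert sub_mem h1 (add_mem p1 (add_mem p2 (add_mem p3 (add_mem p4 (add_mem p5 p6)))))
          using 1; ring
      rw [← HH_hc, map_add, map_add, hcT (X2_homog _ _) (X_homog _) n d _ hd,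
        hcT (X2_homog _ _) (X_homog _) n d _ hd, hcT (X2_homog _ _) (X_homog _) n d _ hd,
        (sq_low hh).1] at h2
      exact h2
    · apply HH_zero_hc
      rw [map_add, map_add, hcT0 (X2_homog _ _) (X_homog _) n d _ hd hh,
        hcT0 (X2_homog _ _) (X_homog _) n d _ hd hh, hcT0 (X2_homog _ _) (X_homog _) n d _ hd hh]
      simp

/-- `Sq¹(x_i x_j x_k x_l h²)`. -/
theorem rel4 {n : ℕ} (hn : n % 2 = 1) (i j k l : Fin 4) (h : P4) :
    X j * X k * X l * (X i * h) ^ 2 + X i * X k * X l * (X j * h) ^ 2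
      + X i * X j * X l * (X k * h) ^ 2 + X i * X j * X k * (X l * h) ^ 2 ∈ HH n := by
  induction h using hom_ind with
  | hadd f g hf hg =>
    have := Submodule.add_mem _ hf hg
    convert this using 1
    simp only [mul_add, sq_add2]; ring
  | h d h hh =>
    by_cases hd : n = 3 + 2 * (1 + d)
    · have h1 := sq_HH n (X i * X j * X k * X l * h ^ 2)
      rw [sq4_X] at h1
      have p1 := par (n := n) (X4_homog i j k l) (by omega) h
      have p2 := par (n := n) (X4_homog i j k l) (by omega) (sqTotal h)
      have pp := fun a b => par (n := n) (X2_homog a b) (by omega)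
      have p3 := par (n := n) one_homog (by omega) (X i * X j * X k * X l * sqTotal h)
      rw [one_mul] at p3
      have z : ∀ a b c e : Fin 4, X a * (X b * X c * X e * sqTotal h) ^ 2 ∈ HH n := by
        intro a b c e
        apply HH_zero_hc
        rw [show n = 1 + 2 * (d + 2) by omega, hc_pmul (X_homog a)]
        have : hc (d + 2) (X b * X c * X e * sqTotal h) = 0 := by
          by_cases h0 : d = 0
          · exact hc_pm_zero (X3_homog _ _ _) _ (by omega)
          · rw [show d + 2 = 3 + (d - 1) by omega, hc_pm (X3_homog _ _ _),
              (sq_low hh).2 _ (by omega), mul_zero]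
        rw [this]; simp
      have h2 : X j * X k * X l * (X i * sqTotal h) ^ 2 + X i * X k * X l * (X j * sqTotal h) ^ 2
      + X i * X j * X l * (X k * sqTotal h) ^ 2 + X i * X j * X k * (X l * sqTotal h) ^ 2 ∈ HH n := by
        convert sub_mem h1 (add_mem p1 (add_mem p2 (add_mem p3
          (add_mem (pp i j (X k * X l * sqTotal h)) (add_mem (pp k l (X i * X j * sqTotal h))
          (add_mem (pp i k (X j * X l * sqTotal h)) (add_mem (pp j l (X i * X k * sqTotal h))
          (add_mem (pp i l (X j * X k * sqTotal h)) (add_mem (pp j k (X i * X l * sqTotal h))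
          (add_mem (z i j k l) (add_mem (z j i k l) (add_mem (z k i j l) (z l i j k)))))))))))))
          using 1; ring
      have t := fun a b c e => hcT (X3_homog a b c) (X_homog e) n d (sqTotal h) hd
      rw [← HH_hc, map_add, map_add, map_add, t, t, t, t, (sq_low hh).1] at h2
      exact h2
    · apply HH_zero_hc
      have t := fun a b c e => hcT0 (X3_homog a b c) (X_homog e) n d h hd hh
      rw [map_add, map_add, map_add, t, t, t, t]
      simp

theorem sqodd {d : ℕ} (u : P4) : hc (2 * d + 1) (u ^ 2) = 0 := by
  have := hc_pmul_zero (n := 2 * d + 1) one_homog u (fun k => by omega)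
  rwa [one_mul] at this

theorem sqev {d : ℕ} (u : P4) : hc (2 * d) (u ^ 2) = (hc d u) ^ 2 := by
  have := hc_pmul one_homog d u
  rwa [one_mul, one_mul, zero_add] at this

/-- `Sq²(x_i x_j x_k u⁴)`. -/
theorem rel5 {n : ℕ} (hn : n % 2 = 1) (i j k : Fin 4) (u : P4) :
    X i * (X j * X k * u ^ 2) ^ 2 + X j * (X i * X k * u ^ 2) ^ 2 +
      X k * (X i * X j * u ^ 2) ^ 2 ∈ HH n := by
  induction u using hom_ind with
  | hadd f g hf hg =>
    have := Submodule.add_mem _ hf hg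
    convert this using 1
    simp only [mul_add, sq_add2]; ring
  | h d u hh =>
    have hu2 : u ^ 2 ∈ homog (2 * d) := by rw [pow_two, two_mul]; exact mul_homog hh hh
    by_cases hd : n = 1 + 2 * (2 + 2 * d)
    · have h1 := sq_HH n (X i * X j * X k * (u ^ 2) ^ 2)
      rw [sq3_X] at h1
      have p1 : X i * X j * X k * (u ^ 2) ^ 2 ∈ HH n := by
        apply HH_zero_hc
        rw [show n = 3 + 2 * (2 * d + 1) by omega, hc_pmul (X3_homog _ _ _), sqodd]; simp
      have p2 : X i * X j * X k * (sqTotal (u ^ 2)) ^ 2 ∈ HH n := by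
        apply HH_zero_hc
        rw [show n = 3 + 2 * (2 * d + 1) by omega, hc_pmul (X3_homog _ _ _), map_pow, sqodd]; simp
      have p3 := fun a b => par (n := n) (X2_homog a b) (by omega)
      have p6 := par (n := n) one_homog (by omega) (X i * X j * X k * sqTotal (u^2))
      rw [one_mul] at p6
      have h2 : X i * (X j * X k * sqTotal (u ^ 2)) ^ 2 + X j * (X i * X k * sqTotal (u ^ 2)) ^ 2 +
          X k * (X i * X j * sqTotal (u ^ 2)) ^ 2 ∈ HH n := by
        convert sub_mem h1 (add_mem p1 (add_mem p2 (add_mem (p3 j k (X i * sqTotal (u^2)))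
          (add_mem (p3 i k (X j * sqTotal (u^2)))
          (add_mem (p3 i j (X k * sqTotal (u^2))) p6)))))
          using 1; ring
      have t := fun a b c => hcT (X_homog a) (X2_homog b c) n (2 * d) (sqTotal (u ^ 2)) hd
      rw [← HH_hc, map_add, map_add, t, t, t, (sq_low hu2).1] at h2
      exact h2
    · apply HH_zero_hc
      have t := fun a b c => hcT0 (X_homog a) (X2_homog b c) n (2 * d) (u ^ 2) hd hu2
      rw [map_add, map_add, t, t, t]
      simp

/-- `Sq²(x_i x_j x_k x_l u⁴)`. -/
theorem rel6 {n : ℕ} (hn : n % 2 = 0) (hn0 : 0 < n) (i j k l : Fin 4) (u : P4) :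
    X i * X j * (X k * X l * u ^ 2) ^ 2 + X k * X l * (X i * X j * u ^ 2) ^ 2
      + X i * X k * (X j * X l * u ^ 2) ^ 2 + X j * X l * (X i * X k * u ^ 2) ^ 2
      + X i * X l * (X j * X k * u ^ 2) ^ 2 + X j * X k * (X i * X l * u ^ 2) ^ 2 ∈ HH n := by
  induction u using hom_ind with
  | hadd f g hf hg =>
    have := Submodule.add_mem _ hf hg
    convert this using 1
    simp only [mul_add, sq_add2]; ring
  | h d u hh =>
    have hu2 : u ^ 2 ∈ homog (2 * d) := by rw [pow_two, two_mul]; exact mul_homog hh hh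
    by_cases hd : n = 2 + 2 * (2 + 2 * d)
    · have h1 := sq_HH n (X i * X j * X k * X l * (u ^ 2) ^ 2)
      rw [sq4_X] at h1
      have p1 : X i * X j * X k * X l * (u ^ 2) ^ 2 ∈ HH n := by
        apply HH_zero_hc
        rw [show n = 4 + 2 * (2 * d + 1) by omega, hc_pmul (X4_homog _ _ _ _), sqodd]; simp
      have p2 : X i * X j * X k * X l * (sqTotal (u ^ 2)) ^ 2 ∈ HH n := by
        apply HH_zero_hc
        rw [show n = 4 + 2 * (2 * d + 1) by omega, hc_pmul (X4_homog _ _ _ _), map_pow, sqodd]; simp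
      have p3 := fun a b c => par (n := n) (X3_homog a b c) (by omega)
      have p4 := fun a => par (n := n) (X_homog a) (by omega)
      have p6 := sq_hit hn0 (X i * X j * X k * X l * sqTotal (u^2))
      generalize hS : sqTotal (u ^ 2) = S at *
      have h2 : X i * X j * (X k * X l * S) ^ 2 + X k * X l * (X i * X j * S) ^ 2
      + X i * X k * (X j * X l * S) ^ 2 + X j * X l * (X i * X k * S) ^ 2
      + X i * X l * (X j * X k * S) ^ 2 + X j * X k * (X i * X l * S) ^ 2 ∈ HH n := by
        convert sub_mem h1 (add_mem p1 (add_mem p2 (add_mem (p3 j k l (X i * S))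
          (add_mem (p3 i k l (X j * S)) (add_mem (p3 i j l (X k * S)) (add_mem (p3 i j k (X l * S))
          (add_mem (p4 i (X j * X k * X l * S)) (add_mem (p4 j (X i * X k * X l * S))
          (add_mem (p4 k (X i * X j * X l * S)) (add_mem (p4 l (X i * X j * X k * S)) p6))))))))))
          using 1; ring
      have t := fun a b c e => hcT (X2_homog a e) (X2_homog b c) n (2 * d) S hd
      have t2 := (sq_low hu2).1
      rw [hS] at t2
      rw [← HH_hc, map_add, map_add, map_add, map_add, map_add, t, t, t, t, t, t, t2] at h2
      exact h2
    · apply HH_zero_hc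
      have t := fun a b c e => hcT0 (X2_homog a e) (X2_homog b c) n (2 * d) (u ^ 2) hd hu2
      rw [map_add, map_add, map_add, map_add, map_add, t, t, t, t, t, t]
      simp

/-- generic prefix lemma -/
theorem prefG {e n : ℕ} {p : P4} (hp : p ∈ homog e) (W : Submodule kk P4)
    (hW : HH (e + 2 * n) ≤ W) (h : ∀ g, sqTotal (p * g ^ 2) + p * (sqTotal g) ^ 2 ∈ W)
    (hW2 : ∀ f, f ∈ W → hc (e + 2 * n) f ∈ W)
    {f : P4} (hf : f ∈ HH n) : p * f ^ 2 ∈ W := by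
  have h1 : hitSub n ≤ W.comap (sqm p) := by
    apply HH_sub_of
    intro d hd g hg
    rw [Submodule.mem_comap, sqm_apply, ← hc_pmul hp]
    apply hW2
    have h2 := h g
    have h3 := hW (sq_HH (e + 2 * n) (p * g ^ 2))
    have h4 : p * g ^ 2 ∈ W := by
      apply hW; apply HH_zero_hc
      have := hc_pmul hp n g
      rw [this, hc_of_homog_ne hg (by omega)]; simp
    convert sub_mem h2 (sub_mem h3 h4) using 1
    ring
  have h5 := h1 hf
  rw [Submodule.mem_comap, sqm_apply] at h5
  have h6 : p * (f + hc n f) ^ 2 ∈ W := by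
    apply hW; apply HH_zero_hc
    rw [hc_pmul hp, map_add, hc_hc, add_self2]; simp
  convert sub_mem h6 h5 using 1
  rw [sq_add2]; ring

theorem HH_hc' {n : ℕ} (f : P4) (h : f ∈ HH n) : hc n f ∈ HH n := HH_hc.2 h

theorem pref1 {n : ℕ} (i : Fin 4) {f : P4} (hf : f ∈ HH n) : X i * f ^ 2 ∈ HH (1 + 2 * n) := by
  refine prefG (X_homog i) _ le_rfl ?_ HH_hc' hf
  intro g
  have := par (n := 1 + 2 * n) one_homog (by omega) (X i * sqTotal g)
  convert this using 1
  have e : sqTotal (X i * g ^ 2) = X i * (sqTotal g) ^ 2 + 1 * (X i * sqTotal g) ^ 2 := by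
    simp only [map_mul, map_pow, sq_X]; ring
  rw [e, add_right_comm, add_self2, zero_add]

theorem pref2 {n : ℕ} (i j : Fin 4) {f : P4} (hf : f ∈ HH n) :
    X i * X j * f ^ 2 ∈ HH (2 + 2 * n) := by
  refine prefG (X2_homog i j) _ le_rfl ?_ HH_hc' hf
  intro g
  have h1 := par (n := 2 + 2 * n) (X_homog i) (by omega) (X j * sqTotal g)
  have h2 := par (n := 2 + 2 * n) (X_homog j) (by omega) (X i * sqTotal g)
  have h3 := sq_hit (n := 2 + 2 * n) (by omega) (X i * X j * sqTotal g)
  convert add_mem h1 (add_mem h2 h3) using 1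
  rw [sq2_X]
  linear_combination add_self2 (X i * X j * (sqTotal g) ^ 2)

def nn : ℕ → ℕ
  | 0 => 1
  | s + 1 => 2 + 2 * nn s
def dd : ℕ → ℕ
  | 0 => 0
  | s + 1 => 3 + 2 * dd s

theorem nn_dd (s : ℕ) : nn (s + 1) = 4 + 2 * dd s := by
  induction s with
  | zero => rfl
  | succ s ih => rw [nn, ih, dd]; ring
theorem dd_nn (s : ℕ) : dd (s + 1) = 1 + 2 * nn s := by
  induction s with
  | zero => rfl
  | succ s ih => rw [dd, ih, nn]; ring
theorem nn_pos (s : ℕ) : 0 < nn s := by cases s <;> simp [nn]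
theorem nn_even (s : ℕ) : nn (s + 1) % 2 = 0 := by simp [nn]
theorem dd_odd (s : ℕ) : dd (s + 1) % 2 = 1 := by rw [dd_nn]; omega

theorem card_cases (A : Finset (Fin 4)) : A.card % 2 = 1 ∨ A = ∅ ∨
    (∃ a b, a ≠ b ∧ A = {a, b}) ∨ A = Finset.univ := by revert A; decide

theorem xx_pair {a b : Fin 4} (h : a ≠ b) : xx {a, b} = X a * X b := by
  rw [xx, Finset.prod_pair h]
theorem xx_univ : xx Finset.univ = X 0 * X 1 * X 2 * X 3 := by
  rw [xx, Fin.prod_univ_four]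

theorem T0a (r : ℕ) (i a b : Fin 4) (u : P4) : X i * (X a * X b * u ^ 2) ^ 2 ∈ HH (dd (r + 2)) := by
  have h1 := rel5 (dd_odd (r + 1)) i a b u
  have h2 := rel2 (dd_odd (r + 1)) a i (X b * u ^ 2)
  have h3 := rel2 (dd_odd (r + 1)) b i (X a * u ^ 2)
  convert add_mem h1 (add_mem h2 h3) using 1
  linear_combination -(add_self2 (X a * (X i * X b * u ^ 2) ^ 2)) -
    (add_self2 (X b * (X i * X a * u ^ 2) ^ 2))- (add_self2 (X i * (X a * X b * u ^ 2) ^ 2))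

theorem four_perm (i : Fin 4) : ∃ j k l : Fin 4, (X 0 * X 1 * X 2 * X 3 : P4) =
    X i * X j * X k * X l ∧ i ≠ j ∧ i ≠ k ∧ i ≠ l ∧ j ≠ k ∧ j ≠ l ∧ k ≠ l := by
  fin_cases i
  · exact ⟨1, 2, 3, rfl, by decide⟩
  · exact ⟨0, 2, 3, by simp only [Fin.mk_one]; ring, by decide⟩
  · exact ⟨0, 1, 3, by simp only [Fin.reduceFinMk]; ring, by decide⟩
  · exact ⟨0, 1, 2, by simp only [Fin.reduceFinMk]; ring, by decide⟩

theorem T0 (r : ℕ) (i : Fin 4) (f : P4) : X i * f ^ 2 ∈ HH (dd (r + 2)) := by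
  induction f using xx_ind with
  | hadd f g hf hg => rw [sq_add2, mul_add]; exact add_mem hf hg
  | h A q =>
    rcases card_cases A with h | rfl | ⟨a, b, hab, rfl⟩ | rfl
    · rw [dd_nn]
      apply pref1
      exact par (xx_homog A) (by rw [h, nn_even]; decide) q
    · rw [dd_nn]
      apply pref1
      simp only [xx, Finset.prod_empty, one_mul]
      exact sq_hit (nn_pos _) q
    · rw [xx_pair hab]; exact T0a r i a b q
    · obtain ⟨j, k, l, h, _⟩ := four_perm i
      rw [xx_univ, h]
      have h1 := rel2 (dd_odd (r + 1)) i j (X i * X k * X l * q ^ 2)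
      have h2 := T0a r j k l (X i * q)
      convert sub_mem h1 h2 using 1
      ring

theorem pref3 {r : ℕ} (i j k : Fin 4) {f : P4} (hf : f ∈ HH (dd (r + 1))) :
    X i * X j * X k * f ^ 2 ∈ HH (dd (r + 2)) := by
  refine prefG (X3_homog i j k) (HH (dd (r + 2))) le_rfl ?_ HH_hc' hf
  intro g
  have hodd : dd (r + 2) % 2 = 1 := dd_odd (r + 1)
  have p3 := fun a b => par (n := dd (r + 2)) (X2_homog a b) (by omega)
  have p6 := par (n := dd (r + 2)) one_homog (by omega) (X i * X j * X k * sqTotal g)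
  have h := fun a => T0 r a
  rw [sq3_X]
  convert add_mem (p3 j k (X i * sqTotal g)) (add_mem (p3 i k (X j * sqTotal g))
     (add_mem (p3 i j (X k * sqTotal g)) (add_mem p6 (add_mem (h i (X j * X k * sqTotal g))
     (add_mem (h j (X i * X k * sqTotal g)) (h k (X i * X j * sqTotal g))))))) using 1
  linear_combination add_self2 (X i * X j * X k * (sqTotal g) ^ 2)

def word {ι : Type} (e : ι → P4) : List ι → P4 → P4
  | [], t => t
  | a :: l, t => e a * (word e l t) ^ 2

theorem word_append {ι : Type} (e : ι → P4) (l l' : List ι) (t : P4) :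
    word e (l ++ l') t = word e l (word e l' t) := by
  induction l with
  | nil => rfl
  | cons a l ih => simp [word, ih]

theorem word_add {ι : Type} (e : ι → P4) (l : List ι) (t t' : P4) :
    word e l (t + t') = word e l t + word e l t' := by
  induction l with
  | nil => rfl
  | cons a l ih => simp only [word, ih, sq_add2, mul_add]

def ed : Fin 6 → Fin 4 × Fin 4 := ![(0,1),(0,2),(0,3),(1,2),(1,3),(2,3)]
def e2 (I : Fin 6) : P4 := X (ed I).1 * X (ed I).2
def eix (i j : Fin 4) : Fin 6 :=
  if i = 0 ∧ j = 1 ∨ i = 1 ∧ j = 0 then 0 else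
  if i = 0 ∧ j = 2 ∨ i = 2 ∧ j = 0 then 1 else
  if i = 0 ∧ j = 3 ∨ i = 3 ∧ j = 0 then 2 else
  if i = 1 ∧ j = 2 ∨ i = 2 ∧ j = 1 then 3 else
  if i = 1 ∧ j = 3 ∨ i = 3 ∧ j = 1 then 4 else 5

theorem e2_eix {i j : Fin 4} (h : i ≠ j) : e2 (eix i j) = X i * X j := by
  have : ed (eix i j) = (i, j) ∨ ed (eix i j) = (j, i) := by revert i j; decide
  rw [e2]
  rcases this with h | h <;> rw [h]
  exact mul_comm _ _

/-- words of type 2 -/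
def w2 (L : List (Fin 6)) (k : Fin 4) : P4 := word e2 L (X k)

def B (s : ℕ) : Submodule kk P4 :=
  HH (nn s) ⊔ Submodule.span kk {f | ∃ L k, L.length = s ∧ f = w2 L k}

theorem HH_le_B (s : ℕ) : HH (nn s) ≤ B s := le_sup_left

theorem w2_mem (L : List (Fin 6)) (k : Fin 4) {s : ℕ} (h : L.length = s) : w2 L k ∈ B s :=
  Submodule.mem_sup_right (Submodule.subset_span ⟨L, k, h, rfl⟩)

theorem pref2' {s : ℕ} (I : Fin 6) {f : P4} (hf : f ∈ HH (nn s)) :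
    e2 I * f ^ 2 ∈ HH (nn (s + 1)) := pref2 _ _ hf

theorem prefL2 {s n : ℕ} (l : List (Fin 6)) {f : P4} (hf : f ∈ HH (nn s)) (h : n = l.length + s) :
    word e2 l f ∈ HH (nn n) := by
  subst h
  induction l with
  | nil => simpa [word] using hf
  | cons a l ih =>
    rw [word, List.length_cons, show l.length + 1 + s = l.length + s + 1 by omega]
    exact pref2' a ih

theorem prefB {s : ℕ} (I : Fin 6) {f : P4} (hf : f ∈ B s) : e2 I * f ^ 2 ∈ B (s + 1) := by
  have : B s ≤ (B (s + 1)).comap (sqm (e2 I)) := by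
    rw [B, sup_le_iff]
    constructor
    · intro f hf; exact HH_le_B _ (pref2' I hf)
    · rw [Submodule.span_le]
      rintro f ⟨L, k, h, rfl⟩
      exact w2_mem (I :: L) k (by simp [h])
  exact this hf

theorem hc0_mem (q : P4) : hc 0 q ∈ Submodule.span kk {(1 : P4)} := by
  rw [hc, homogeneousComponent_zero, C_eq_smul_one]
  exact Submodule.smul_mem _ _ (Submodule.mem_span_singleton_self _)

theorem hc1_mem (q : P4) : hc 1 q ∈ Submodule.span kk (Set.range (X : Fin 4 → P4)) := by
  induction q using xx_ind with
  | hadd f g hf hg => rw [map_add]; exact add_mem hf hg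
  | h A q =>
    by_cases h : A.card = 1
    · have h1 := xx_homog A
      rw [h] at h1
      have := hc_pmul h1 0 q
      rw [mul_zero, add_zero] at this
      rw [this]
      obtain ⟨a, rfl⟩ := Finset.card_eq_one.1 h
      simp only [xx, Finset.prod_singleton]
      have h3 : Submodule.span kk {(1 : P4)} ≤
          (Submodule.span kk (Set.range (X : Fin 4 → P4))).comap (sqm (X a)) := by
        rw [Submodule.span_le]
        rintro _ rfl
        simp only [SetLike.mem_coe, Submodule.mem_comap, sqm_apply, one_pow, mul_one]
        exact Submodule.subset_span ⟨a, rfl⟩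
      exact h3 (hc0_mem q)
    · rw [hc_pmul_zero (xx_homog A) q (by intro k; omega)]
      exact zero_mem _

theorem edge_B (s : ℕ) (i j : Fin 4) (g : P4) : X i * X j * g ^ 2 ∈ B (s + 1) := by
  by_cases hij : i = j
  · subst hij
    apply HH_le_B
    have := sq_hit (nn_pos (s + 1)) (X i * g)
    rwa [mul_pow, pow_two (X i)] at this
  induction s generalizing i j g with
  | zero =>
    have h1 : X i * X j * (hc 1 g) ^ 2 ∈ B (0 + 1) := by
      have h3 : Submodule.span kk (Set.range (X : Fin 4 → P4)) ≤
          (B (0 + 1)).comap (sqm (X i * X j)) := by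
        rw [Submodule.span_le]
        rintro _ ⟨k, rfl⟩
        have := w2_mem (s := 1) [eix i j] k rfl
        rw [w2, word, word, e2_eix hij] at this
        exact this
      exact h3 (hc1_mem g)
    have h6 : X i * X j * (g + hc 1 g) ^ 2 ∈ B (0 + 1) := by
      apply HH_le_B; apply HH_zero_hc
      have := hc_pmul (X2_homog i j) 1 (g + hc 1 g)
      rw [map_add, hc_hc, add_self2] at this
      rw [nn, nn, this]; simp
    convert sub_mem h6 h1 using 1
    rw [sq_add2]; ring
  | succ s ih =>
    induction g using xx_ind with
    | hadd f g hf hg => rw [sq_add2, mul_add]; exact add_mem hf hg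
    | h A q =>
      have hp : ∀ {a b : Fin 4} (hab : a ≠ b) {i j : Fin 4} (hij : i ≠ j) (u : P4),
          X i * X j * (X a * X b * u ^ 2) ^ 2 ∈ B (s + 1 + 1) := by
        intro a b hab i j hij u
        rw [← e2_eix hij]
        exact prefB _ (ih a b u hab)
      rcases card_cases A with h | rfl | ⟨a, b, hab, rfl⟩ | rfl
      · apply HH_le_B
        exact pref2 i j (par (xx_homog A) (by rw [h, nn_even]; decide) q)
      · apply HH_le_B
        refine pref2 (n := nn (s + 1)) i j ?_
        simp only [xx, Finset.prod_empty, one_mul]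
        exact sq_hit (nn_pos _) q
      · rw [xx_pair hab]; exact hp hab hij q
      · obtain ⟨k, l, h, h2⟩ : ∃ k l : Fin 4, (X 0 * X 1 * X 2 * X 3 : P4) =
          X i * X j * X k * X l ∧ i ≠ k ∧ i ≠ l ∧ j ≠ k ∧ j ≠ l ∧ k ≠ l := by
          obtain ⟨a, b, c, h, h1, h2, h3, h4, h5, h6⟩ := four_perm i
          have : j = a ∨ j = b ∨ j = c := by
            clear h; revert i j a b c; decide
          rcases this with rfl | rfl | rfl
          · exact ⟨b, c, h, h2, h3, h4, h5, h6⟩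
          · exact ⟨a, c, by rw [h]; ring, h1, h3, h4.symm, h6, h5⟩
          · exact ⟨a, b, by rw [h]; ring, h1, h2, h5.symm, h6.symm, h4⟩
        rw [xx_univ, h]
        have h1 := HH_le_B _ (rel3 (nn_even (s + 1)) (nn_pos _) i j k (X i * X j * X l * q ^ 2))
        have h3 := hp h2.2.2.2.1 h2.2.2.1 (X i * q)
        have h4 := hp h2.2.1 h2.1 (X j * q)
        convert sub_mem h1 (add_mem h3 h4) using 1
        ring

/-- `f ≡ x_1x_2x_3x_4 (αf)²` modulo `B`. -/
theorem alpha_B (s : ℕ) (f : P4) :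
    f + X 0 * X 1 * X 2 * X 3 * (bet Finset.univ f) ^ 2 ∈ B (s + 1) := by
  induction f using xx_ind with
  | hadd f g hf hg =>
    convert add_mem hf hg using 1
    rw [map_add, sq_add2]; ring
  | h A q =>
    rw [bet_xx]
    rcases card_cases A with h | rfl | ⟨a, b, hab, rfl⟩ | rfl
    · rw [if_neg (by rintro rfl; simp at h)]
      simp only [ne_eq, OfNat.ofNat_ne_zero, not_false_eq_true, zero_pow, mul_zero, add_zero]
      apply HH_le_B
      exact par (xx_homog A) (by rw [h, nn_even]; decide) q
    · rw [if_neg (by decide)]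
      simp only [ne_eq, OfNat.ofNat_ne_zero, not_false_eq_true, zero_pow, mul_zero, add_zero]
      apply HH_le_B
      simp only [xx, Finset.prod_empty, one_mul]
      exact sq_hit (nn_pos _) q
    · rw [if_neg (by intro h; revert a b; decide)]
      simp only [ne_eq, OfNat.ofNat_ne_zero, not_false_eq_true, zero_pow, mul_zero, add_zero]
      rw [xx_pair hab]; exact edge_B s a b q
    · rw [if_pos rfl, xx_univ, add_self2]; exact zero_mem _

/-- abstract support lemma -/
theorem support_lemma {ι : Type} [DecidableEq ι] (R : List ι → List ι → Prop)
    (hrefl : ∀ l, R l l) (htrans : ∀ a b c, R a b → R b c → R a c)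
    (hcons : ∀ a l l', R l l' → R (a :: l) (a :: l'))
    (hswap : ∀ a b l, R (a :: b :: l) (b :: a :: l))
    (hidem : ∀ a b l, R (a :: a :: b :: l) (a :: b :: b :: l)) :
    ∀ L L' : List ι, L.length = L'.length → (∀ a, a ∈ L ↔ a ∈ L') → R L L' := by
  have hperm : ∀ L L' : List ι, L.Perm L' → R L L' := by
    intro L L' h
    induction h with
    | nil => exact hrefl _
    | cons x _ ih => exact hcons _ _ _ ih
    | swap x y l => exact hswap _ _ _
    | trans _ _ h1 h2 => exact htrans _ _ _ h1 h2
  have hid : ∀ a b (l : List ι), a ∈ l → b ∈ l → R (a :: l) (b :: l) := by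
    intro a b l ha hb
    by_cases hab : a = b
    · subst hab; exact hrefl _
    have h1 : l.Perm (a :: b :: (l.erase a).erase b) := by
      refine (List.perm_cons_erase ha).trans (List.Perm.cons _ ?_)
      exact List.perm_cons_erase ((List.mem_erase_of_ne (Ne.symm hab)).2 hb)
    refine htrans _ _ _ (hperm _ _ (h1.cons a)) (htrans _ _ _ (hidem _ _ _) ?_)
    exact hperm _ _ ((List.Perm.swap b a _).trans (h1.symm.cons b))
  have hmain : ∀ n, ∀ L L' : List ι, L.length = n → L'.length = n → (∀ a, a ∈ L ↔ a ∈ L') →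
      R L L' := by
    intro n
    induction n with
    | zero =>
      intro L L' h1 h2 _
      rw [List.length_eq_zero_iff.1 h1, List.length_eq_zero_iff.1 h2]; exact hrefl _
    | succ n ih =>
      intro L L' h1 h2 hs
      by_cases hN : L.Nodup
      · apply hperm
        have : L.Subperm L' := hN.subperm (fun a ha => (hs a).1 ha)
        exact this.perm_of_length_le (by omega)
      have hN' : ¬ L'.Nodup := by
        intro h
        have : L'.Subperm L := h.subperm (fun a ha => (hs a).2 ha)
        exact hN ((this.perm_of_length_le (by omega)).nodup_iff.1 h)
      have hdup : ∀ M : List ι, ¬ M.Nodup → ∃ a M1, M.Perm (a :: a :: M1) := by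
        intro M hM
        rw [List.nodup_iff_count_le_one] at hM
        push Not at hM
        obtain ⟨a, ha⟩ := hM
        have m1 : a ∈ M := List.count_pos_iff.1 (by omega)
        have m2 : a ∈ M.erase a := List.count_pos_iff.1 (by rw [List.count_erase_self]; omega)
        exact ⟨a, _, (List.perm_cons_erase m1).trans ((List.perm_cons_erase m2).cons a)⟩
      obtain ⟨a, M, hM⟩ := hdup L hN
      obtain ⟨b, M', hM'⟩ := hdup L' hN'
      have ha : a ∈ b :: M' := by
        have := (hs a).1 (hM.mem_iff.2 (by simp))
        have := hM'.mem_iff.1 this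
        simpa using this
      refine htrans _ _ _ (hperm _ _ hM) ?_
      refine htrans _ (a :: b :: M') _ ?_
        (htrans _ _ _ (hid a b (b :: M') ha (by simp)) (hperm _ _ hM'.symm))
      apply hcons
      refine ih _ _ ?_ ?_ ?_
      · have := hM.length_eq; simp at this ⊢; omega
      · have := hM'.length_eq; simp at this ⊢; omega
      · intro c
        have e1 : c ∈ a :: M ↔ c ∈ L := by rw [hM.mem_iff]; simp
        have e2 : c ∈ b :: M' ↔ c ∈ L' := by rw [hM'.mem_iff]; simp
        rw [e1, e2, hs]
  intro L L' h hs
  exact hmain _ L L' h rfl hs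

/-- equivalence of words of type 2 -/
def Eq2 (k : Fin 4) (L L' : List (Fin 6)) : Prop :=
  L.length = L'.length ∧ w2 L k + w2 L' k ∈ HH (nn L.length)

theorem Eq2.refl (k : Fin 4) (L : List (Fin 6)) : Eq2 k L L :=
  ⟨rfl, by rw [add_self2]; exact zero_mem _⟩
theorem Eq2.trans {k : Fin 4} {L L' L'' : List (Fin 6)} (h : Eq2 k L L') (h' : Eq2 k L' L'') :
    Eq2 k L L'' := by
  refine ⟨h.1.trans h'.1, ?_⟩
  have h1 := h.2
  have h2 := h'.2
  rw [← h.1] at h2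
  convert add_mem h1 h2 using 1
  linear_combination -(add_self2 (w2 L' k))
theorem Eq2.symm {k : Fin 4} {L L' : List (Fin 6)} (h : Eq2 k L L') : Eq2 k L' L :=
  ⟨h.1.symm, by rw [← h.1, add_comm]; exact h.2⟩
theorem Eq2.app {k : Fin 4} (l : List (Fin 6)) {L L' : List (Fin 6)} (h : Eq2 k L L') :
    Eq2 k (l ++ L) (l ++ L') := by
  refine ⟨by simp [h.1], ?_⟩
  rw [w2, w2, word_append, word_append, ← word_add]
  exact prefL2 l h.2 (by simp)

theorem adj_swap (s : ℕ) (i j k : Fin 4) (w : P4) :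
    X i * X j * (X i * X k * w ^ 2) ^ 2 + X i * X k * (X i * X j * w ^ 2) ^ 2 ∈ HH (nn (s + 2)) := by
  have h1 := rel3 (nn_even (s + 1)) (nn_pos _) i j k (X i * w ^ 2)
  have h2 : X j * X k * ((X i * w) ^ 2) ^ 2 ∈ HH (nn (s + 2)) :=
    pref2 (n := nn (s + 1)) _ _ (sq_hit (nn_pos _) _)
  convert sub_mem h1 h2 using 1
  ring

theorem opp_swap (s : ℕ) (i j k l : Fin 4) (w : P4) :
    X i * X j * (X k * X l * w ^ 2) ^ 2 + X k * X l * (X i * X j * w ^ 2) ^ 2 ∈ HH (nn (s + 2)) := by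
  have h1 := rel3 (nn_even (s + 1)) (nn_pos _) j k l (X i * w ^ 2)
  have h2 := rel3 (nn_even (s + 1)) (nn_pos _) i k l (X j * w ^ 2)
  have h3 := rel6 (nn_even (s + 1)) (nn_pos _) i j k l w
  convert sub_mem h3 (add_mem h1 h2) using 1
  linear_combination add_self2 (X k * X l * (X i * X j * w ^ 2) ^ 2)

theorem pluck (s : ℕ) (i j k l : Fin 4) (w : P4) :
    X i * X j * (X k * X l * w ^ 2) ^ 2 + X i * X k * (X j * X l * w ^ 2) ^ 2
      + X j * X k * (X i * X l * w ^ 2) ^ 2 ∈ HH (nn (s + 1)) := by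
  have h1 := rel3 (nn_even s) (nn_pos _) i j k (X l * w ^ 2)
  convert h1 using 1
  ring

theorem adj_idem (s : ℕ) (i j k : Fin 4) (w : P4) :
    X i * X j * (X i * X j * (X i * X k * w ^ 2) ^ 2) ^ 2 +
      X i * X k * (X i * X k * (X i * X j * w ^ 2) ^ 2) ^ 2 ∈ HH (nn (s + 3)) := by
  have h1 := rel3 (nn_even (s + 2)) (nn_pos _) i j k (X i * X j * X k * (X i * w ^ 2) ^ 2)
  have h2 : X j * X k * (X j * X k * ((X i * w) ^ 2 ) ^ 2) ^ 2 ∈ HH (nn (s + 3)) :=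
    pref2 (n := nn (s + 2)) _ _ (pref2 (n := nn (s + 1)) _ _ (sq_hit (nn_pos _) _))
  convert sub_mem h1 h2 using 1
  ring

set_option synthInstance.maxHeartbeats 400000 in
set_option synthInstance.maxSize 4000 in
theorem edge_cases (a b : Fin 6) : a = b ∨
    (∃ i j k, (ed a = (i, j) ∨ ed a = (j, i)) ∧ (ed b = (i, k) ∨ ed b = (k, i)) ∧
      i ≠ j ∧ i ≠ k ∧ j ≠ k) ∨
    (∃ i j k l, ed a = (i, j) ∧ ed b = (k, l) ∧
      i ≠ j ∧ i ≠ k ∧ i ≠ l ∧ j ≠ k ∧ j ≠ l ∧ k ≠ l) := by revert a b; decide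

theorem e2_of {a : Fin 6} {i j : Fin 4} (h : ed a = (i, j) ∨ ed a = (j, i)) :
    e2 a = X i * X j := by
  rw [e2]
  rcases h with h | h <;> rw [h]
  exact mul_comm _ _

theorem swap2 (k : Fin 4) (a b : Fin 6) (l : List (Fin 6)) : Eq2 k (a :: b :: l) (b :: a :: l) := by
  refine ⟨rfl, ?_⟩
  simp only [w2, word, List.length_cons]
  rcases edge_cases a b with rfl | ⟨i, j, k, h1, h2, -⟩ | ⟨i, j, k, m, h1, h2, -⟩
  · rw [add_self2]; exact zero_mem _
  · rw [e2_of h1, e2_of h2]; exact adj_swap _ _ _ _ _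
  · rw [e2_of (Or.inl h1), e2_of (Or.inl h2)]; exact opp_swap _ _ _ _ _ _

theorem perm2 (k : Fin 4) {L L' : List (Fin 6)} (h : L.Perm L') : Eq2 k L L' := by
  induction h with
  | nil => exact Eq2.refl _ _
  | cons x _ ih => exact ih.app [x]
  | swap x y l => exact swap2 _ _ _ _
  | trans _ _ h1 h2 => exact h1.trans h2

/-- `T2`: constant prefix tail relation -/
theorem tailrep (s : ℕ) {i j k : Fin 4} (hij : i ≠ j) (hik : i ≠ k) (hjk : j ≠ k) :
    w2 (List.replicate (s + 1) (eix j k)) i + w2 (List.replicate (s + 1) (eix i k)) j +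
      w2 (List.replicate (s + 1) (eix i j)) k ∈ HH (nn (s + 1)) := by
  have : ∀ s : ℕ, ∃ Y : P4, w2 (List.replicate s (eix j k)) i = X i * Y ∧
      w2 (List.replicate s (eix i k)) j = X j * Y ∧ w2 (List.replicate s (eix i j)) k = X k * Y := by
    intro s
    induction s with
    | zero => exact ⟨1, by simp [w2, word]⟩
    | succ s ih =>
      obtain ⟨Y, h1, h2, h3⟩ := ih
      refine ⟨X i * X j * X k * Y ^ 2, ?_⟩
      simp only [w2, List.replicate_succ, word] at *
      rw [h1, h2, h3, e2_eix hij, e2_eix hik, e2_eix hjk]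
      refine ⟨by ring, by ring, by ring⟩
  obtain ⟨Y, h1, h2, h3⟩ := this s
  have h := rel3 (nn_even s) (nn_pos _) i j k Y
  simp only [w2, List.replicate_succ, word] at *
  rw [h1, h2, h3, e2_eix hij, e2_eix hik, e2_eix hjk]
  exact h

theorem tail2 (l : List (Fin 6)) {i j k : Fin 4} (hij : i ≠ j) (hik : i ≠ k) (hjk : j ≠ k) :
    w2 (l ++ [eix j k]) i + w2 (l ++ [eix i k]) j + w2 (l ++ [eix i j]) k
      ∈ HH (nn (l.length + 1)) := by
  have := tailrep 0 hij hik hjk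
  simp only [w2, word_append, ← word_add]
  exact prefL2 l this rfl

theorem idem_adj {a b : Fin 6} {i j m : Fin 4} (h1 : ed a = (i, j) ∨ ed a = (j, i))
    (h2 : ed b = (i, m) ∨ ed b = (m, i)) (k : Fin 4) (l : List (Fin 6)) :
    Eq2 k (a :: a :: b :: l) (a :: b :: b :: l) := by
  refine Eq2.trans (L' := b :: b :: a :: l) ⟨rfl, ?_⟩ ?_
  · simp only [w2, word, List.length_cons]
    rw [e2_of h1, e2_of h2]; exact adj_idem _ _ _ _ _
  · exact ((swap2 k b a l).app [b]).trans (swap2 k b a (b :: l))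

theorem eix_of {a : Fin 6} {i j : Fin 4} (h : ed a = (i, j)) : eix i j = a := by
  revert a i j; decide

theorem ed_eix {i j : Fin 4} (h : i ≠ j) : ed (eix i j) = (i, j) ∨ ed (eix i j) = (j, i) := by
  revert i j; decide

theorem eix_comm (i j : Fin 4) : eix i j = eix j i := by revert i j; decide

theorem opp_idem {i j k l : Fin 4} (hij : i ≠ j) (hik : i ≠ k) (hil : i ≠ l) (hkl : k ≠ l) :
    Eq2 i [eix i j, eix i j, eix k l] [eix i j, eix k l, eix k l] := by
  refine ⟨rfl, ?_⟩
  have h1 := tail2 [eix i j, eix i j] hik hil hkl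
  have h2 := prefL2 [eix i j] (tailrep 1 hik hil hkl) rfl
  have h3 := (idem_adj (ed_eix hij) (ed_eix hil) k []).2
  have h4 := (idem_adj (ed_eix hij) (ed_eix hik) l []).2
  simp only [List.length_cons, List.length_nil, w2, List.replicate, List.cons_append,
    List.nil_append, word] at *
  convert add_mem h1 (add_mem h2 (add_mem h3 h4)) using 1
  simp only [sq_add2]
  linear_combination -(add_self2 (e2 (eix i j) * (e2 (eix i j) * (e2 (eix i l) * X k ^ 2) ^ 2) ^ 2))
   -(add_self2 (e2 (eix i j) * (e2 (eix i j) * (e2 (eix i k) * X l ^ 2) ^ 2) ^ 2))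
   -(add_self2 (e2 (eix i j) * (e2 (eix i k) * (e2 (eix i k) * X l ^ 2) ^ 2) ^ 2))
   -(add_self2 (e2 (eix i j) * (e2 (eix i l) * (e2 (eix i l) * X k ^ 2) ^ 2) ^ 2))

theorem fourth (t i j k l : Fin 4) : i ≠ j ∧ i ≠ k ∧ i ≠ l ∧ j ≠ k ∧ j ≠ l ∧ k ≠ l →
    t = i ∨ t = j ∨ t = k ∨ t = l := by revert t i j k l; decide

theorem idem2 (k : Fin 4) (a b : Fin 6) (l : List (Fin 6)) :
    Eq2 k (a :: a :: b :: l) (a :: b :: b :: l) := by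
  rcases edge_cases a b with rfl | ⟨i, j, m, h1, h2, -⟩ | ⟨i, j, c, d, h1, h2, hd⟩
  · exact Eq2.refl _ _
  · exact idem_adj h1 h2 k l
  · have h : Eq2 k [a, a, b] [a, b, b] := by
      have h1' := eix_of h1
      have h2' := eix_of h2
      obtain ⟨hij, hic, hid, hjc, hjd, hcd⟩ := hd
      have rev : Eq2 k [b, b, a] [b, a, a] → Eq2 k [a, a, b] [a, b, b] := by
        intro h
        refine Eq2.trans (perm2 k ?_) (h.symm.trans (perm2 k ?_))
        · exact List.perm_iff_count.2 (by intro x; simp [List.count_cons]; ring)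
        · exact List.perm_iff_count.2 (by intro x; simp [List.count_cons]; ring)
      rcases fourth k i j c d ⟨hij, hic, hid, hjc, hjd, hcd⟩ with rfl | rfl | rfl | rfl
      · have := opp_idem hij hic hid hcd
        rwa [h1', h2'] at this
      · have := opp_idem hij.symm hjc hjd hcd
        rwa [eix_comm, h1', h2'] at this
      · apply rev
        have := opp_idem hcd hic.symm hjc.symm hij
        rwa [h1', h2'] at this
      · apply rev
        have := opp_idem hcd.symm hid.symm hjd.symm hij
        rwa [eix_comm, h1', h2'] at this
    refine Eq2.trans (perm2 k ?_) ((h.app l).trans (perm2 k ?_))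
    · exact (List.perm_append_comm : ([a, a, b] ++ l).Perm (l ++ [a, a, b]))
    · exact (List.perm_append_comm : (l ++ [a, b, b]).Perm ([a, b, b] ++ l))

theorem supp2 (k : Fin 4) (L L' : List (Fin 6)) (h : L.length = L'.length)
    (hs : ∀ a, a ∈ L ↔ a ∈ L') : Eq2 k L L' :=
  support_lemma (Eq2 k) (Eq2.refl k) (fun _ _ _ => Eq2.trans) (fun a _ _ h => h.app [a])
    (swap2 k) (idem2 k) L L' h hs

theorem pluck2 (t : Fin 4) (L : List (Fin 6)) {i j k l : Fin 4} (hd : i ≠ j ∧ i ≠ k ∧ i ≠ l ∧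
    j ≠ k ∧ j ≠ l ∧ k ≠ l) : w2 (eix i j :: eix k l :: L) t + w2 (eix i k :: eix j l :: L) t +
    w2 (eix j k :: eix i l :: L) t ∈ HH (nn (L.length + 2)) := by
  obtain ⟨hij, hik, hil, hjk, hjl, hkl⟩ := hd
  simp only [w2, word]
  rw [e2_eix hij, e2_eix hik, e2_eix hil, e2_eix hjk, e2_eix hjl, e2_eix hkl]
  exact pluck _ _ _ _ _ _

theorem relX {a b c l : Fin 4} (hd : a ≠ b ∧ a ≠ c ∧ a ≠ l ∧ b ≠ c ∧ b ≠ l ∧ c ≠ l) :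
    w2 [eix b c, eix b c, eix b l] a + w2 [eix a c, eix a c, eix a l] b +
    (w2 [eix a b, eix b c, eix b l] a + w2 [eix a b, eix a c, eix a l] b) ∈ HH (nn 3) := by
  obtain ⟨hab, hac, hal, hbc, hbl, hcl⟩ := hd
  simp only [w2, word]
  rw [e2_eix hab, e2_eix hac, e2_eix hal, e2_eix hbc, e2_eix hbl]
  have h1 := rel3 (nn_even 2) (nn_pos _) a b c (X a * X b * X c * (X a * X b * X l) ^ 2)
  have h2 := rel3 (nn_even 1) (nn_pos _) a b c (X a * X b * X l)
  have h3 := pref2 (n := nn 2) a b h2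
  convert sub_mem h1 h3 using 1
  simp only [sq_add2]
  linear_combination add_self2 (X a * X b * (X b * X c * (X b * X l * X a ^ 2) ^ 2) ^ 2) +
    add_self2 (X a * X b * (X a * X c * (X a * X l * X b ^ 2) ^ 2) ^ 2)

/-! type 3 -/

def e3 (i : Fin 4) : P4 := xx (Finset.univ.erase i)

theorem e3_of {p q b c : Fin 4} (hd : p ≠ q ∧ p ≠ b ∧ p ≠ c ∧ q ≠ b ∧ q ≠ c ∧ b ≠ c) :
    e3 p = X q * X b * X c := by
  have h : (Finset.univ.erase p : Finset (Fin 4)) = {q, b, c} := by revert p q b c; decide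
  obtain ⟨h1, h2, h3, h4, h5, h6⟩ := hd
  rw [e3, h, xx, Finset.prod_insert (by simp [h4, h5]), Finset.prod_pair h6, mul_assoc]

theorem pref3' {r : ℕ} (i : Fin 4) {f : P4} (hf : f ∈ HH (dd (r + 1))) :
    e3 i * f ^ 2 ∈ HH (dd (r + 2)) := by
  obtain ⟨j, k, l, -, h⟩ := four_perm i
  rw [e3_of h]; exact pref3 _ _ _ hf

theorem prefL3 {s n : ℕ} (l : List (Fin 4)) {f : P4} (hf : f ∈ HH (dd (s + 1)))
    (h : n = l.length + s) : word e3 l f ∈ HH (dd (n + 1)) := by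
  subst h
  induction l with
  | nil => simpa [word] using hf
  | cons a l ih =>
    rw [word, List.length_cons, show l.length + 1 + s = l.length + s + 1 by omega]
    exact pref3' a ih

/-- words of type 3 -/
def w3 (L : List (Fin 4)) (t : Fin 4 × Fin 4 × Fin 4) : P4 := word e3 L (X t.1 * X t.2.1 * X t.2.2)

def B3 (m : ℕ) : Submodule kk P4 :=
  HH (dd (m + 1)) ⊔ Submodule.span kk {f | ∃ L t, L.length = m ∧ f = w3 L t}

theorem w3_mem (L : List (Fin 4)) (t : Fin 4 × Fin 4 × Fin 4) {s : ℕ} (h : L.length = s) :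
    w3 L t ∈ B3 s :=
  Submodule.mem_sup_right (Submodule.subset_span ⟨L, t, h, rfl⟩)

theorem prefB3 {s : ℕ} (I : Fin 4) {f : P4} (hf : f ∈ B3 s) : e3 I * f ^ 2 ∈ B3 (s + 1) := by
  have : B3 s ≤ (B3 (s + 1)).comap (sqm (e3 I)) := by
    rw [B3, sup_le_iff]
    constructor
    · intro f hf; exact Submodule.mem_sup_left (pref3' I hf)
    · rw [Submodule.span_le]
      rintro f ⟨L, k, h, rfl⟩
      exact w3_mem (I :: L) k (by simp [h])
  exact this hf

theorem card_cases' (A : Finset (Fin 4)) : A.card % 2 = 0 ∨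
    (∃ a, A = {a}) ∨ ∃ a, A = Finset.univ.erase a := by revert A; decide

theorem B3_all (m : ℕ) (f : P4) : f ∈ B3 m := by
  induction m generalizing f with
  | zero =>
    induction f using xx_ind with
    | hadd f g hf hg => exact add_mem hf hg
    | h A q =>
      have hdd : dd (0 + 1) = 3 := rfl
      rcases card_cases' A with h | ⟨a, rfl⟩ | ⟨a, rfl⟩
      · exact Submodule.mem_sup_left (par (xx_homog A) (by rw [h]; decide) q)
      · simp only [xx, Finset.prod_singleton]
        have h1 : X a * (hc 1 q) ^ 2 ∈ B3 0 := by
          have h3 : Submodule.span kk (Set.range (X : Fin 4 → P4)) ≤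
              (B3 0).comap (sqm (X a)) := by
            rw [Submodule.span_le]
            rintro _ ⟨k, rfl⟩
            have := w3_mem (s := 0) [] (a, k, k) rfl
            simp only [w3, word] at this
            simpa only [SetLike.mem_coe, Submodule.mem_comap, sqm_apply, pow_two, mul_assoc] using this
          exact h3 (hc1_mem q)
        have h6 : X a * (q + hc 1 q) ^ 2 ∈ B3 0 := by
          apply Submodule.mem_sup_left; apply HH_zero_hc
          have := hc_pmul (X_homog a) 1 (q + hc 1 q)
          rw [map_add, hc_hc, add_self2] at this
          rw [hdd, this]; simp
        convert sub_mem h6 h1 using 1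
        rw [sq_add2]; ring
      · change e3 a * q ^ 2 ∈ B3 0
        obtain ⟨j, k, l, -, h⟩ := four_perm a
        rw [e3_of h]
        have h1 : X j * X k * X l * (hc 0 q) ^ 2 ∈ B3 0 := by
          have h3 : Submodule.span kk {(1 : P4)} ≤
              (B3 0).comap (sqm (X j * X k * X l)) := by
            rw [Submodule.span_le]
            rintro _ rfl
            have := w3_mem (s := 0) [] (j, k, l) rfl
            simp only [w3, word] at this
            simpa only [SetLike.mem_coe, Submodule.mem_comap, sqm_apply, one_pow, mul_one] using this
          exact h3 (hc0_mem q)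
        have h6 : X j * X k * X l * (q + hc 0 q) ^ 2 ∈ B3 0 := by
          apply Submodule.mem_sup_left; apply HH_zero_hc
          have := hc_pmul (X3_homog j k l) 0 (q + hc 0 q)
          rw [map_add, hc_hc, add_self2] at this
          rw [hdd, this]; simp
        convert sub_mem h6 h1 using 1
        rw [sq_add2]; ring
  | succ m ih =>
    induction f using xx_ind with
    | hadd f g hf hg => exact add_mem hf hg
    | h A q =>
      rcases card_cases' A with h | ⟨a, rfl⟩ | ⟨a, rfl⟩
      · exact Submodule.mem_sup_left (par (xx_homog A) (by rw [h, dd_odd]; decide) q)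
      · simp only [xx, Finset.prod_singleton]
        exact Submodule.mem_sup_left (T0 m a q)
      · exact prefB3 a (ih q)

def Eq3 (k : Fin 4 × Fin 4 × Fin 4) (L L' : List (Fin 4)) : Prop :=
  L.length = L'.length ∧ w3 L k + w3 L' k ∈ HH (dd (L.length + 1))

theorem Eq3.refl (k) (L : List (Fin 4)) : Eq3 k L L :=
  ⟨rfl, by rw [add_self2]; exact zero_mem _⟩
theorem Eq3.trans {k} {L L' L'' : List (Fin 4)} (h : Eq3 k L L') (h' : Eq3 k L' L'') :
    Eq3 k L L'' := by
  refine ⟨h.1.trans h'.1, ?_⟩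
  have h1 := h.2
  have h2 := h'.2
  rw [← h.1] at h2
  convert add_mem h1 h2 using 1
  linear_combination -(add_self2 (w3 L' k))
theorem Eq3.app {k} (l : List (Fin 4)) {L L' : List (Fin 4)} (h : Eq3 k L L') :
    Eq3 k (l ++ L) (l ++ L') := by
  refine ⟨by simp [h.1], ?_⟩
  rw [w3, w3, word_append, word_append, ← word_add]
  exact prefL3 l h.2 (by simp)

theorem rest (p q : Fin 4) (h : p ≠ q) : ∃ b c, (p ≠ q ∧ p ≠ b ∧ p ≠ c ∧ q ≠ b ∧ q ≠ c ∧ b ≠ c) ∧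
    (q ≠ p ∧ q ≠ b ∧ q ≠ c ∧ p ≠ b ∧ p ≠ c ∧ b ≠ c) := by
  revert p q; decide

theorem swap3 (k) (p q : Fin 4) (l : List (Fin 4)) : Eq3 k (p :: q :: l) (q :: p :: l) := by
  refine ⟨rfl, ?_⟩
  by_cases h : p = q
  · subst h; rw [add_self2]; exact zero_mem _
  obtain ⟨b, c, h1, h2⟩ := rest p q h
  simp only [w3, word, List.length_cons]
  rw [e3_of h1, e3_of h2]
  set w := word e3 l (X k.1 * X k.2.1 * X k.2.2)
  have r1 := rel4 (dd_odd (l.length + 2)) p q b c (X b * X c * w ^ 2)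
  have r2 := pref3 p q c (T0 l.length c (X b * w))
  have r3 := pref3 p q b (T0 l.length b (X c * w))
  convert sub_mem r1 (add_mem r2 r3) using 1
  ring

theorem idem3 (k) (p q : Fin 4) (l : List (Fin 4)) :
    Eq3 k (p :: p :: q :: l) (p :: q :: q :: l) := by
  by_cases h : p = q
  · subst h; exact Eq3.refl _ _
  refine Eq3.trans (L' := q :: q :: p :: l) ⟨rfl, ?_⟩ ?_
  · obtain ⟨b, c, h1, h2⟩ := rest p q h
    simp only [w3, word, List.length_cons]
    rw [e3_of h1, e3_of h2]
    set w := word e3 l (X k.1 * X k.2.1 * X k.2.2)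
    have r1 := rel4 (dd_odd (l.length + 3)) p q b c (X p * X q * X b * X c * (X b * X c * w ^ 2) ^ 2)
    have r2 := pref3 p q c (pref3 p q c (T0 l.length c (X b * w)))
    have r3 := pref3 p q b (pref3 p q b (T0 l.length b (X c * w)))
    convert sub_mem r1 (add_mem r2 r3) using 1
    ring
  · exact ((swap3 k q p l).app [q]).trans (swap3 k q p (q :: l))

theorem supp3 (k) (L L' : List (Fin 4)) (h : L.length = L'.length)
    (hs : ∀ a, a ∈ L ↔ a ∈ L') : Eq3 k L L' :=
  support_lemma (Eq3 k) (Eq3.refl k) (fun _ _ _ => Eq3.trans) (fun a _ _ h => h.app [a])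
    (swap3 k) (idem3 k) L L' h hs

theorem tailrep3 (m : ℕ) (k l : Fin 4) : w3 (List.replicate (m + 1) 0) (0, k, l) +
    w3 (List.replicate (m + 1) 1) (1, k, l) + w3 (List.replicate (m + 1) 2) (2, k, l) +
    w3 (List.replicate (m + 1) 3) (3, k, l) ∈ HH (dd (m + 2)) := by
  have e0 : e3 0 = X 1 * X 2 * X 3 := e3_of (by decide)
  have e1 : e3 1 = X 0 * X 2 * X 3 := e3_of (by decide)
  have e2 : e3 2 = X 0 * X 1 * X 3 := e3_of (by decide)
  have e3' : e3 3 = X 0 * X 1 * X 2 := e3_of (by decide)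
  have : ∀ s : ℕ, ∃ Y : P4, w3 (List.replicate s 0) (0, k, l) = X 0 * Y ∧
     w3 (List.replicate s 1) (1, k, l) = X 1 * Y ∧ w3 (List.replicate s 2) (2, k, l) = X 2 * Y ∧
     w3 (List.replicate s 3) (3, k, l) = X 3 * Y := by
    intro s
    induction s with
    | zero => exact ⟨X k * X l, by simp [w3, word, mul_assoc]⟩
    | succ s ih =>
      obtain ⟨Y, h1, h2, h3, h4⟩ := ih
      refine ⟨X 0 * X 1 * X 2 * X 3 * Y ^ 2, ?_⟩
      simp only [w3, List.replicate_succ, word] at *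
      rw [h1, h2, h3, h4, e0, e1, e2, e3']
      refine ⟨by ring, by ring, by ring, by ring⟩
  obtain ⟨Y, h1, h2, h3, h4⟩ := this m
  have h := rel4 (dd_odd (m + 1)) 0 1 2 3 Y
  simp only [w3, List.replicate_succ, word] at *
  rw [h1, h2, h3, h4, e0, e1, e2, e3']
  exact h

theorem tail3 (L : List (Fin 4)) (k l : Fin 4) : w3 (L ++ [0]) (0, k, l) +
    w3 (L ++ [1]) (1, k, l) + w3 (L ++ [2]) (2, k, l) + w3 (L ++ [3]) (3, k, l)
      ∈ HH (dd (L.length + 2)) := by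
  have := tailrep3 0 k l
  simp only [w3, word_append, ← word_add]
  exact prefL3 L this rfl

abbrev Mat := Matrix (Fin 4) (Fin 4) kk
abbrev Vec := Fin 4 → kk

@[simp] theorem substM_X (M : Mat) (i : Fin 4) : substM M (X i) = ∑ j, M i j • X j := by
  simp [substM]

theorem substM_sq (M : Mat) (f : P4) : substM M (sqTotal f) = sqTotal (substM M f) := by
  have : (substM M).comp sqTotal = sqTotal.comp (substM M) := by
    apply MvPolynomial.algHom_ext
    intro i
    simp only [AlgHom.comp_apply, sq_X, map_add, map_pow, substM_X, map_sum, map_smul]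
    simp only [Fin.sum_univ_four, sq_add2, smul_add]
    have : ∀ (c : kk) (f : P4), (c • f) ^ 2 = c • f ^ 2 := by
      intro c f; rcases kk_cases c with rfl | rfl <;> simp
    simp only [this]; ring
  exact DFunLike.congr_fun this f

theorem substM_comp (M N : Mat) (f : P4) : substM N (substM M f) = substM (M * N) f := by
  have : (substM N).comp (substM M) = substM (M * N) := by
    apply MvPolynomial.algHom_ext
    intro i
    simp only [AlgHom.comp_apply, substM_X, map_sum, map_smul, Matrix.mul_apply]
    simp only [Fin.sum_univ_four, smul_add, add_smul, smul_smul]; abel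
  exact DFunLike.congr_fun this f

theorem substM_one (f : P4) : substM 1 f = f := by
  have : substM 1 = AlgHom.id kk P4 := by
    apply MvPolynomial.algHom_ext
    intro i
    simp [Matrix.one_apply, Finset.sum_ite_eq]
  rw [this]; rfl

theorem substM_homog (M : Mat) {n : ℕ} {f : P4} (hf : f ∈ homog n) : substM M f ∈ homog n := by
  have h := IsHomogeneous.aeval (R := kk) (S := kk) hf (fun i => ∑ j, M i j • (X j : P4)) (n := 1) ?_
  · rw [one_mul] at h; exact h
  · intro i
    refine IsHomogeneous.sum _ _ _ fun j _ => ?_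
    exact (homog 1).smul_mem _ (X_homog j)

theorem substM_hc (M : Mat) (n : ℕ) (f : P4) : hc n (substM M f) = substM M (hc n f) := by
  induction f using hom_ind with
  | h d f hf =>
    by_cases h : n = d
    · subst h; rw [hc_of_homog hf, hc_of_homog (substM_homog M hf)]
    · rw [hc_of_homog_ne hf h, hc_of_homog_ne (substM_homog M hf) h, map_zero]
  | hadd f g hf hg => simp only [map_add, hf, hg]

theorem substM_HH (M : Mat) {n : ℕ} {f : P4} (hf : f ∈ HH n) : substM M f ∈ HH n := by
  have h1 : hitSub n ≤ (hitSub n).comap (substM M).toLinearMap := by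
    apply HH_sub_of
    intro d hd g hg
    rw [Submodule.mem_comap, AlgHom.toLinearMap_apply, ← substM_hc, substM_sq]
    exact Submodule.subset_span ⟨d, hd, _, substM_homog M hg, rfl⟩
  rw [mem_HH, substM_hc]
  exact h1 hf

/-- functionals stable under Steenrod squares, concentrated in degree `n` -/
structure Stab (n : ℕ) (φ : P4 →ₗ[kk] kk) : Prop where
  sq : ∀ f, φ (sqTotal f) = φ f
  hc : ∀ f, φ (hc n f) = φ f

theorem Stab.HH {n : ℕ} {φ : P4 →ₗ[kk] kk} (h : Stab n φ) {f : P4} (hf : f ∈ HH n) : φ f = 0 := by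
  have h1 : hitSub n ≤ LinearMap.ker φ := by
    apply HH_sub_of
    intro d hd g hg
    rw [LinearMap.mem_ker, h.hc, h.sq, ← h.hc, hc_of_homog_ne hg (by omega), map_zero]
  rw [← h.hc]; exact h1 hf

theorem Stab.subst {n : ℕ} {φ : P4 →ₗ[kk] kk} (h : Stab n φ) (M : Mat) :
    Stab n (φ ∘ₗ (substM M).toLinearMap) where
  sq f := by simp [substM_sq, h.sq]
  hc f := by
    simp only [LinearMap.comp_apply, AlgHom.toLinearMap_apply, ← substM_hc]; exact h.hc _

theorem Stab.add {n : ℕ} {φ ψ : P4 →ₗ[kk] kk} (h : Stab n φ) (h' : Stab n ψ) : Stab n (φ + ψ) where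
  sq f := by simp [h.sq, h'.sq]
  hc f := by
    simp only [LinearMap.add_apply]; rw [h.hc, h'.hc]

def Kills (j : Fin 4) (φ : P4 →ₗ[kk] kk) : Prop := ∀ y, φ (X j * y) = 0

theorem kills_xx {φ : P4 →ₗ[kk] kk} {j : Fin 4} (h : Kills j φ) {A : Finset (Fin 4)} (hj : j ∈ A)
    (y : P4) : φ (xx A * y) = 0 := by
  rw [xx, ← Finset.mul_prod_erase A _ hj, mul_assoc]; exact h _

theorem Kills.bet {φ : P4 →ₗ[kk] kk} {j : Fin 4} (h : Kills j φ) (K : Finset (Fin 4)) (hj : j ∉ K) :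
    Kills j (φ ∘ₗ bet K) := by
  intro y
  induction y using xx_ind with
  | hadd f g hf hg => rw [mul_add, map_add, hf, hg, add_zero]
  | h A q =>
    rw [LinearMap.comp_apply]
    by_cases hA : j ∈ A
    · have : X j * (xx A * q ^ 2) = xx (A.erase j) * (X j * q) ^ 2 := by
        rw [xx, xx, ← Finset.mul_prod_erase A _ hA]; ring
      rw [this, bet_xx]
      split_ifs
      · exact h q
      · simp
    · have : X j * (xx A * q ^ 2) = xx (insert j A) * q ^ 2 := by
        rw [xx, xx, Finset.prod_insert hA]; ring
      rw [this, bet_xx, if_neg, map_zero]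
      rintro rfl; exact hj (Finset.mem_insert_self _ _)

theorem Stab.bet {n : ℕ} {φ : P4 →ₗ[kk] kk} (h : Stab n φ) (K : Finset (Fin 4))
    (hk : ∀ j, j ∉ K → Kills j φ) {n' : ℕ} (hn : n' = K.card + 2 * n) : Stab n' (φ ∘ₗ bet K) where
  hc f := by
    subst hn
    rw [LinearMap.comp_apply, bet_hc, h.hc, LinearMap.comp_apply]
  sq f := by
    induction f using xx_ind with
    | hadd f g hf hg => rw [map_add, map_add, hf, hg, map_add]
    | h I q =>
      rw [LinearMap.comp_apply, bet_sq, LinearMap.comp_apply, bet_xx, map_sum,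
        Finset.sum_eq_single ∅]
      · rw [Finset.sdiff_empty]
        split_ifs
        · simp [xx, h.sq]
        · simp
      · intro A hA hne
        split_ifs with h1
        · obtain ⟨j, hj⟩ := Finset.nonempty_iff_ne_empty.2 hne
          refine kills_xx (hk j ?_) hj _
          rw [← h1]; simp [hj]
        · simp
      · simp

def c0 : P4 →ₗ[kk] kk := (aeval (fun _ => (0 : kk)) : P4 →ₐ[kk] kk).toLinearMap

theorem c0_kills (j : Fin 4) : Kills j c0 := by intro y; simp [c0]

theorem c0_stab : Stab 0 c0 where
  sq f := by
    have : (aeval (fun _ => (0 : kk)) : P4 →ₐ[kk] kk).comp sqTotal = aeval (fun _ => (0 : kk)) := by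
      apply MvPolynomial.algHom_ext
      intro i; simp
    exact DFunLike.congr_fun this f
  hc f := by
    induction f using mono_ind with
    | hadd f g hf hg => rw [map_add, map_add, map_add, hf, hg]
    | h0 => simp
    | h a =>
      by_cases h : a = 0
      · subst h
        rw [hc_of_homog]
        exact isHomogeneous_one _ _
      · have h1 : (monomial a (1:kk)) ∈ homog a.degree := isHomogeneous_monomial _ rfl
        have h2 : a.degree ≠ 0 := by rwa [Ne, Finsupp.degree_eq_zero_iff]
        rw [hc_of_homog_ne h1 h2.symm, map_zero]
        obtain ⟨j, hj⟩ := Finsupp.ne_iff.1 h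
        simp only [c0, AlgHom.toLinearMap_apply, aeval_monomial, map_one, one_mul]
        rw [Finsupp.prod, Finset.prod_eq_zero (i := j)]
        · simpa using hj
        · rw [zero_pow]; simpa using hj

@[simp] theorem c0_one : c0 1 = 1 := by simp [c0]

def c2 : ℕ → (P4 →ₗ[kk] kk)
  | 0 => c0 ∘ₗ bet {0}
  | s + 1 => c2 s ∘ₗ bet {0, 1}

def c3 : ℕ → (P4 →ₗ[kk] kk)
  | 0 => (c0 ∘ₗ bet {0}) ∘ₗ bet {0}
  | s + 1 => c3 s ∘ₗ bet {0, 1, 2}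

theorem c2_kills (s : ℕ) (j : Fin 4) (hj : j ∉ ({0, 1} : Finset (Fin 4))) : Kills j (c2 s) := by
  induction s with
  | zero => exact (c0_kills j).bet _ (by intro h; simp at h; subst h; simp at hj)
  | succ s ih => exact ih.bet _ hj

theorem c2_stab (s : ℕ) : Stab (nn s) (c2 s) := by
  induction s with
  | zero => exact c0_stab.bet _ (fun j _ => c0_kills j) rfl
  | succ s ih => exact ih.bet _ (c2_kills s) rfl

theorem c3_kills (s : ℕ) (j : Fin 4) (hj : j ∉ ({0, 1, 2} : Finset (Fin 4))) : Kills j (c3 s) := by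
  induction s with
  | zero =>
    have : j ∉ ({0} : Finset (Fin 4)) := by intro h; simp at h; subst h; simp at hj
    exact ((c0_kills j).bet _ this).bet _ this
  | succ s ih => exact ih.bet _ hj

theorem c3_stab (s : ℕ) : Stab (dd (s + 1)) (c3 s) := by
  induction s with
  | zero =>
    exact (c0_stab.bet _ (fun j _ => c0_kills j) (n' := 1) rfl).bet _
      (fun j hj => (c0_kills j).bet _ hj) rfl
  | succ s ih => exact ih.bet _ (c3_kills s) rfl

def N2 (v w : Vec) : Mat := Matrix.of fun i => ![v i, w i, 0, 0]
def N3 (v w u : Vec) : Mat := Matrix.of fun i => ![v i, w i, u i, 0]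

def F2 (s : ℕ) (v w : Vec) : P4 →ₗ[kk] kk := c2 s ∘ₗ (substM (N2 v w)).toLinearMap
def F3 (m : ℕ) (v w u : Vec) : P4 →ₗ[kk] kk := c3 m ∘ₗ (substM (N3 v w u)).toLinearMap

theorem F2_stab (s : ℕ) (v w : Vec) : Stab (nn s) (F2 s v w) := (c2_stab s).subst _
theorem F3_stab (s : ℕ) (v w u : Vec) : Stab (dd (s + 1)) (F3 s v w u) := (c3_stab s).subst _

theorem F2_subst (s : ℕ) (v w : Vec) (M : Mat) (f : P4) :
    F2 s v w (substM M f) = F2 s (M.mulVec v) (M.mulVec w) f := by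
  simp only [F2, LinearMap.comp_apply, AlgHom.toLinearMap_apply, substM_comp]
  have : M * N2 v w = N2 (M.mulVec v) (M.mulVec w) := by
    ext i j
    fin_cases j <;> simp [N2, Matrix.mul_apply, Matrix.mulVec, dotProduct]
  rw [this]

theorem F3_subst (s : ℕ) (v w u : Vec) (M : Mat) (f : P4) :
    F3 s v w u (substM M f) = F3 s (M.mulVec v) (M.mulVec w) (M.mulVec u) f := by
  simp only [F3, LinearMap.comp_apply, AlgHom.toLinearMap_apply, substM_comp]
  have : M * N3 v w u = N3 (M.mulVec v) (M.mulVec w) (M.mulVec u) := by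
    ext i j
    fin_cases j <;> simp [N3, Matrix.mul_apply, Matrix.mulVec, dotProduct]
  rw [this]

def pl (v w : Vec) (I : Fin 6) : kk := v (ed I).1 * w (ed I).2 + v (ed I).2 * w (ed I).1

theorem substN2 (v w : Vec) (i : Fin 4) : substM (N2 v w) (X i) = v i • X 0 + w i • X 1 := by
  simp [N2, Fin.sum_univ_four]
theorem substN3 (v w u : Vec) (i : Fin 4) :
    substM (N3 v w u) (X i) = v i • X 0 + w i • X 1 + u i • X 2 := by
  simp [N3, Fin.sum_univ_four]

theorem x01 : xx {0, 1} = X 0 * X 1 := xx_pair (by decide)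
theorem x012 : xx {0, 1, 2} = X 0 * X 1 * X 2 := by
  rw [xx, Finset.prod_insert (by decide), Finset.prod_pair (by decide), mul_assoc]
theorem xs (i : Fin 4) : xx {i} = X i := by simp [xx]
theorem xe : xx ∅ = 1 := by simp [xx]

theorem F2_edge (s : ℕ) (v w : Vec) (I : Fin 6) (q : P4) :
    F2 (s + 1) v w (e2 I * q ^ 2) = pl v w I * F2 s v w q := by
  simp only [F2, LinearMap.comp_apply, AlgHom.toLinearMap_apply, c2, map_mul, map_pow, e2, substN2]
  generalize substM (N2 v w) q = Q
  have : (v (ed I).1 • X 0 + w (ed I).1 • X 1) * (v (ed I).2 • X 0 + w (ed I).2 • X 1) * Q ^ 2 =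
    pl v w I • (xx {0, 1} * Q ^ 2) + (v (ed I).1 * v (ed I).2) • (xx ∅ * (X 0 * Q) ^ 2)
      + (w (ed I).1 * w (ed I).2) • (xx ∅ * (X 1 * Q) ^ 2) := by
    rw [x01, xe, pl]
    simp only [smul_eq_C_mul, C_mul, C_add]; ring
  rw [this]
  simp only [map_add, map_smul, bet_xx]
  have z : (∅ : Finset (Fin 4)) ≠ {0, 1} := by decide
  simp only [if_neg z]
  simp

theorem F2_tail (v w : Vec) (k : Fin 4) : F2 0 v w (X k) = v k := by
  simp only [F2, LinearMap.comp_apply, AlgHom.toLinearMap_apply, c2, substN2]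
  have : v k • X 0 + w k • X 1 = v k • (xx {0} * 1 ^ 2) + w k • (xx {1} * 1 ^ 2) := by
    rw [xs, xs]; simp
  rw [this]
  simp only [map_add, map_smul, bet_xx]
  have z : ({1} : Finset (Fin 4)) ≠ {0} := by decide
  simp only [if_neg z]
  simp

theorem F2_word (v w : Vec) (L : List (Fin 6)) (k : Fin 4) :
    F2 L.length v w (w2 L k) = (L.map (pl v w)).prod * v k := by
  induction L with
  | nil => simpa [w2, word] using F2_tail v w k
  | cons a L ih =>
    rw [w2, word, List.length_cons, F2_edge, ← w2, ih, List.map_cons, List.prod_cons, mul_assoc]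

def tr : Fin 4 → Fin 4 × Fin 4 × Fin 4 := ![(1, 2, 3), (0, 2, 3), (0, 1, 3), (0, 1, 2)]
def lam (v w u : Vec) (i : Fin 4) : kk :=
  v (tr i).1 * (w (tr i).2.1 * u (tr i).2.2 + w (tr i).2.2 * u (tr i).2.1)
  + v (tr i).2.1 * (w (tr i).1 * u (tr i).2.2 + w (tr i).2.2 * u (tr i).1)
  + v (tr i).2.2 * (w (tr i).1 * u (tr i).2.1 + w (tr i).2.1 * u (tr i).1)

theorem e3_tr (i : Fin 4) : e3 i = X (tr i).1 * X (tr i).2.1 * X (tr i).2.2 :=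
  e3_of (by revert i; decide)

theorem cubic (v w u : Vec) (a b c : Fin 4) (Q : P4) :
    (v a • X 0 + w a • X 1 + u a • X 2) * (v b • X 0 + w b • X 1 + u b • X 2)
      * (v c • X 0 + w c • X 1 + u c • X 2) * Q ^ 2 =
    (v a * (w b * u c + w c * u b) + v b * (w a * u c + w c * u a) + v c * (w a * u b + w b * u a)) •
      (xx {0, 1, 2} * Q ^ 2) + (v a * v b * v c) • (xx {0} * (X 0 * Q) ^ 2)
    + (w a * w b * w c) • (xx {1} * (X 1 * Q) ^ 2) + (u a * u b * u c) • (xx {2} * (X 2 * Q) ^ 2)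
    + (v a * v b * w c + v a * w b * v c + w a * v b * v c) • (xx {1} * (X 0 * Q) ^ 2)
    + (v a * v b * u c + v a * u b * v c + u a * v b * v c) • (xx {2} * (X 0 * Q) ^ 2)
    + (w a * w b * v c + w a * v b * w c + v a * w b * w c) • (xx {0} * (X 1 * Q) ^ 2)
    + (w a * w b * u c + w a * u b * w c + u a * w b * w c) • (xx {2} * (X 1 * Q) ^ 2)
    + (u a * u b * v c + u a * v b * u c + v a * u b * u c) • (xx {0} * (X 2 * Q) ^ 2)
    + (u a * u b * w c + u a * w b * u c + w a * u b * u c) • (xx {1} * (X 2 * Q) ^ 2) := by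
  rw [x012, xs, xs, xs]
  simp only [smul_eq_C_mul, C_mul, C_add]; ring

theorem F3_edge (s : ℕ) (v w u : Vec) (i : Fin 4) (q : P4) :
    F3 (s + 1) v w u (e3 i * q ^ 2) = lam v w u i * F3 s v w u q := by
  simp only [F3, LinearMap.comp_apply, AlgHom.toLinearMap_apply, c3, map_mul, map_pow, e3_tr,
    substN3, cubic]
  generalize substM (N3 v w u) q = Q
  have z : ∀ a : Fin 4, ({a} : Finset (Fin 4)) ≠ {0, 1, 2} := by decide
  simp only [map_add, map_smul, bet_xx, if_neg (z _)]
  simp [lam]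

theorem F3_tail (v w u : Vec) (a b c : Fin 4) : F3 0 v w u (X a * X b * X c) = v a * v b * v c := by
  have h := cubic v w u a b c 1
  simp only [one_pow, mul_one] at h
  simp only [F3, LinearMap.comp_apply, AlgHom.toLinearMap_apply, c3, substN3, map_mul, h]
  have e1 : bet {0} (xx {0, 1, 2}) = 0 := by
    have := bet_xx {0} {0, 1, 2} 1
    rw [if_neg (by decide)] at this
    simpa using this
  have e2 : ∀ i : Fin 4, bet {0} (X i) = if i = 0 then 1 else 0 := by
    intro i
    have := bet_xx {0} {i} 1
    rw [xs] at this
    simpa using this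
  have z : ∀ i : Fin 4, (({i} : Finset (Fin 4)) = {0}) = (i = 0) := by simp
  simp only [map_add, map_smul, bet_xx, e1, z]
  simp [e2]

theorem F3_word (v w u : Vec) (L : List (Fin 4)) (t : Fin 4 × Fin 4 × Fin 4) :
    F3 L.length v w u (w3 L t) = (L.map (lam v w u)).prod * (v t.1 * v t.2.1 * v t.2.2) := by
  induction L with
  | nil => simpa [w3, word] using F3_tail v w u _ _ _
  | cons a L ih =>
    rw [w3, word, List.length_cons, F3_edge, ← w3, ih, List.map_cons, List.prod_cons]; ring

theorem c0_subst (M : Mat) (f : P4) : c0 (substM M f) = c0 f := by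
  have : (aeval (fun _ => (0 : kk)) : P4 →ₐ[kk] kk).comp (substM M) = aeval (fun _ => (0 : kk)) := by
    apply MvPolynomial.algHom_ext
    intro i; simp
  exact DFunLike.congr_fun this f

def sgA : Mat := Matrix.of ![![1, 1, 0, 0], ![0, 1, 0, 0], 0, 0]
def sgB : Mat := Matrix.of ![![1, 0, 0, 0], ![1, 1, 0, 0], 0, 0]
def sgC : Mat := Matrix.of ![![0, 1, 0, 0], ![1, 0, 0, 0], 0, 0]

theorem sgA_X (i : Fin 4) : substM sgA (X i) = (![X 0 + X 1, X 1, 0, 0] : Fin 4 → P4) i := by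
  fin_cases i <;> simp [sgA, Fin.sum_univ_four]
theorem sgB_X (i : Fin 4) : substM sgB (X i) = (![X 0, X 0 + X 1, 0, 0] : Fin 4 → P4) i := by
  fin_cases i <;> simp [sgB, Fin.sum_univ_four]
theorem sgC_X (i : Fin 4) : substM sgC (X i) = (![X 1, X 0, 0, 0] : Fin 4 → P4) i := by
  fin_cases i <;> simp [sgC, Fin.sum_univ_four]

theorem bx (K I : Finset (Fin 4)) (q : P4) (r : P4) (h : r = xx I * q ^ 2) :
    bet K r = if I = K then q else 0 := by rw [h, bet_xx]

theorem A4 (A : Finset (Fin 4)) : (2 ∈ A ∨ 3 ∈ A) ∨ A = ∅ ∨ A = {0} ∨ A = {1} ∨ A = {0, 1} := by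
  revert A; decide

theorem subst_xx0 (M : Mat) (A : Finset (Fin 4)) {j : Fin 4} (hj : j ∈ A)
    (h : substM M (X j) = 0) (y : P4) : substM M (xx A * y) = 0 := by
  rw [xx, ← Finset.mul_prod_erase A _ hj, map_mul, map_mul, h, zero_mul, zero_mul]

theorem sgA_c2 (s : ℕ) (f : P4) : c2 s (substM sgA f) = c2 s f := by
  induction s generalizing f with
  | zero =>
    induction f using xx_ind with
    | hadd f g hf hg => simp only [map_add, hf, hg]
    | h A q =>
      rcases A4 A with (h | h) | rfl | rfl | rfl | rfl
      · rw [subst_xx0 _ _ h (by rw [sgA_X]; rfl), kills_xx (c2_kills 0 2 (by decide)) h, map_zero]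
      · rw [subst_xx0 _ _ h (by rw [sgA_X]; rfl), kills_xx (c2_kills 0 3 (by decide)) h, map_zero]
      · simp only [c2, LinearMap.comp_apply]
        rw [bx {0} ∅ (substM sgA q) _ (by simp [xe]), bet_xx, if_neg (by decide), if_neg (by decide)]
      · simp only [c2, LinearMap.comp_apply]
        have : substM sgA (xx {0} * q ^ 2) = xx {0} * (substM sgA q) ^ 2 + xx {1} * (substM sgA q) ^ 2 := by
          simp only [xs, map_mul, map_pow, sgA_X]; simp; ring
        rw [this, map_add, bet_xx, bet_xx, bet_xx, if_pos rfl, if_pos rfl, if_neg (by decide),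
          add_zero, c0_subst]
      · simp only [c2, LinearMap.comp_apply]
        rw [bx {0} {1} (substM sgA q) _ (by simp [-substM_X, xs, sgA_X]), bet_xx, if_neg (by decide), if_neg (by decide)]
      · simp only [c2, LinearMap.comp_apply]
        have : substM sgA (xx {0, 1} * q ^ 2) = xx {0, 1} * (substM sgA q) ^ 2 + xx ∅ * (X 1 * substM sgA q) ^ 2 := by
          simp only [x01, xe, map_mul, map_pow, sgA_X]; simp; ring
        rw [this, map_add, bet_xx, bet_xx, bet_xx, if_neg (by decide), if_neg (by decide), if_neg (by decide),
          add_zero]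
  | succ s ih =>
    induction f using xx_ind with
    | hadd f g hf hg => simp only [map_add, hf, hg]
    | h A q =>
      rcases A4 A with (h | h) | rfl | rfl | rfl | rfl
      · rw [subst_xx0 _ _ h (by rw [sgA_X]; rfl), kills_xx (c2_kills _ 2 (by decide)) h, map_zero]
      · rw [subst_xx0 _ _ h (by rw [sgA_X]; rfl), kills_xx (c2_kills _ 3 (by decide)) h, map_zero]
      · simp only [c2, LinearMap.comp_apply]
        rw [bx {0, 1} ∅ (substM sgA q) _ (by simp [xe]), bet_xx, if_neg (by decide), if_neg (by decide)]
      · simp only [c2, LinearMap.comp_apply]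
        have : substM sgA (xx {0} * q ^ 2) = xx {0} * (substM sgA q) ^ 2 + xx {1} * (substM sgA q) ^ 2 := by
          simp only [xs, map_mul, map_pow, sgA_X]; simp; ring
        rw [this, map_add, bet_xx, bet_xx, bet_xx, if_neg (by decide), if_neg (by decide), if_neg (by decide),
          add_zero]
      · simp only [c2, LinearMap.comp_apply]
        rw [bx {0, 1} {1} (substM sgA q) _ (by simp [-substM_X, xs, sgA_X]), bet_xx, if_neg (by decide), if_neg (by decide)]
      · simp only [c2, LinearMap.comp_apply]
        have : substM sgA (xx {0, 1} * q ^ 2) = xx {0, 1} * (substM sgA q) ^ 2 + xx ∅ * (X 1 * substM sgA q) ^ 2 := by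
          simp only [x01, xe, map_mul, map_pow, sgA_X]; simp; ring
        rw [this, map_add, bet_xx, bet_xx, bet_xx, if_pos rfl, if_pos rfl, if_neg (by decide),
          add_zero, ih]

theorem sgB_c2 (s : ℕ) (f : P4) : c2 s (substM sgB f) = c2 s f + c2 s (substM sgC f) := by
  induction s generalizing f with
  | zero =>
    induction f using xx_ind with
    | hadd f g hf hg => simp only [map_add, hf, hg]; ring
    | h A q =>
      rcases A4 A with (h | h) | rfl | rfl | rfl | rfl
      · rw [subst_xx0 _ _ h (by rw [sgB_X]; rfl), subst_xx0 _ _ h (by rw [sgC_X]; rfl),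
          kills_xx (c2_kills 0 2 (by decide)) h, map_zero, add_zero]
      · rw [subst_xx0 _ _ h (by rw [sgB_X]; rfl), subst_xx0 _ _ h (by rw [sgC_X]; rfl),
          kills_xx (c2_kills 0 3 (by decide)) h, map_zero, add_zero]
      · simp only [c2, LinearMap.comp_apply]
        rw [bx {0} ∅ (substM sgB q) _ (by simp [xe]), bx {0} ∅ (substM sgC q) (substM sgC _) (by simp [xe]),
          bet_xx, if_neg (by decide), if_neg (by decide), if_neg (by decide), map_zero, add_zero]
      · simp only [c2, LinearMap.comp_apply]
        rw [bx {0} {0} (substM sgB q) _ (by simp [-substM_X, xs, sgB_X]),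
          bx {0} {1} (substM sgC q) (substM sgC _) (by simp [-substM_X, xs, sgC_X]),
          bet_xx, if_pos rfl, if_pos rfl, if_neg (by decide), map_zero, add_zero, c0_subst]
      · simp only [c2, LinearMap.comp_apply]
        have : substM sgB (xx {1} * q ^ 2) = xx {0} * (substM sgB q) ^ 2 + xx {1} * (substM sgB q) ^ 2 := by
          simp only [xs, map_mul, map_pow, sgB_X]; simp; ring
        rw [this, bx {0} {0} (substM sgC q) (substM sgC _) (by simp [-substM_X, xs, sgC_X]), map_add, bet_xx, bet_xx,
          bet_xx, if_pos rfl, if_pos rfl, if_neg (by decide), if_neg (by decide),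
          add_zero, c0_subst, c0_subst, map_zero, zero_add]
      · simp only [c2, LinearMap.comp_apply]
        have : substM sgB (xx {0, 1} * q ^ 2) = xx {0, 1} * (substM sgB q) ^ 2 + xx ∅ * (X 0 * substM sgB q) ^ 2 := by
          simp only [x01, xe, map_mul, map_pow, sgB_X]; simp; ring
        rw [this, bx {0} {0, 1} (substM sgC q) (substM sgC _) (by simp [-substM_X, x01, sgC_X, mul_comm (X 1 : P4) (X 0)]), map_add, bet_xx,
          bet_xx, bet_xx, if_neg (by decide), if_neg (by decide), if_neg (by decide),
          if_neg (by decide), add_zero, map_zero, add_zero]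
  | succ s ih =>
    induction f using xx_ind with
    | hadd f g hf hg => simp only [map_add, hf, hg]; ring
    | h A q =>
      rcases A4 A with (h | h) | rfl | rfl | rfl | rfl
      · rw [subst_xx0 _ _ h (by rw [sgB_X]; rfl), subst_xx0 _ _ h (by rw [sgC_X]; rfl),
          kills_xx (c2_kills _ 2 (by decide)) h, map_zero, add_zero]
      · rw [subst_xx0 _ _ h (by rw [sgB_X]; rfl), subst_xx0 _ _ h (by rw [sgC_X]; rfl),
          kills_xx (c2_kills _ 3 (by decide)) h, map_zero, add_zero]
      · simp only [c2, LinearMap.comp_apply]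
        rw [bx {0, 1} ∅ (substM sgB q) _ (by simp [xe]), bx {0, 1} ∅ (substM sgC q) (substM sgC _) (by simp [xe]),
          bet_xx, if_neg (by decide), if_neg (by decide), if_neg (by decide), map_zero, add_zero]
      · simp only [c2, LinearMap.comp_apply]
        rw [bx {0, 1} {0} (substM sgB q) _ (by simp [-substM_X, xs, sgB_X]),
          bx {0, 1} {1} (substM sgC q) (substM sgC _) (by simp [-substM_X, xs, sgC_X]),
          bet_xx, if_neg (by decide), if_neg (by decide), if_neg (by decide), map_zero, add_zero]
      · simp only [c2, LinearMap.comp_apply]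
        have : substM sgB (xx {1} * q ^ 2) = xx {0} * (substM sgB q) ^ 2 + xx {1} * (substM sgB q) ^ 2 := by
          simp only [xs, map_mul, map_pow, sgB_X]; simp; ring
        rw [this, bx {0, 1} {0} (substM sgC q) (substM sgC _) (by simp [-substM_X, xs, sgC_X]), map_add, bet_xx, bet_xx,
          bet_xx, if_neg (by decide), if_neg (by decide), if_neg (by decide), if_neg (by decide),
          add_zero, map_zero, add_zero]
      · simp only [c2, LinearMap.comp_apply]
        have : substM sgB (xx {0, 1} * q ^ 2) = xx {0, 1} * (substM sgB q) ^ 2 + xx ∅ * (X 0 * substM sgB q) ^ 2 := by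
          simp only [x01, xe, map_mul, map_pow, sgB_X]; simp; ring
        rw [this, bx {0, 1} {0, 1} (substM sgC q) (substM sgC _) (by simp [-substM_X, x01, sgC_X, mul_comm (X 1 : P4) (X 0)]), map_add, bet_xx,
          bet_xx, bet_xx, if_pos rfl, if_pos rfl, if_pos rfl, if_neg (by decide), add_zero, ih]

/-- behaviour of `F2` under change of basis of the plane -/
theorem F2_shear (s : ℕ) (v w : Vec) (f : P4) : F2 s v (v + w) f = F2 s v w f := by
  have : N2 v (v + w) = N2 v w * sgA := by
    ext i j
    fin_cases j <;> simp [N2, sgA, Matrix.mul_apply, Fin.sum_univ_four]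
  simp only [F2, LinearMap.comp_apply, AlgHom.toLinearMap_apply]
  rw [this, ← substM_comp, sgA_c2]

theorem F2_add (s : ℕ) (v w : Vec) (f : P4) : F2 s (v + w) w f = F2 s v w f + F2 s w v f := by
  have h1 : N2 (v + w) w = N2 v w * sgB := by
    ext i j
    fin_cases j <;> simp [N2, sgB, Matrix.mul_apply, Fin.sum_univ_four]
  have h2 : N2 w v = N2 v w * sgC := by
    ext i j
    fin_cases j <;> simp [N2, sgC, Matrix.mul_apply, Fin.sum_univ_four]
  simp only [F2, LinearMap.comp_apply, AlgHom.toLinearMap_apply]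
  rw [h1, h2, ← substM_comp, sgB_c2, substM_comp]

def force {α : Type} (x : ℕ) (f : ℕ → α) : α := Nat.rec (f 0) (fun n _ => f (Nat.succ n)) x
theorem force_eq {α : Type} (x : ℕ) (f : ℕ → α) : force x f = f x := by cases x <;> rfl

def odd' (x : ℕ) : Bool := Nat.beq (x % 2) 1

def mapC {α : Type} (y : ℕ) : List ℕ → List ℕ → (List ℕ → α) → α
  | [], acc, k => k acc
  | x :: xs, acc, k => force (cond (odd' x) ((x ^^^ y) / 2) (x / 2)) fun r => mapC y xs (r :: acc) k
def findC {α : Type} : List ℕ → (ℕ → α) → α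
  | [], k => k 0
  | x :: xs, k => cond (odd' x) (k x) (findC xs k)
def elimC (full : Bool) : ℕ → List ℕ → (List ℕ → Bool) → Bool
  | 0, rows, k => k rows
  | n + 1, rows, k => findC rows fun y =>
      cond (!full || odd' y) (mapC y rows [] fun r => elimC full n r k) false
def redC {α : Type} : List ℕ → ℕ → (ℕ → α) → α
  | [], x, k => k x
  | b :: bs, x, k => redC bs x fun z => force (z ^^^ b) fun y => cond (Nat.ble z y) (k z) (k y)
def insC {α : Type} : List ℕ → List ℕ → (List ℕ → α) → α
  | [], bs, k => k bs
  | r :: rs, bs, k => redC bs r fun y => cond (Nat.beq y 0) (insC rs bs k) (insC rs (y :: bs) k)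
def finC (bs : List ℕ) : List ℕ → Bool
  | [] => true
  | x :: xs => redC bs x fun y => cond (Nat.beq y 0) (finC bs xs) false
def chkC (full : Bool) (n : ℕ) (rows rels : List ℕ) : Bool :=
  elimC full n rows fun rows' => insC rels [] fun bs => finC bs rows'

section
variable (gen : ℕ → P4)

def rho (x : ℕ) : P4 := ∑ i ∈ Finset.range 256, if x.testBit i then gen i else 0

theorem rho_zero : rho gen 0 = 0 := by simp [rho]
theorem rho_xor (x y : ℕ) : rho gen (x ^^^ y) = rho gen x + rho gen y := by
  simp only [rho, ← Finset.sum_add_distrib, Nat.testBit_xor]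
  refine Finset.sum_congr rfl fun i _ => ?_
  cases x.testBit i <;> cases y.testBit i <;> simp [add_self2]
theorem rho_pow (i : ℕ) (hi : i < 256) : rho gen (2 ^ i) = gen i := by
  rw [rho, Finset.sum_eq_single i]
  · simp
  · intro b _ hb; rw [Nat.testBit_two_pow]; simp [hb.symm]
  · simp [hi]

variable {gen}

theorem redC_eq {W : Submodule kk P4} {bs : List ℕ} (hb : ∀ b ∈ bs, rho gen b ∈ W) (x : ℕ) :
    ∃ y, rho gen x + rho gen y ∈ W ∧ ∀ {α : Type} (k : ℕ → α), redC bs x k = k y := by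
  induction bs with
  | nil => exact ⟨x, by rw [add_self2]; exact W.zero_mem, fun k => rfl⟩
  | cons b bs ih =>
    obtain ⟨z, h1, h2⟩ := ih fun b' h => hb b' (List.mem_cons_of_mem _ h)
    have hb' := hb b List.mem_cons_self
    by_cases hc : Nat.ble z (z ^^^ b) = true
    · refine ⟨z, h1, fun k => ?_⟩
      rw [redC, h2, force_eq, hc]; rfl
    · refine ⟨z ^^^ b, ?_, fun k => ?_⟩
      · rw [rho_xor, ← add_assoc]; exact W.add_mem h1 hb'
      · rw [redC, h2, force_eq]; simp only [Bool.not_eq_true] at hc; rw [hc]; rfl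

theorem finC_ok {W : Submodule kk P4} {bs : List ℕ} (hb : ∀ b ∈ bs, rho gen b ∈ W) {rows : List ℕ}
    (h : finC bs rows = true) : ∀ x ∈ rows, rho gen x ∈ W := by
  induction rows with
  | nil => simp
  | cons x xs ih =>
    obtain ⟨y, h1, h2⟩ := redC_eq hb x
    rw [finC, h2] at h
    cases hy : Nat.beq y 0 with
    | false => rw [hy] at h; simp at h
    | true =>
      rw [hy] at h
      have : y = 0 := Nat.eq_of_beq_eq_true hy
      subst this
      rw [rho_zero, add_zero] at h1
      intro x' hx'
      rcases List.mem_cons.1 hx' with rfl | hx'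
      · exact h1
      · exact ih h x' hx'

theorem insC_ok {W : Submodule kk P4} {rs bs : List ℕ} (hr : ∀ b ∈ rs, rho gen b ∈ W)
    (hb : ∀ b ∈ bs, rho gen b ∈ W) : ∃ bs', (∀ b ∈ bs', rho gen b ∈ W) ∧
      ∀ {α : Type} (k : List ℕ → α), insC rs bs k = k bs' := by
  induction rs generalizing bs with
  | nil => exact ⟨bs, hb, fun k => rfl⟩
  | cons r rs ih =>
    obtain ⟨y, h1, h2⟩ := redC_eq hb r
    have hr' := fun b h => hr b (List.mem_cons_of_mem _ h)
    cases hy : Nat.beq y 0 with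
    | true =>
      obtain ⟨bs', h3, h4⟩ := ih hr' hb
      exact ⟨bs', h3, fun k => by rw [insC, h2, hy]; exact h4 k⟩
    | false =>
      have : ∀ b ∈ y :: bs, rho gen b ∈ W := by
        intro b hb'
        rcases List.mem_cons.1 hb' with rfl | hb'
        · have h3 := hr r List.mem_cons_self
          have := W.add_mem h3 h1
          rwa [← add_assoc, add_self2, zero_add] at this
        · exact hb b hb'
      obtain ⟨bs', h3, h4⟩ := ih hr' this
      exact ⟨bs', h3, fun k => by rw [insC, h2, hy]; exact h4 k⟩

theorem mapC_eq (y : ℕ) (xs acc : List ℕ) : ∃ zs : List ℕ,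
    (∀ z, z ∈ zs ↔ z ∈ acc ∨ ∃ x ∈ xs, z = cond (odd' x) ((x ^^^ y) / 2) (x / 2)) ∧
    ∀ {α : Type} (k : List ℕ → α), mapC y xs acc k = k zs := by
  induction xs generalizing acc with
  | nil => exact ⟨acc, by simp, fun k => rfl⟩
  | cons x xs ih =>
    obtain ⟨zs, h1, h2⟩ := ih (cond (odd' x) ((x ^^^ y) / 2) (x / 2) :: acc)
    refine ⟨zs, ?_, fun k => by rw [mapC, force_eq, h2]⟩
    intro z; rw [h1]
    simp only [List.mem_cons, exists_eq_or_imp]; tauto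

theorem findC_eq (xs : List ℕ) : ∃ y, ((y = 0 ∧ ∀ x ∈ xs, odd' x = false) ∨ (y ∈ xs ∧ odd' y = true)) ∧
    ∀ {α : Type} (k : ℕ → α), findC xs k = k y := by
  induction xs with
  | nil => exact ⟨0, by simp, fun k => rfl⟩
  | cons x xs ih =>
    cases hx : odd' x with
    | true => exact ⟨x, Or.inr ⟨List.mem_cons_self, hx⟩, fun k => by rw [findC, hx]; rfl⟩
    | false =>
      obtain ⟨y, h1, h2⟩ := ih
      refine ⟨y, ?_, fun k => by rw [findC, hx]; exact h2 k⟩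
      rcases h1 with ⟨h, h'⟩ | ⟨h, h'⟩
      · left; refine ⟨h, ?_⟩
        intro x' hx'
        rcases List.mem_cons.1 hx' with rfl | hx'
        · exact hx
        · exact h' _ hx'
      · exact Or.inr ⟨List.mem_cons_of_mem _ h, h'⟩

variable {ι : Type} {F : ι → P4 →ₗ[kk] kk}

variable (gen) in
def DD : List ι → ℕ → P4
  | [], z => rho gen z
  | _ :: ps, z => DD ps (z / 2)
def bk (b : Bool) : kk := cond b 1 0
variable (gen F) in
def RInv : List ι → ℕ → Prop
  | [], _ => True
  | p :: ps, z => F p (DD gen (p :: ps) z) = bk (odd' z) ∧ RInv ps (z / 2)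

theorem xor_half (x y : ℕ) : (x ^^^ y) / 2 = x / 2 ^^^ y / 2 := by
  apply Nat.eq_of_testBit_eq; intro i
  simp [Nat.testBit_div_two, Nat.testBit_xor]

theorem odd_testBit (x : ℕ) : odd' x = x.testBit 0 := by
  rw [odd', Nat.testBit_zero]
  rcases Nat.mod_two_eq_zero_or_one x with h | h <;> rw [h] <;> rfl

theorem odd_xor (x y : ℕ) : odd' (x ^^^ y) = Bool.xor (odd' x) (odd' y) := by
  simp only [odd_testBit, Nat.testBit_xor]

theorem DD_xor (ps : List ι) (x y : ℕ) : DD gen ps (x ^^^ y) = DD gen ps x + DD gen ps y := by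
  induction ps generalizing x y with
  | nil => exact rho_xor gen x y
  | cons p ps ih => rw [DD, DD, DD, xor_half, ih]

theorem bk_xor (a b : Bool) : bk (Bool.xor a b) = bk a + bk b := by
  cases a <;> cases b <;> simp [bk]; decide

theorem Inv_xor {ps : List ι} {x y : ℕ} (hx : RInv gen F ps x) (hy : RInv gen F ps y) :
    RInv gen F ps (x ^^^ y) := by
  induction ps generalizing x y with
  | nil => trivial
  | cons p ps ih =>
    refine ⟨?_, ?_⟩
    · rw [DD_xor, map_add, hx.1, hy.1, odd_xor, bk_xor]
    · rw [xor_half]; exact ih hx.2 hy.2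

variable (gen) in
def SP (ps : List ι) (rows : List ℕ) : Submodule kk P4 :=
  Submodule.span kk {q | ∃ z ∈ rows, q = DD gen ps z}

theorem SP_mem {ps : List ι} {rows : List ℕ} {z : ℕ} (h : z ∈ rows) : DD gen ps z ∈ SP gen ps rows :=
  Submodule.subset_span ⟨z, h, rfl⟩

/-- everything about one elimination step -/
theorem step_ok {p : ι} {ps : List ι} {rows : List ℕ} (hI : ∀ z ∈ rows, RInv gen F (p :: ps) z)
    {y : ℕ} (hy : (y = 0 ∧ ∀ x ∈ rows, odd' x = false) ∨ (y ∈ rows ∧ odd' y = true)) {zs : List ℕ}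
    (hz : ∀ z, z ∈ zs ↔ z ∈ ([] : List ℕ) ∨ ∃ x ∈ rows, z = cond (odd' x) ((x ^^^ y) / 2) (x / 2)) :
    (∀ z ∈ zs, RInv gen F ps z) ∧ (∀ q ∈ SP gen ps zs, F p q = 0) ∧
    (SP gen ps zs ≤ SP gen (p :: ps) rows) ∧
    (∀ q ∈ SP gen (p :: ps) rows, q + F p q • DD gen (p :: ps) y ∈ SP gen ps zs) := by
  have key : ∀ x ∈ rows, odd' x = true → odd' y = true ∧ y ∈ rows := by
    intro x hx ho
    rcases hy with ⟨_, h⟩ | ⟨h, h'⟩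
    · rw [h x hx] at ho; simp at ho
    · exact ⟨h', h⟩
  have hz' : ∀ z ∈ zs, RInv gen F ps z ∧ F p (DD gen ps z) = 0 ∧ DD gen ps z ∈ SP gen (p :: ps) rows := by
    intro z hzz
    rcases (hz z).1 hzz with h | ⟨x, hx, rfl⟩
    · simp at h
    · cases ho : odd' x with
      | true =>
        obtain ⟨h1, h2⟩ := key x hx ho
        have hh := Inv_xor (hI x hx) (hI y h2)
        refine ⟨hh.2, ?_, ?_⟩
        · have := hh.1
          rw [odd_xor, ho, h1] at this
          exact this
        · have := (SP gen (p :: ps) rows).add_mem (SP_mem (ps := p :: ps) hx) (SP_mem (ps := p :: ps) h2)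
          rw [← DD_xor] at this
          exact this
      | false =>
        refine ⟨(hI x hx).2, ?_, SP_mem (ps := p :: ps) hx⟩
        have := (hI x hx).1
        rw [ho] at this
        exact this
  refine ⟨fun z h => (hz' z h).1, ?_, ?_, ?_⟩
  · intro q hq
    have : SP gen ps zs ≤ LinearMap.ker (F p) := by
      refine Submodule.span_le.2 ?_
      rintro _ ⟨z, h, rfl⟩
      exact (hz' z h).2.1
    exact this hq
  · refine Submodule.span_le.2 ?_
    rintro _ ⟨z, h, rfl⟩
    exact (hz' z h).2.2
  · intro q hq
    have : SP gen (p :: ps) rows ≤ (SP gen ps zs).comap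
        (LinearMap.id + (F p).smulRight (DD gen (p :: ps) y)) := by
      refine Submodule.span_le.2 ?_
      rintro _ ⟨x, hx, rfl⟩
      simp only [SetLike.mem_coe, Submodule.mem_comap, LinearMap.add_apply, LinearMap.id_apply,
        LinearMap.smulRight_apply, (hI x hx).1]
      cases ho : odd' x with
      | true =>
        simp only [bk, cond_true, one_smul]
        rw [← DD_xor, DD]
        exact SP_mem ((hz _).2 (Or.inr ⟨x, hx, by rw [ho]; rfl⟩))
      | false =>
        simp only [bk, cond_false, zero_smul, add_zero]
        rw [DD]
        exact SP_mem ((hz _).2 (Or.inr ⟨x, hx, by rw [ho]; rfl⟩))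
    exact this hq

theorem elim_ok {full : Bool} {k : List ℕ → Bool} {W : Submodule kk P4}
    (hk : ∀ rows, k rows = true → ∀ x ∈ rows, rho gen x ∈ W)
    (ps : List ι) (rows : List ℕ) (hI : ∀ z ∈ rows, RInv gen F ps z)
    (h : elimC full ps.length rows k = true) :
    (∀ q ∈ SP gen ps rows, (∀ p ∈ ps, F p q = 0) → q ∈ W) ∧
    (full = true → ∀ τ : ι → kk, ∃ b ∈ SP gen ps rows, ∀ p ∈ ps, F p b = τ p) := by
  induction ps generalizing rows with
  | nil =>
    refine ⟨?_, ?_⟩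
    · intro q hq _
      have : SP gen ([] : List ι) rows ≤ W := by
        refine Submodule.span_le.2 ?_
        rintro _ ⟨x, hx, rfl⟩
        exact hk rows h x hx
      exact this hq
    · intro _ τ; exact ⟨0, Submodule.zero_mem _, by simp⟩
  | cons p ps ih =>
    obtain ⟨y, h1, h2⟩ := findC_eq rows
    obtain ⟨zs, h3, h4⟩ := mapC_eq y rows []
    rw [List.length_cons, elimC, h2, h4] at h
    cases hc : (!full || odd' y) with
    | false => rw [hc] at h; simp at h
    | true =>
      rw [hc] at h
      obtain ⟨s1, s2, s3, s4⟩ := step_ok hI h1 h3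
      obtain ⟨i1, i2⟩ := ih zs s1 h
      refine ⟨?_, ?_⟩
      · intro q hq hF
        have := s4 q hq
        rw [hF p List.mem_cons_self, zero_smul, add_zero] at this
        exact i1 q this fun p' hp' => hF p' (List.mem_cons_of_mem _ hp')
      · intro hf τ
        subst hf
        have hy : odd' y = true := by simpa using hc
        have hyr : y ∈ rows := by
          rcases h1 with ⟨h, _⟩ | ⟨h, _⟩
          · subst h; simp [odd'] at hy
          · exact h
        obtain ⟨b, hb, hb'⟩ := i2 rfl fun p' => τ p' + τ p * F p' (DD gen (p :: ps) y)
        refine ⟨b + τ p • DD gen (p :: ps) y, Submodule.add_mem _ (s3 hb)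
          (Submodule.smul_mem _ _ (SP_mem hyr)), ?_⟩
        intro p' hp'
        rw [map_add, map_smul, smul_eq_mul]
        rcases List.mem_cons.1 hp' with rfl | hp'
        · rw [s2 b hb, (hI y hyr).1, hy, zero_add]; simp [bk]
        · rw [hb' p' hp', add_assoc]
          have : ∀ a : kk, a + a = 0 := by decide
          rw [this, add_zero]

def enc {κ : Type} (val : κ → ℕ → ℕ) (i : ℕ) : List κ → ℕ
  | [] => 2 ^ i
  | p :: ps => val p i + 2 * enc val i ps

theorem enc_DD (val : ι → ℕ → ℕ) (hv : ∀ p i, val p i < 2) {i : ℕ} (hi : i < 256) (ps : List ι) :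
    DD gen ps (enc val i ps) = gen i := by
  induction ps with
  | nil => exact rho_pow gen i hi
  | cons p ps ih =>
    have : (val p i + 2 * enc val i ps) / 2 = enc val i ps := by have := hv p i; omega
    rw [DD, enc, this, ih]

theorem enc_Inv (val : ι → ℕ → ℕ) (hv : ∀ p i, val p i < 2) {i : ℕ} (hi : i < 256) (ps : List ι)
    (hF : ∀ p ∈ ps, F p (gen i) = (val p i : kk)) : RInv gen F ps (enc val i ps) := by
  induction ps with
  | nil => trivial
  | cons p ps ih =>
    refine ⟨?_, ?_⟩
    · rw [enc_DD val hv hi, hF p List.mem_cons_self, enc, odd']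
      have h := hv p i
      have : (val p i + 2 * enc val i ps) % 2 = val p i := by omega
      rw [this]
      interval_cases val p i <;> simp [bk, Nat.beq]
    · have : (val p i + 2 * enc val i ps) / 2 = enc val i ps := by have := hv p i; omega
      rw [enc, this]
      exact ih fun p hp => hF p (List.mem_cons_of_mem _ hp)

variable (gen F) in
/-- main soundness statement of the elimination -/
theorem chk_ok {full : Bool} {W : Submodule kk P4} (ps : List ι) (gs rels : List ℕ)
    (val : ι → ℕ → ℕ) (hv : ∀ p i, val p i < 2) (hg : ∀ i ∈ gs, i < 256)
    (hF : ∀ i ∈ gs, ∀ p ∈ ps, F p (gen i) = (val p i : kk))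
    (hr : ∀ r ∈ rels, rho gen r ∈ W)
    (h : chkC full ps.length (gs.map fun i => enc val i ps) rels = true) :
    (∀ q ∈ Submodule.span kk {q | ∃ i ∈ gs, q = gen i}, (∀ p ∈ ps, F p q = 0) → q ∈ W) ∧
    (full = true → ∀ τ : ι → kk, ∃ b ∈ Submodule.span kk {q | ∃ i ∈ gs, q = gen i},
      ∀ p ∈ ps, F p b = τ p) := by
  have e : Submodule.span kk {q | ∃ i ∈ gs, q = gen i} = SP gen ps (gs.map fun i => enc val i ps) := by
    rw [SP]; congr 1; ext q
    simp only [Set.mem_ofPred_eq, List.mem_map]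
    constructor
    · rintro ⟨i, hi, rfl⟩
      exact ⟨_, ⟨i, hi, rfl⟩, (enc_DD val hv (hg i hi) ps).symm⟩
    · rintro ⟨_, ⟨i, hi, rfl⟩, rfl⟩
      exact ⟨i, hi, enc_DD val hv (hg i hi) ps⟩
  rw [e]
  obtain ⟨bs, hb, hb'⟩ := insC_ok (gen := gen) (W := W) (bs := []) hr (by simp)
  refine elim_ok (W := W) (full := full) ?_ ps _ ?_ h
  · intro rows hrows
    rw [hb'] at hrows
    exact finC_ok hb hrows
  · intro z hz
    obtain ⟨i, hi, rfl⟩ := List.mem_map.1 hz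
    exact enc_Inv val hv (hg i hi) ps (hF i hi)

end

def mask {n : ℕ} (L : List (Fin n)) : ℕ := L.foldr (fun e m => 2 ^ e.val ||| m) 0

theorem mask_cons {n : ℕ} (e : Fin n) (L : List (Fin n)) : mask (e :: L) = 2 ^ e.val ||| mask L := rfl

theorem mask_testBit {n : ℕ} (L : List (Fin n)) (i : ℕ) :
    (mask L).testBit i = true ↔ ∃ e ∈ L, e.val = i := by
  induction L with
  | nil => simp [mask]
  | cons a L ih => rw [mask_cons, Nat.testBit_or, Bool.or_eq_true, ih, Nat.testBit_two_pow]; simp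

theorem mask_mem {n : ℕ} (L : List (Fin n)) (e : Fin n) : (mask L).testBit e.val = true ↔ e ∈ L := by
  rw [mask_testBit]
  constructor
  · rintro ⟨e', h, h'⟩; rwa [← Fin.ext h']
  · intro h; exact ⟨e, h, rfl⟩

theorem mask_snoc {n : ℕ} (L : List (Fin n)) (e : Fin n) : mask (L ++ [e]) = mask L ||| 2 ^ e.val := by
  apply Nat.eq_of_testBit_eq; intro i
  rw [Bool.eq_iff_iff, Nat.testBit_or, Bool.or_eq_true, mask_testBit, mask_testBit, Nat.testBit_two_pow]
  simp [or_and_right, exists_or]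

theorem mask_rep {n : ℕ} (s : ℕ) (e : Fin n) : mask (List.replicate (s + 1) e) = 2 ^ e.val := by
  apply Nat.eq_of_testBit_eq; intro i
  rw [Bool.eq_iff_iff, mask_testBit, Nat.testBit_two_pow]
  simp

theorem mask_lt {n : ℕ} (L : List (Fin n)) : mask L < 2 ^ n := by
  induction L with
  | nil => simp [mask]
  | cons a L ih => exact Nat.or_lt_two_pow (Nat.pow_lt_pow_right (by norm_num) a.2) ih

theorem mask_pad {n : ℕ} (L : List (Fin n)) (hL : L ≠ []) (m : ℕ) (hm : L.length ≤ m) :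
    ∃ L' : List (Fin n), L'.length = m ∧ mask L' = mask L := by
  obtain ⟨j, rfl⟩ := Nat.exists_eq_add_of_le hm
  induction j with
  | zero => exact ⟨L, rfl, rfl⟩
  | succ j ih =>
    obtain ⟨L', h1, h2⟩ := ih (by omega)
    have hL' : L' ≠ [] := by
      rintro rfl
      have := List.length_pos_of_ne_nil hL
      simp at h1; omega
    obtain ⟨e, l, rfl⟩ := List.exists_cons_of_ne_nil hL'
    refine ⟨e :: e :: l, by simp at h1 ⊢; omega, ?_⟩
    rw [← h2, mask_cons, mask_cons, ← Nat.or_assoc, Nat.or_self]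

def bitsL (n S : ℕ) : List (Fin n) := (List.finRange n).filter fun e => S.testBit e.val
def pc (S : ℕ) : ℕ := S % 2 + (S / 2) % 2 + (S / 4) % 2 + (S / 8) % 2 + (S / 16) % 2 + (S / 32) % 2

theorem bits6 : ∀ S : Fin 64, mask (bitsL 6 S) = S ∧ (bitsL 6 S).length = pc S := by decide +kernel
theorem bits4 : ∀ S : Fin 16, mask (bitsL 4 S) = S ∧ (bitsL 4 S).length = pc S := by decide +kernel
theorem pc_or : ∀ S : Fin 64, ∀ e : Fin 6, pc (2 ^ e.val ||| S.val) ≤ pc S + 1 := by decide +kernel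

theorem exL6 {S n : ℕ} (h : S < 64) (h0 : S ≠ 0) (hp : pc S ≤ n) :
    ∃ L : List (Fin 6), L.length = n ∧ mask L = S := by
  obtain ⟨h1, h2⟩ := bits6 ⟨S, h⟩
  obtain ⟨L, h3, h4⟩ := mask_pad (bitsL 6 S) (by intro h; rw [h] at h1; exact h0 h1.symm) n
    (by rw [← h2] at hp; exact hp)
  exact ⟨L, h3, h4.trans h1⟩

theorem exL4 {S n : ℕ} (h : S < 16) (h0 : S ≠ 0) (hp : pc S ≤ n) :
    ∃ L : List (Fin 4), L.length = n ∧ mask L = S := by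
  obtain ⟨h1, h2⟩ := bits4 ⟨S, h⟩
  obtain ⟨L, h3, h4⟩ := mask_pad (bitsL 4 S) (by intro h; rw [h] at h1; exact h0 h1.symm) n
    (by rw [← h2] at hp; exact hp)
  exact ⟨L, h3, h4.trans h1⟩

theorem pc_mask6 (L : List (Fin 6)) : pc (mask L) ≤ L.length := by
  induction L with
  | nil => simp [mask, pc]
  | cons a L ih =>
    have := pc_or ⟨mask L, mask_lt L⟩ a
    rw [mask_cons, List.length_cons]
    simp only at this; omega

theorem mask_lt6 (L : List (Fin 4)) : mask L < 64 := (mask_lt L).trans (by norm_num)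

theorem pc_mask4 (L : List (Fin 4)) : pc (mask L) ≤ L.length := by
  induction L with
  | nil => simp [mask, pc]
  | cons a L ih =>
    have := pc_or ⟨mask L, mask_lt6 L⟩ ⟨a.val, by omega⟩
    rw [mask_cons, List.length_cons]
    simp only at this; omega

theorem mask_ne {n : ℕ} {L : List (Fin n)} (h : L ≠ []) : mask L ≠ 0 := by
  obtain ⟨e, l, rfl⟩ := List.exists_cons_of_ne_nil h
  intro h
  have := (mask_mem (e :: l) e).2 List.mem_cons_self
  rw [h] at this; simp at this

def vec (a : ℕ) : Vec := fun i => bk (a.testBit i.val)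

theorem prod_bk {n : ℕ} (L : List (Fin n)) (P : ℕ) (f : Fin n → kk)
    (hf : ∀ e, f e = bk (P.testBit e.val)) :
    (L.map f).prod = bk (Nat.beq (mask L &&& P) (mask L)) := by
  have h1 : (L.map f).prod = bk (decide (∀ e ∈ L, P.testBit e.val = true)) := by
    induction L with
    | nil => simp [bk]
    | cons a L ih =>
      rw [List.map_cons, List.prod_cons, ih, hf]
      simp only [List.mem_cons, forall_eq_or_imp]
      by_cases h : P.testBit a.val = true <;> simp [h, bk]
  rw [h1]; congr 1
  rw [Bool.eq_iff_iff, decide_eq_true_iff, Nat.beq_eq]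
  constructor
  · intro h
    apply Nat.eq_of_testBit_eq; intro i
    rw [Nat.testBit_and]
    cases hi : (mask L).testBit i with
    | false => rfl
    | true =>
      obtain ⟨e, he, rfl⟩ := (mask_testBit L i).1 hi
      rw [h e he]; rfl
  · intro h e he
    have h2 := (mask_mem L e).2 he
    rw [← h, Nat.testBit_and, Bool.and_eq_true] at h2
    exact h2.2

/-! type 2 -/

open Classical in
def gen2 (s i : ℕ) : P4 :=
  if h : ∃ L : List (Fin 6), L.length = s ∧ mask L = i / 4 then
    w2 h.choose ⟨i % 4, Nat.mod_lt _ (by norm_num)⟩ else 0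

theorem gen2_eq (s S : ℕ) (k : Fin 4) (h : ∃ L : List (Fin 6), L.length = s ∧ mask L = S) :
    ∃ L : List (Fin 6), L.length = s ∧ mask L = S ∧ gen2 s (4 * S + k) = w2 L k := by
  have e : (4 * S + k.val) / 4 = S := by omega
  rw [← e] at h
  refine ⟨h.choose, h.choose_spec.1, h.choose_spec.2.trans e, ?_⟩
  rw [gen2, dif_pos h]
  congr 1
  apply Fin.ext; simp

theorem gen2_word {s : ℕ} (L : List (Fin 6)) (k : Fin 4) (h : L.length = s) :
    w2 L k + gen2 s (4 * mask L + k) ∈ HH (nn s) := by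
  obtain ⟨L', h1, h2, h3⟩ := gen2_eq s (mask L) k ⟨L, h, rfl⟩
  rw [h3, ← h]
  refine (supp2 k L L' (h.trans h1.symm) fun a => ?_).2
  rw [← mask_mem, ← mask_mem, h2]

theorem gen2_B (s i : ℕ) : gen2 s i ∈ B s := by
  unfold gen2
  split_ifs with h
  · exact w2_mem _ _ h.choose_spec.1
  · exact zero_mem _

abbrev Pt2 := ℕ × ℕ × ℕ
def val2 (p : Pt2) (i : ℕ) : ℕ := cond (Nat.beq ((i / 4) &&& p.1) (i / 4)) (p.2.1 / 2 ^ (i % 4) % 2) 0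
def FF2 (s : ℕ) (p : Pt2) : P4 →ₗ[kk] kk := F2 s (vec p.2.1) (vec p.2.2)

def pts2 : List Pt2 := [(1, 1, 2), (1, 2, 1), (2, 1, 4), (2, 4, 1), (3, 1, 6), (3, 6, 1), (4, 1, 8), (4, 8, 1), (5, 1,
  10), (5, 10, 1), (6, 1, 12), (6, 12, 1), (7, 1, 14), (7, 14, 1), (8, 2, 4), (8, 4, 2), (9, 2,
  5), (9, 5, 2), (16, 2, 8), (16, 8, 2), (17, 2, 9), (17, 9, 2), (24, 2, 12), (24, 12, 2), (25,
  2, 13), (25, 13, 2), (10, 3, 4), (10, 4, 3), (11, 3, 5), (11, 5, 3), (20, 3, 8), (20, 8, 3),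
  (21, 3, 9), (21, 9, 3), (30, 3, 12), (30, 12, 3), (31, 3, 13), (31, 13, 3), (32, 4, 8), (32,
  8, 4), (34, 4, 9), (34, 9, 4), (40, 4, 10), (40, 10, 4), (42, 4, 11), (42, 11, 4), (36, 5,
  8), (36, 8, 5), (38, 5, 9), (38, 9, 5), (45, 5, 10), (45, 10, 5), (47, 5, 11), (47, 11, 5),
  (48, 6, 8), (48, 8, 6), (51, 6, 9), (51, 9, 6), (56, 6, 10), (56, 10, 6), (59, 6, 11), (59,
  11, 6), (52, 7, 8), (52, 8, 7), (55, 7, 9), (55, 9, 7), (61, 7, 10), (61, 10, 7), (62, 7,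
  11), (62, 11, 7)]

theorem pts2_pl : ∀ p ∈ pts2, ∀ e : Fin 6, pl (vec p.2.1) (vec p.2.2) e = bk (p.1.testBit e.val) := by
  decide +kernel

theorem vec_eq (a k : ℕ) : bk (a.testBit k) = ((a / 2 ^ k % 2 : ℕ) : kk) := by
  rw [Nat.testBit_eq_decide_div_mod_eq]
  rcases Nat.mod_two_eq_zero_or_one (a / 2 ^ k) with h | h <;> rw [h] <;> simp [bk]

theorem gen2_F {s S : ℕ} (k : Fin 4) (h : ∃ L : List (Fin 6), L.length = s ∧ mask L = S) (p : Pt2)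
    (hp : p ∈ pts2) : FF2 s p (gen2 s (4 * S + k)) = (val2 p (4 * S + k) : kk) := by
  obtain ⟨L, h1, h2, h3⟩ := gen2_eq s S k h
  have e : (4 * S + k.val) / 4 = S := by omega
  have e' : (4 * S + k.val) % 4 = k := by omega
  rw [h3, FF2, ← h1, F2_word, prod_bk L p.1 _ (pts2_pl p hp), val2, e, e', h2, vec, vec_eq]
  cases Nat.beq (S &&& p.1) S <;> simp [bk]

def gs2 (m : ℕ) : List ℕ :=
  (List.range 256).filter fun i => !(Nat.beq (i / 4) 0) && Nat.ble (pc (i / 4)) m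
def tri : List (Fin 4 × Fin 4 × Fin 4) := [(0, 1, 2), (0, 1, 3), (0, 2, 3), (1, 2, 3)]
def pw (S : ℕ) (k : Fin 4) : ℕ := 2 ^ (4 * S + k.val)
def pb (i j : Fin 4) : ℕ := 2 ^ (eix i j).val
def relP (m : ℕ) : List ℕ :=
  ((List.range 64).filter fun S => Nat.ble (pc S + 2) m && (!(Nat.beq S 0) || Nat.beq m 2)).flatMap fun S =>
    (List.finRange 4).map fun k => pw (2 ^ 0 ||| (2 ^ 5 ||| S)) k ^^^ pw (2 ^ 1 ||| (2 ^ 4 ||| S)) k ^^^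
      pw (2 ^ 3 ||| (2 ^ 2 ||| S)) k
def relT (m : ℕ) : List ℕ :=
  ((List.range 64).filter fun S => Nat.ble (pc S + 1) m).flatMap fun S =>
    tri.map fun t => pw (S ||| pb t.2.1 t.2.2) t.1 ^^^ pw (S ||| pb t.1 t.2.2) t.2.1 ^^^
      pw (S ||| pb t.1 t.2.1) t.2.2
def perms4 : List (Fin 4 × Fin 4 × Fin 4 × Fin 4) :=
  ((List.finRange 4).flatMap fun a => (List.finRange 4).flatMap fun b => (List.finRange 4).flatMap fun c =>
    (List.finRange 4).map fun d => (a, b, c, d)).filter fun t => decide (t.1 ≠ t.2.1 ∧ t.1 ≠ t.2.2.1 ∧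
      t.1 ≠ t.2.2.2 ∧ t.2.1 ≠ t.2.2.1 ∧ t.2.1 ≠ t.2.2.2 ∧ t.2.2.1 ≠ t.2.2.2)
def rX (a b c l : Fin 4) : ℕ :=
  pw (mask [eix b c, eix b c, eix b l]) a ^^^ pw (mask [eix a c, eix a c, eix a l]) b ^^^
  (pw (mask [eix a b, eix b c, eix b l]) a ^^^ pw (mask [eix a b, eix a c, eix a l]) b)
def relX3 (m : ℕ) : List ℕ := cond (Nat.beq m 3) (perms4.map fun t => rX t.1 t.2.1 t.2.2.1 t.2.2.2) []
def rels2 (m : ℕ) : List ℕ := relP m ++ (relT m ++ relX3 m)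
def keep : ℕ → List ℕ → List ℕ
  | _, [] => []
  | M, x :: xs => force M fun M' => cond (odd' M') (x :: keep (M' / 2) xs) (keep (M' / 2) xs)
theorem keep_sub (l : List ℕ) : ∀ (M x : ℕ), x ∈ keep M l → x ∈ l := by
  induction l with
  | nil => intro M x h; exact h
  | cons a l ih =>
    intro M x h
    rw [keep, force_eq] at h
    cases ho : odd' M <;> rw [ho] at h
    · exact List.mem_cons_of_mem _ (ih _ _ h)
    · rcases List.mem_cons.1 h with rfl | h
      · exact List.mem_cons_self
      · exact List.mem_cons_of_mem _ (ih _ _ h)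
def chk2 (full : Bool) (m M : ℕ) : Bool :=
  chkC full pts2.length ((gs2 m).map fun i => enc val2 i pts2) (keep M (rels2 m))

theorem chk2_1 : chk2 false 1
  15 = true := by decide +kernel
theorem chk2_2 : chk2 false 2
  3472818175 = true := by decide +kernel
theorem chk2_3 : chk2 true 3
  347040319709035815122770446631819018239 = true := by decide +kernel
theorem chk2_4 : chk2 true 4
  55214866238545708967916898983150551692092558925278056091192172419743743 = true := by decide +kernel
theorem chk2_5 : chk2 true 5
  4586997249135181550113768221245561600249101795317203213894070024613804819640672516536714944913066629791743 = true := by decide +kernel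
theorem chk2_6 : chk2 true 6
  1353842624398883735933728920119634683321730568407240837991269565675461993267826021454997289910539509245823506594931393695842303 = true := by decide +kernel

theorem rho_pw (s : ℕ) {S : ℕ} (hS : S < 64) (k : Fin 4) : rho (gen2 s) (pw S k) = gen2 s (4 * S + k) :=
  rho_pow _ _ (by omega)

/-- replace words by generators -/
theorem rho_w2 {s : ℕ} (L : List (Fin 6)) (k : Fin 4) (h : L.length = s) {S : ℕ} (hS : mask L = S) :
    rho (gen2 s) (pw S k) + w2 L k ∈ HH (nn s) := by
  subst hS
  rw [rho_pw s (mask_lt L), add_comm]; exact gen2_word L k h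

theorem swap3' {W : Submodule kk P4} {a b c a' b' c' : P4} (ha : a + a' ∈ W) (hb : b + b' ∈ W)
    (hc : c + c' ∈ W) (h : a' + b' + c' ∈ W) : a + b + c ∈ W := by
  have := W.add_mem (W.add_mem (W.add_mem ha hb) hc) h
  have e : a + a' + (b + b') + (c + c') + (a' + b' + c') =
    a + b + c + ((a' + a') + (b' + b') + (c' + c')) := by ring
  rwa [e, add_self2 a', add_self2 b', add_self2 c', add_zero, add_zero, add_zero] at this

theorem swap2' {W : Submodule kk P4} {a b a' b' : P4} (ha : a + a' ∈ W) (hb : b + b' ∈ W) :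
     (a + b) + (a' + b') ∈ W := by
  have := W.add_mem ha hb
  have e : a + a' + (b + b') = a + b + (a' + b') := by ring
  rwa [e] at this

theorem rels2_ok {s m : ℕ} (hs : 1 ≤ s) (hm : m = s ∨ m = 6 ∧ 6 ≤ s) :
    ∀ r ∈ rels2 m, rho (gen2 s) r ∈ HH (nn s) := by
  intro r hr
  simp only [rels2, List.mem_append] at hr
  rcases hr with hr | hr | hr
  · simp only [relP, List.mem_flatMap, List.mem_filter, List.mem_range, List.mem_map] at hr
    obtain ⟨S, ⟨hS, hS'⟩, k, _, rfl⟩ := hr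
    simp only [Bool.and_eq_true, Nat.ble_eq, Bool.or_eq_true, Bool.not_eq_true', Nat.beq_eq] at hS'
    obtain ⟨h1, h2⟩ := hS'
    obtain ⟨j, rfl⟩ : ∃ j, s = j + 2 := ⟨s - 2, by omega⟩
    obtain ⟨L, hL, hL'⟩ : ∃ L : List (Fin 6), L.length = j ∧ mask L = S := by
      by_cases h0 : S = 0
      · subst h0
        rcases h2 with h2 | h2
        · simp at h2
        · exact ⟨[], by simp; omega, rfl⟩
      · exact exL6 hS h0 (by omega)
    have := pluck2 (i := 0) (j := 1) (k := 2) (l := 3) k L (by decide)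
    rw [rho_xor, rho_xor]
    rw [hL] at this
    refine swap3' (rho_w2 _ k ?_ ?_) (rho_w2 _ k ?_ ?_) (rho_w2 _ k ?_ ?_) this
    all_goals first
      | (simp only [List.length_cons]; omega)
      | (rw [mask_cons, mask_cons, hL']; rfl)
  · simp only [relT, List.mem_flatMap, List.mem_filter, List.mem_range, List.mem_map] at hr
    obtain ⟨S, ⟨hS, h1⟩, ⟨i, j, k⟩, ht, rfl⟩ := hr
    rw [Nat.ble_eq] at h1
    obtain ⟨r, rfl⟩ : ∃ r, s = r + 1 := ⟨s - 1, by omega⟩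
    obtain ⟨hij, hik, hjk⟩ : i ≠ j ∧ i ≠ k ∧ j ≠ k := by
      have : ∀ t ∈ tri, t.1 ≠ t.2.1 ∧ t.1 ≠ t.2.2 ∧ t.2.1 ≠ t.2.2 := by decide
      exact this _ ht
    rw [rho_xor, rho_xor]
    by_cases h0 : S = 0
    · subst h0
      refine swap3' (rho_w2 _ i ?_ ?_) (rho_w2 _ j ?_ ?_) (rho_w2 _ k ?_ ?_) (tailrep r hij hik hjk)
      all_goals first
        | (rw [mask_rep]; simp [pb]; done)
        | (simp only [List.length_replicate])
    · obtain ⟨L, hL, hL'⟩ := exL6 (n := r) hS h0 (by omega)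
      have := tail2 L hij hik hjk
      rw [hL] at this
      refine swap3' (rho_w2 _ i ?_ ?_) (rho_w2 _ j ?_ ?_) (rho_w2 _ k ?_ ?_) this
      all_goals first
        | (rw [List.length_append, hL]; rfl)
        | (rw [mask_snoc, hL']; rfl)
  · rw [relX3] at hr
    cases h3 : Nat.beq m 3 with
    | false => rw [h3] at hr; simp at hr
    | true =>
      rw [h3, cond_true, List.mem_map] at hr
      obtain ⟨⟨a, b, c, l⟩, ht, rfl⟩ := hr
      rw [perms4, List.mem_filter, decide_eq_true_iff] at ht
      have : m = 3 := by simpa using h3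
      obtain rfl : s = 3 := by omega
      have := relX ht.2
      simp only [rX, rho_xor]
      have h1 := rho_w2 (s := 3) [eix b c, eix b c, eix b l] a rfl rfl
      have h2 := rho_w2 (s := 3) [eix a c, eix a c, eix a l] b rfl rfl
      have h3 := rho_w2 (s := 3) [eix a b, eix b c, eix b l] a rfl rfl
      have h4 := rho_w2 (s := 3) [eix a b, eix a c, eix a l] b rfl rfl
      have h5 := swap2' (swap2' h1 h2) (swap2' h3 h4)
      exact mem_of_add h5 this

theorem chk2_use {full : Bool} {s m M : ℕ} (hs : 1 ≤ s) (hm : m = s ∨ m = 6 ∧ 6 ≤ s)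
    (h : chk2 full m M = true) :
    (∀ b ∈ B s, (∀ p ∈ pts2, FF2 s p b = 0) → b ∈ HH (nn s)) ∧
    (full = true → ∀ τ : Pt2 → kk, ∃ b ∈ B s, ∀ p ∈ pts2, FF2 s p b = τ p) := by
  have hv : ∀ p i, val2 p i < 2 := by
    intro p i; rw [val2]; cases Nat.beq (i / 4 &&& p.1) (i / 4) <;> simp; omega
  have hgs : ∀ i ∈ gs2 m, i < 256 ∧ i / 4 ≠ 0 ∧ pc (i / 4) ≤ m := by
    intro i hi
    simp only [gs2, List.mem_filter, List.mem_range, Bool.and_eq_true, Bool.not_eq_true',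
      Nat.ble_eq] at hi
    refine ⟨hi.1, ?_, hi.2.2⟩
    intro h0; rw [h0] at hi; simp at hi
  have hF : ∀ i ∈ gs2 m, ∀ p ∈ pts2, FF2 s p (gen2 s i) = (val2 p i : kk) := by
    intro i hi p hp
    obtain ⟨h1, h2, h3⟩ := hgs i hi
    have := gen2_F (s := s) (S := i / 4) ⟨i % 4, Nat.mod_lt _ (by norm_num)⟩
      (exL6 (by omega) h2 (by omega)) p hp
    simp only [Nat.div_add_mod] at this
    exact this
  obtain ⟨c1, c2⟩ := chk_ok (gen2 s) (FF2 s) (W := HH (nn s)) pts2 (gs2 m) (keep M (rels2 m)) val2 hv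
    (fun i hi => (hgs i hi).1) hF (fun r hr => rels2_ok hs hm r (keep_sub _ _ _ hr)) h
  have hsp : Submodule.span kk {q | ∃ i ∈ gs2 m, q = gen2 s i} ≤ B s := by
    refine Submodule.span_le.2 ?_
    rintro _ ⟨i, _, rfl⟩; exact gen2_B s i
  have hB : B s ≤ HH (nn s) ⊔ Submodule.span kk {q | ∃ i ∈ gs2 m, q = gen2 s i} := by
    refine sup_le le_sup_left (Submodule.span_le.2 ?_)
    rintro _ ⟨L, k, hL, rfl⟩
    have h1 := gen2_word L k hL
    refine mem_of_add (Submodule.mem_sup_left h1) (Submodule.mem_sup_right (Submodule.subset_span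
      ⟨_, ?_, rfl⟩))
    simp only [gs2, List.mem_filter, List.mem_range, Bool.and_eq_true, Bool.not_eq_true', Nat.ble_eq]
    have e : (4 * mask L + k.val) / 4 = mask L := by omega
    have h2 := mask_lt L
    have h3 := pc_mask6 L
    have h4 : mask L ≠ 0 := mask_ne (by rintro rfl; simp at hL; omega)
    rw [e]
    refine ⟨by omega, ?_, ?_⟩
    · rw [Bool.eq_false_iff, Ne, Nat.beq_eq]; exact h4
    · rcases hm with rfl | ⟨rfl, _⟩
      · omega
      · rw [pc]; omega
  refine ⟨?_, ?_⟩
  · intro b hb hp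
    obtain ⟨h, hh, q, hq, rfl⟩ := Submodule.mem_sup.1 (hB hb)
    refine add_mem hh (c1 q hq fun p hpp => ?_)
    have h1 := hp p hpp
    have h2 : FF2 s p h = 0 := (F2_stab s _ _).HH hh
    rwa [map_add, h2, zero_add] at h1
  · intro hf τ
    obtain ⟨b, hb, hb'⟩ := c2 hf τ
    exact ⟨b, hsp hb, hb'⟩

theorem D2 {s : ℕ} (hs : 1 ≤ s) : ∀ b ∈ B s, (∀ p ∈ pts2, FF2 s p b = 0) → b ∈ HH (nn s) := by
  rcases Nat.lt_or_ge s 6 with h | h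
  · interval_cases s
    · exact (chk2_use (by norm_num) (Or.inl rfl) chk2_1).1
    · exact (chk2_use (by norm_num) (Or.inl rfl) chk2_2).1
    · exact (chk2_use (by norm_num) (Or.inl rfl) chk2_3).1
    · exact (chk2_use (by norm_num) (Or.inl rfl) chk2_4).1
    · exact (chk2_use (by norm_num) (Or.inl rfl) chk2_5).1
  · exact (chk2_use hs (Or.inr ⟨rfl, h⟩) chk2_6).1

theorem surj2 {s : ℕ} (hs : 3 ≤ s) : ∀ τ : Pt2 → kk, ∃ b ∈ B s, ∀ p ∈ pts2, FF2 s p b = τ p := by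
  rcases Nat.lt_or_ge s 6 with h | h
  · interval_cases s
    · exact (chk2_use (by norm_num) (Or.inl rfl) chk2_3).2 rfl
    · exact (chk2_use (by norm_num) (Or.inl rfl) chk2_4).2 rfl
    · exact (chk2_use (by norm_num) (Or.inl rfl) chk2_5).2 rfl
  · exact (chk2_use (by omega) (Or.inr ⟨rfl, h⟩) chk2_6).2 rfl

abbrev Tri := Fin 4 × Fin 4 × Fin 4
def tlist (t : Tri) : List (Fin 4) := [t.1, t.2.1, t.2.2]
def tl (T : ℕ) : Tri := [(0,0,0), (0,0,0), (1,1,1), (0,0,1), (2,2,2), (0,0,2), (1,1,2), (0,1,2), (3,3,3), (0,0,3),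
  (1,1,3), (0,1,3), (2,2,3), (0,2,3), (1,2,3)].getD T (0,0,0)

theorem tl_class : ∀ a b c : Fin 4, (tlist (a, b, c)).Perm (tlist (tl (mask (tlist (a, b, c))))) ∨
    ∃ x y, (tlist (a, b, c)).Perm [x, x, y] ∧ (tlist (tl (mask (tlist (a, b, c))))).Perm [x, y, y] := by
  decide +kernel

theorem tl_mask : ∀ T : Fin 15, T.val ≠ 0 → mask (tlist (tl T)) = T := by decide +kernel
theorem tl_lt : ∀ a b c : Fin 4, mask (tlist (a, b, c)) ≠ 0 ∧ mask (tlist (a, b, c)) < 15 := by decide +kernel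

theorem perm_prod {t : Tri} {x y z : Fin 4} (h : (tlist t).Perm [x, y, z]) :
    (X t.1 * X t.2.1 * X t.2.2 : P4) = X x * X y * X z := by
  have := (h.map (X : Fin 4 → P4)).prod_eq
  simp only [tlist, List.map_cons, List.map_nil, List.prod_cons, List.prod_nil, mul_one] at this
  rw [mul_assoc, this, mul_assoc]

theorem tl_ok (t : Tri) : (X t.1 * X t.2.1 * X t.2.2 : P4) + X (tl (mask (tlist t))).1 *
    X (tl (mask (tlist t))).2.1 * X (tl (mask (tlist t))).2.2 ∈ HH 3 := by
  obtain ⟨a, b, c⟩ := t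
  rcases tl_class a b c with h | ⟨x, y, h1, h2⟩
  · rw [perm_prod h, add_self2]; exact zero_mem _
  · rw [perm_prod h1, perm_prod h2]
    have := rel2 (n := 3) rfl x y 1
    convert this using 1
    ring

theorem w3_tl (L : List (Fin 4)) (t : Tri) :
    w3 L t + w3 L (tl (mask (tlist t))) ∈ HH (dd (L.length + 1)) := by
  rw [w3, w3, ← word_add]
  exact prefL3 (s := 0) L (tl_ok t) rfl

open Classical in
def gen3 (n i : ℕ) : P4 :=
  if h : ∃ L : List (Fin 4), L.length = n ∧ mask L = i / 16 then w3 h.choose (tl (i % 16)) else 0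

theorem gen3_eq (n S T : ℕ) (hT : T < 15) (h : ∃ L : List (Fin 4), L.length = n ∧ mask L = S) :
    ∃ L : List (Fin 4), L.length = n ∧ mask L = S ∧ gen3 n (16 * S + T) = w3 L (tl T) := by
  have e : (16 * S + T) / 16 = S := by omega
  have e' : (16 * S + T) % 16 = T := by omega
  rw [← e] at h
  refine ⟨h.choose, h.choose_spec.1, h.choose_spec.2.trans e, ?_⟩
  rw [gen3, dif_pos h, e']

theorem gen3_word {n : ℕ} (L : List (Fin 4)) (t : Tri) (h : L.length = n) :
    w3 L t + gen3 n (16 * mask L + mask (tlist t)) ∈ HH (dd (n + 1)) := by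
  obtain ⟨L', h1, h2, h3⟩ := gen3_eq n (mask L) _ (tl_lt t.1 t.2.1 t.2.2).2 ⟨L, h, rfl⟩
  rw [h3, ← h]
  have a1 := (supp3 (tl (mask (tlist t))) L L' (h.trans h1.symm) fun a => by rw [← mask_mem, ← mask_mem, h2]).2
  have a2 := add_mem (w3_tl L t) a1
  have e : ∀ a b c : P4, a + b + (b + c) = a + c := by
    intro a b c; linear_combination add_self2 b
  rw [e] at a2
  exact a2

abbrev Pt3 := ℕ × ℕ × ℕ × ℕ
def val3 (p : Pt3) (i : ℕ) : ℕ := cond (Nat.beq ((i / 16) &&& p.1) (i / 16))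
  (cond (Nat.beq ((i % 16) &&& p.2.1) (i % 16)) 1 0) 0
def FF3 (n : ℕ) (p : Pt3) : P4 →ₗ[kk] kk := F3 n (vec p.2.1) (vec p.2.2.1) (vec p.2.2.2)

def pts3 : List Pt3 := [(1, 2, 4, 8), (1, 4, 2, 8), (1, 6, 2, 8), (1, 8, 2, 4), (1, 10, 2, 4), (1,
  12, 2, 4), (1, 14, 2, 4), (2, 1, 4, 8), (2, 4, 1, 8), (2, 5, 1, 8), (2, 8, 1, 4), (2, 9, 1, 4),
  (2, 12, 1, 4), (2, 13, 1, 4), (3, 3, 4, 8), (3, 4, 3, 8), (3, 7, 3, 8), (3, 8, 3, 4), (3, 11, 3,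
  4), (3, 12, 3, 4), (3, 15, 3, 4), (4, 1, 2, 8), (4, 2, 1, 8), (4, 3, 1, 8), (4, 8, 1, 2), (4, 9,
  1, 2), (4, 10, 1, 2), (4, 11, 1, 2), (5, 2, 5, 8), (5, 5, 2, 8), (5, 7, 2, 8), (5, 8, 2, 5), (5,
  10, 2, 5), (5, 13, 2, 5), (5, 15, 2, 5), (6, 1, 6, 8), (6, 6, 1, 8), (6, 7, 1, 8), (6, 8, 1, 6),
  (6, 9, 1, 6), (6, 14, 1, 6), (6, 15, 1, 6), (7, 3, 5, 8), (7, 5, 3, 8), (7, 6, 3, 8), (7, 8, 3,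
  5), (7, 11, 3, 5), (7, 13, 3, 5), (7, 14, 3, 5), (8, 1, 2, 4), (8, 2, 1, 4), (8, 3, 1, 4), (8, 4,
  1, 2), (8, 5, 1, 2), (8, 6, 1, 2), (8, 7, 1, 2), (9, 2, 4, 9), (9, 4, 2, 9), (9, 6, 2, 9), (9, 9,
  2, 4), (9, 11, 2, 4), (9, 13, 2, 4), (9, 15, 2, 4), (10, 1, 4, 10), (10, 4, 1, 10), (10, 5, 1,
  10), (10, 10, 1, 4), (10, 11, 1, 4), (10, 14, 1, 4), (10, 15, 1, 4), (11, 3, 4, 9), (11, 4, 3, 9),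
  (11, 7, 3, 9), (11, 9, 3, 4), (11, 10, 3, 4), (11, 13, 3, 4), (11, 14, 3, 4), (12, 1, 2, 12), (12,
  2, 1, 12), (12, 3, 1, 12), (12, 12, 1, 2), (12, 13, 1, 2), (12, 14, 1, 2), (12, 15, 1, 2), (13, 2,
  5, 9), (13, 5, 2, 9), (13, 7, 2, 9), (13, 9, 2, 5), (13, 11, 2, 5), (13, 12, 2, 5), (13, 14, 2,
  5), (14, 1, 6, 10), (14, 6, 1, 10), (14, 7, 1, 10), (14, 10, 1, 6), (14, 11, 1, 6), (14, 12, 1,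
  6), (14, 13, 1, 6), (15, 3, 5, 9), (15, 5, 3, 9), (15, 6, 3, 9), (15, 9, 3, 5), (15, 10, 3, 5),
  (15, 12, 3, 5), (15, 15, 3, 5)]

theorem pts3_lam : ∀ p ∈ pts3, ∀ e : Fin 4,
    lam (vec p.2.1) (vec p.2.2.1) (vec p.2.2.2) e = bk (p.1.testBit e.val) := by
  decide +kernel

theorem F3_word' {P a b c : ℕ} (h : ∀ e : Fin 4, lam (vec a) (vec b) (vec c) e = bk (P.testBit e.val))
    (L : List (Fin 4)) (t : Tri) : F3 L.length (vec a) (vec b) (vec c) (w3 L t) =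
    bk (Nat.beq (mask L &&& P) (mask L)) * bk (Nat.beq (mask (tlist t) &&& a) (mask (tlist t))) := by
  rw [F3_word, prod_bk L P _ h, ← prod_bk (tlist t) a (vec a) (fun _ => rfl)]
  simp [tlist, mul_assoc]

theorem gen3_F {n S T : ℕ} (hT : T < 15) (hT0 : T ≠ 0) (h : ∃ L : List (Fin 4), L.length = n ∧ mask L = S) (p : Pt3)
    (hp : p ∈ pts3) : FF3 n p (gen3 n (16 * S + T)) = (val3 p (16 * S + T) : kk) := by
  obtain ⟨L, h1, h2, h3⟩ := gen3_eq n S T hT h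
  have e : (16 * S + T) / 16 = S := by omega
  have e' : (16 * S + T) % 16 = T := by omega
  rw [h3, FF3, ← h1, F3_word' (pts3_lam p hp), val3, e, e', h2, tl_mask ⟨T, hT⟩ hT0]
  simp only
  cases Nat.beq (S &&& p.1) S <;> cases Nat.beq (T &&& p.2.1) T <;> simp [bk]

def gs3 (m : ℕ) : List ℕ := (List.range 256).filter fun i => (!(Nat.beq (i / 16) 0) || Nat.beq m 0) &&
  (Nat.ble (pc (i / 16)) m && (!(Nat.beq (i % 16) 0) && Nat.blt (i % 16) 15))
def prs : List (Fin 4 × Fin 4) := [(0,0), (0,1), (0,2), (0,3), (1,1), (1,2), (1,3), (2,2), (2,3), (3,3)]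
def pq (S : ℕ) (t : Tri) : ℕ := 2 ^ (16 * S + mask (tlist t))
def relS (m : ℕ) : List ℕ := ((List.range 16).filter fun S => Nat.ble (pc S + 1) m).flatMap fun S =>
  prs.map fun t => pq (S ||| 2 ^ 0) (0, t.1, t.2) ^^^ pq (S ||| 2 ^ 1) (1, t.1, t.2) ^^^
    pq (S ||| 2 ^ 2) (2, t.1, t.2) ^^^ pq (S ||| 2 ^ 3) (3, t.1, t.2)
def exq (k : Fin 4) : ℕ := pq (mask [k, 0]) (0, 0, 0) ^^^ pq (mask [k, 1]) (1, 1, 1) ^^^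
  pq (mask [k, 2]) (2, 2, 2) ^^^ pq (mask [k, 3]) (3, 3, 3)
def exg : ℕ := pq 1 (0, 0, 0) ^^^ pq 2 (1, 1, 1) ^^^ pq 4 (2, 2, 2) ^^^ pq 8 (3, 3, 3)
def extra (m : ℕ) : List ℕ := cond (Nat.beq m 1) [exg] (cond (Nat.beq m 2) [exq 0, exq 1, exq 2, exq 3] [])
def chk3 (full : Bool) (m : ℕ) : Bool :=
  chkC full pts3.length ((gs3 m).map fun i => enc val3 i pts3) (relS m ++ extra m)

theorem chk3_0 : chk3 false 0 = true := by decide +kernel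
theorem chk3_1 : chk3 false 1 = true := by decide +kernel
theorem chk3_2 : chk3 false 2 = true := by decide +kernel
theorem chk3_3 : chk3 true 3 = true := by decide +kernel
theorem chk3_4 : chk3 true 4 = true := by decide +kernel
theorem chk3_par : ∀ i ∈ gs3 2 ++ gs3 0, Nat.beq ((pts3.map fun p => val3 p i).sum % 2) 0 = true := by decide +kernel
theorem gs3_sub : ∀ i ∈ gs3 1, i ∈ gs3 2 := by decide +kernel

theorem rho_pq (n : ℕ) {S : ℕ} (hS : S < 16) (t : Tri) :
    rho (gen3 n) (pq S t) = gen3 n (16 * S + mask (tlist t)) :=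
  rho_pow _ _ (by have := (tl_lt t.1 t.2.1 t.2.2).2; simp only [Prod.mk.eta] at this; omega)

theorem rho_w3 {n : ℕ} (L : List (Fin 4)) (t : Tri) (h : L.length = n) {S : ℕ} (hS : mask L = S) :
    rho (gen3 n) (pq S t) + w3 L t ∈ HH (dd (n + 1)) := by
  subst hS
  have hl : mask L < 16 := by have := mask_lt L; omega
  rw [rho_pq n hl, add_comm (gen3 n _)]; exact gen3_word L t h

theorem swap4' {W : Submodule kk P4} {a b c d a' b' c' d' : P4} (ha : a + a' ∈ W) (hb : b + b' ∈ W)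
    (hc : c + c' ∈ W) (hd : d + d' ∈ W) : (a + b + c + d) + (a' + b' + c' + d') ∈ W := by
  have := swap2' (swap2' (swap2' ha hb) hc) hd
  exact this

theorem relS_ok {n m : ℕ} (hm : m = n ∨ m = 4 ∧ 4 ≤ n) :
    ∀ r ∈ relS m, rho (gen3 n) r ∈ HH (dd (n + 1)) := by
  intro r hr
  simp only [relS, List.mem_flatMap, List.mem_filter, List.mem_range, List.mem_map] at hr
  obtain ⟨S, ⟨hS, h1⟩, ⟨k, l⟩, _, rfl⟩ := hr
  rw [Nat.ble_eq] at h1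
  obtain ⟨r, rfl⟩ : ∃ r, n = r + 1 := ⟨n - 1, by omega⟩
  simp only [rho_xor]
  by_cases h0 : S = 0
  · subst h0
    refine mem_of_add (swap4' (rho_w3 _ _ ?_ ?_) (rho_w3 _ _ ?_ ?_) (rho_w3 _ _ ?_ ?_) (rho_w3 _ _ ?_ ?_))
      (tailrep3 r k l)
    all_goals first
      | (rw [mask_rep]; rfl)
      | (simp only [List.length_replicate])
  · obtain ⟨L, hL, hL'⟩ := exL4 (n := r) hS h0 (by omega)
    have := tail3 L k l
    rw [hL] at this
    refine mem_of_add (swap4' (rho_w3 _ _ ?_ ?_) (rho_w3 _ _ ?_ ?_) (rho_w3 _ _ ?_ ?_) (rho_w3 _ _ ?_ ?_)) this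
    all_goals first
      | (rw [List.length_append, hL]; rfl)
      | (rw [mask_snoc, hL']; rfl)

def W3 (n m : ℕ) : Submodule kk P4 := HH (dd (n + 1)) ⊔ Submodule.span kk {q | ∃ x ∈ extra m, q = rho (gen3 n) x}

theorem gs3_mem {m i : ℕ} : i ∈ gs3 m ↔ i < 256 ∧ (i / 16 ≠ 0 ∨ m = 0) ∧ pc (i / 16) ≤ m ∧ i % 16 ≠ 0 ∧
    i % 16 < 15 := by
  simp only [gs3, List.mem_filter, List.mem_range, Bool.and_eq_true, Bool.or_eq_true, Bool.not_eq_true',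
    Nat.ble_eq, Nat.blt, Nat.beq_eq, Bool.eq_false_iff, Ne, Nat.succ_le_iff]

theorem gs3_span {n m : ℕ} (hm : m = n ∨ m = 4 ∧ 4 ≤ n) (f : P4) :
    ∃ h ∈ HH (dd (n + 1)), ∃ q ∈ Submodule.span kk {q | ∃ i ∈ gs3 m, q = gen3 n i}, h + q = f := by
  refine Submodule.mem_sup.1 ((?_ : B3 n ≤ _) (B3_all n f))
  refine sup_le le_sup_left (Submodule.span_le.2 ?_)
  rintro _ ⟨L, t, hL, rfl⟩
  have h1 := gen3_word L t hL
  refine mem_of_add (Submodule.mem_sup_left h1) (Submodule.mem_sup_right (Submodule.subset_span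
    ⟨_, gs3_mem.2 ?_, rfl⟩))
  obtain ⟨t1, t2⟩ := tl_lt t.1 t.2.1 t.2.2
  simp only [Prod.mk.eta] at t1 t2
  have e : (16 * mask L + mask (tlist t)) / 16 = mask L := by omega
  have e' : (16 * mask L + mask (tlist t)) % 16 = mask (tlist t) := by omega
  have h2 := mask_lt L
  have h3 := pc_mask4 L
  rw [e, e']
  refine ⟨by omega, ?_, ?_, t1, t2⟩
  · by_cases h : L = []
    · right; subst h; simp at hL; omega
    · exact Or.inl (mask_ne h)
  · rcases hm with rfl | ⟨rfl, _⟩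
    · omega
    · rw [pc]; omega

theorem gs3_F {n m : ℕ} (hm : m = n ∨ m = 4 ∧ 4 ≤ n) :
    ∀ i ∈ gs3 m, ∀ p ∈ pts3, FF3 n p (gen3 n i) = (val3 p i : kk) := by
  intro i hi p hp
  obtain ⟨h1, h2, h3, h4, h5⟩ := gs3_mem.1 hi
  have hL : ∃ L : List (Fin 4), L.length = n ∧ mask L = i / 16 := by
    by_cases h0 : i / 16 = 0
    · refine ⟨[], ?_, ?_⟩
      · simp; omega
      · rw [h0]; rfl
    · exact exL4 (by omega) h0 (by omega)
  have := gen3_F h5 h4 hL p hp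
  rwa [Nat.div_add_mod] at this

theorem chk3_use {full : Bool} {n m : ℕ} (hm : m = n ∨ m = 4 ∧ 4 ≤ n) (h : chk3 full m = true) :
    (∀ b, (∀ p ∈ pts3, FF3 n p b = 0) → b ∈ W3 n m) ∧
    (full = true → ∀ τ : Pt3 → kk, ∃ b, ∀ p ∈ pts3, FF3 n p b = τ p) := by
  have hv : ∀ p i, val3 p i < 2 := by
    intro p i; rw [val3]
    cases Nat.beq (i / 16 &&& p.1) (i / 16) <;> cases Nat.beq (i % 16 &&& p.2.1) (i % 16) <;> simp
  have hr : ∀ r ∈ relS m ++ extra m, rho (gen3 n) r ∈ W3 n m := by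
    intro r hr
    rcases List.mem_append.1 hr with hr | hr
    · exact Submodule.mem_sup_left (relS_ok hm r hr)
    · exact Submodule.mem_sup_right (Submodule.subset_span ⟨r, hr, rfl⟩)
  obtain ⟨c1, c2⟩ := chk_ok (gen3 n) (FF3 n) (W := W3 n m) pts3 (gs3 m) _ val3 hv
    (fun i hi => (gs3_mem.1 hi).1) (gs3_F hm) hr h
  refine ⟨?_, ?_⟩
  · intro b hp
    obtain ⟨h, hh, q, hq, rfl⟩ := gs3_span hm b
    refine add_mem (Submodule.mem_sup_left hh) (c1 q hq fun p hpp => ?_)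
    have h1 := hp p hpp
    have h2 : FF3 n p h = 0 := (F3_stab n _ _ _).HH hh
    rwa [map_add, h2, zero_add] at h1
  · intro hf τ
    obtain ⟨b, hb, hb'⟩ := c2 hf τ
    exact ⟨b, hb'⟩

theorem W3_eq {n m : ℕ} (h : extra m = []) : W3 n m = HH (dd (n + 1)) := by
  rw [W3, h]; simp

theorem D3_0 {g : P4} (h : ∀ p ∈ pts3, FF3 0 p g = 0) : g ∈ HH 3 := by
  have := (chk3_use (n := 0) (Or.inl rfl) chk3_0).1 g h
  rwa [W3_eq rfl] at this

theorem D3_big {n : ℕ} (hn : 3 ≤ n) {g : P4} (h : ∀ p ∈ pts3, FF3 n p g = 0) : g ∈ HH (dd (n + 1)) := by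
  rcases Nat.lt_or_ge n 4 with h' | h'
  · obtain rfl : n = 3 := by omega
    have := (chk3_use (n := 3) (Or.inl rfl) chk3_3).1 g h
    rwa [W3_eq rfl] at this
  · have := (chk3_use (n := n) (Or.inr ⟨rfl, h'⟩) chk3_4).1 g h
    rwa [W3_eq rfl] at this

theorem surj3 {n : ℕ} (hn : 3 ≤ n) (τ : Pt3 → kk) : ∃ b, ∀ p ∈ pts3, FF3 n p b = τ p := by
  rcases Nat.lt_or_ge n 4 with h' | h'
  · obtain rfl : n = 3 := by omega
    exact (chk3_use (n := 3) (Or.inl rfl) chk3_3).2 rfl τ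
  · exact (chk3_use (n := n) (Or.inr ⟨rfl, h'⟩) chk3_4).2 rfl τ

/-- `Σ_i e3 i * (x_i³)²` -/
def g0 : P4 := w3 [0] (0, 0, 0) + w3 [1] (1, 1, 1) + w3 [2] (2, 2, 2) + w3 [3] (3, 3, 3)
def nk (k : Fin 4) : P4 := e3 k * g0 ^ 2

theorem nk_eq (k : Fin 4) : nk k = w3 [k, 0] (0, 0, 0) + w3 [k, 1] (1, 1, 1) + w3 [k, 2] (2, 2, 2) +
    w3 [k, 3] (3, 3, 3) := by
  rw [nk, g0]
  simp only [w3, word, sq_add2, mul_add]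

theorem D3_1 {g : P4} (h : ∀ p ∈ pts3, FF3 1 p g = 0) : ∃ c : kk, g + c • g0 ∈ HH 9 := by
  have := (chk3_use (n := 1) (Or.inl rfl) chk3_1).1 g h
  obtain ⟨y, hy, z, hz, rfl⟩ := Submodule.mem_sup.1 this
  have e : {q | ∃ x ∈ extra 1, q = rho (gen3 1) x} = {rho (gen3 1) exg} := by
    ext q; simp [extra]
  rw [e, Submodule.mem_span_singleton] at hz
  obtain ⟨c, rfl⟩ := hz
  refine ⟨c, ?_⟩
  rw [add_assoc, ← smul_add]
  refine add_mem hy (Submodule.smul_mem _ _ ?_)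
  simp only [exg, rho_xor]
  exact swap4' (rho_w3 [0] _ rfl rfl) (rho_w3 [1] _ rfl rfl) (rho_w3 [2] _ rfl rfl) (rho_w3 [3] _ rfl rfl)

theorem D3_2 {g : P4} (h : ∀ p ∈ pts3, FF3 2 p g = 0) :
    ∃ c : Fin 4 → kk, g + ∑ k, c k • nk k ∈ HH 21 := by
  have := (chk3_use (n := 2) (Or.inl rfl) chk3_2).1 g h
  obtain ⟨y, hy, z, hz, rfl⟩ := Submodule.mem_sup.1 this
  have e : {q | ∃ x ∈ extra 2, q = rho (gen3 2) x} = Set.range fun k => rho (gen3 2) (exq k) := by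
    have e' : extra 2 = [exq 0, exq 1, exq 2, exq 3] := rfl
    ext q; simp [e', Fin.exists_fin_succ, eq_comm]
  rw [e, Submodule.mem_span_range_iff_exists_fun] at hz
  obtain ⟨c, rfl⟩ := hz
  refine ⟨c, ?_⟩
  rw [add_assoc, ← Finset.sum_add_distrib]
  refine add_mem hy (Submodule.sum_mem _ fun k _ => ?_)
  rw [← smul_add]
  refine Submodule.smul_mem _ _ ?_
  simp only [exq, rho_xor, nk_eq]
  exact swap4' (rho_w3 [k, 0] _ rfl rfl) (rho_w3 [k, 1] _ rfl rfl) (rho_w3 [k, 2] _ rfl rfl)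
    (rho_w3 [k, 3] _ rfl rfl)

theorem par3 {n : ℕ} (hn : n ≤ 2) (g : P4) : (pts3.map fun p => FF3 n p g).sum = 0 := by
  obtain ⟨h, hh, q, hq, rfl⟩ := gs3_span (n := n) (Or.inl rfl) g
  have e : ∀ p ∈ pts3, FF3 n p (h + q) = FF3 n p q := by
    intro p _
    have h2 : FF3 n p h = 0 := (F3_stab n _ _ _).HH hh
    rw [map_add, h2, zero_add]
  rw [List.map_congr_left e]
  clear e
  induction hq using Submodule.span_induction with
  | zero => simp
  | add x y _ _ hx hy => simp only [map_add, List.sum_map_add, hx, hy, add_zero]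
  | smul c x _ hx => simp only [map_smul, smul_eq_mul, List.sum_map_mul_left, hx, mul_zero]
  | mem x hx =>
    obtain ⟨i, hi, rfl⟩ := hx
    rw [List.map_congr_left (gs3_F (Or.inl rfl) i hi)]
    have h1 : i ∈ gs3 2 ++ gs3 0 := by
      rw [List.mem_append]
      interval_cases n
      · exact Or.inr hi
      · exact Or.inl (gs3_sub i hi)
      · exact Or.inl hi
    have h2 := Nat.eq_of_beq_eq_true (chk3_par i h1)
    have h3 : ((pts3.map fun p => (val3 p i : kk)).sum) = (((pts3.map fun p => val3 p i).sum : ℕ) : kk) := by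
      rw [Nat.cast_list_sum, List.map_map]; rfl
    rw [h3]
    exact (ZMod.natCast_eq_zero_iff _ 2).2 (Nat.dvd_of_mod_eq_zero h2)

def ZZ (Z : Fin 4 → (P4 →ₗ[kk] kk)) : P4 →ₗ[kk] kk := ∑ i, Z i ∘ₗ bet (Finset.univ.erase i)

theorem ZZ_apply (Z : Fin 4 → (P4 →ₗ[kk] kk)) (f : P4) : ZZ Z f = ∑ i, Z i (bet (Finset.univ.erase i) f) := by
  simp [ZZ]

theorem er_inj : ∀ i j : Fin 4, (Finset.univ.erase i : Finset (Fin 4)) = Finset.univ.erase j ↔ i = j := by decide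
theorem er_ne : ∀ i : Fin 4, (Finset.univ.erase i : Finset (Fin 4)) ≠ Finset.univ := by decide

theorem bet_e3 (i k : Fin 4) (q : P4) : bet (Finset.univ.erase i) (e3 k * q ^ 2) = if k = i then q else 0 := by
  rw [e3, bet_xx]; simp only [er_inj]

theorem er_sd : ∀ (I A : Finset (Fin 4)) (i : Fin 4), A ⊆ I → I \ A = Finset.univ.erase i →
    (I = Finset.univ ∧ A = {i}) ∨ (I = Finset.univ.erase i ∧ A = ∅) := by decide +kernel

theorem bet_sq3 (I : Finset (Fin 4)) (i : Fin 4) (q : P4) : bet (Finset.univ.erase i) (sqTotal (xx I * q ^ 2)) =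
    if I = Finset.univ then X i * sqTotal q else if I = Finset.univ.erase i then sqTotal q else 0 := by
  rw [bet_sq]
  split_ifs with h1 h2
  · subst h1
    rw [Finset.sum_eq_single {i}]
    · rw [if_pos (by ext; simp)]; simp [xx]
    · intro A hA hne
      refine if_neg fun h => ?_
      rcases er_sd _ _ _ (Finset.mem_powerset.1 hA) h with h | h
      · exact hne h.2
      · exact er_ne i h.1.symm
    · simp
  · subst h2
    rw [Finset.sum_eq_single ∅]
    · rw [if_pos (by simp)]; simp [xx]
    · intro A hA hne
      refine if_neg fun h => ?_
      rcases er_sd _ _ _ (Finset.mem_powerset.1 hA) h with h | h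
      · exact er_ne i h.1
      · exact hne h.2
    · simp
  · refine Finset.sum_eq_zero fun A hA => if_neg fun h => ?_
    rcases er_sd _ _ _ (Finset.mem_powerset.1 hA) h with h | h
    · exact h1 h.1
    · exact h2 h.1

theorem ZZ_stab {n n' : ℕ} {Z : Fin 4 → (P4 →ₗ[kk] kk)} (hZ : ∀ i, Stab n (Z i))
    (hk : ∀ y, ∑ i, Z i (X i * y) = 0) (hn : n' = 3 + 2 * n) : Stab n' (ZZ Z) where
  hc f := by
    subst hn
    simp only [ZZ_apply]
    refine Finset.sum_congr rfl fun i _ => ?_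
    have : (Finset.univ.erase i : Finset (Fin 4)).card = 3 := by revert i; decide
    have h2 := bet_hc (Finset.univ.erase i) n f
    rw [this] at h2
    rw [h2, (hZ i).hc]
  sq f := by
    induction f using xx_ind with
    | hadd f g hf hg => rw [map_add, map_add, hf, hg, map_add]
    | h I q =>
      simp only [ZZ_apply, bet_sq3, bet_xx]
      by_cases h : I = Finset.univ
      · subst h
        simp only [if_pos]
        rw [hk]
        refine (Finset.sum_eq_zero fun i _ => ?_).symm
        rw [if_neg (er_ne i).symm, map_zero]
      · simp only [if_neg h]
        refine Finset.sum_congr rfl fun i _ => ?_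
        split_ifs
        · exact (hZ i).sq q
        · rfl

theorem homog2 {f : P4} (hf : f ∈ homog 2) : f ∈ Submodule.span kk {q : P4 | ∃ k l, q = X k * X l} := by
  have hf' : f.IsHomogeneous 2 := hf
  rw [f.as_sum]
  refine Submodule.sum_mem _ fun a ha => ?_
  have hd : a.degree = 2 := by
    by_contra h
    exact (mem_support_iff.1 ha) (hf'.coeff_eq_zero h)
  obtain ⟨k, hk⟩ : ∃ k, a k ≠ 0 := by
    by_contra h; push Not at h
    have : a = 0 := Finsupp.ext h
    subst this; simp at hd
  obtain ⟨b, rfl⟩ : ∃ b, a = Finsupp.single k 1 + b :=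
    ⟨a - Finsupp.single k 1, (add_tsub_cancel_of_le (by rw [Finsupp.single_le_iff]; omega)).symm⟩
  have hb : b.degree = 1 := by
    rw [map_add, Finsupp.degree_single] at hd; omega
  obtain ⟨l, hl⟩ : ∃ k, b k ≠ 0 := by
    by_contra h; push Not at h
    have : b = 0 := Finsupp.ext h
    subst this; simp at hb
  obtain ⟨c, rfl⟩ : ∃ c, b = Finsupp.single l 1 + c :=
    ⟨b - Finsupp.single l 1, (add_tsub_cancel_of_le (by rw [Finsupp.single_le_iff]; omega)).symm⟩
  have hc : c = 0 := by
    rw [map_add, Finsupp.degree_single] at hb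
    rw [← Finsupp.degree_eq_zero_iff]; omega
  subst hc
  have e : (monomial (Finsupp.single k 1 + (Finsupp.single l 1 + 0))
      (coeff (Finsupp.single k 1 + (Finsupp.single l 1 + 0)) f)) =
      coeff (Finsupp.single k 1 + (Finsupp.single l 1 + 0)) f • (X k * X l : P4) := by
    rw [add_zero, X, X, monomial_mul, smul_monomial]; simp
  rw [e]
  exact Submodule.smul_mem _ _ (Submodule.subset_span ⟨k, l, rfl⟩)

def tv (v : Vec) : P4 →ₗ[kk] kk := F3 0 v 0 0
def tf (l : List Vec) : P4 →ₗ[kk] kk := (l.map tv).sum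

theorem tf_stab (l : List Vec) : Stab 3 (tf l) := by
  induction l with
  | nil => exact ⟨fun f => rfl, fun f => rfl⟩
  | cons a l ih => exact (F3_stab 0 a 0 0).add ih

theorem tf_X (l : List Vec) (a b c : Fin 4) : tf l (X a * X b * X c) = (l.map fun v => v a * v b * v c).sum := by
  induction l with
  | nil => rfl
  | cons v l ih =>
    rw [tf, List.map_cons, List.sum_cons, LinearMap.add_apply, ← tf, ih, List.map_cons, List.sum_cons, tv, F3_tail]

theorem tf_cond (Z : Fin 4 → List Vec)
    (h : ∀ k l, ∑ i, ((Z i).map fun v => v i * v k * v l).sum = 0) (y : P4) :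
    ∑ i, tf (Z i) (X i * y) = 0 := by
  have h1 : ∀ i, tf (Z i) (X i * y) = tf (Z i) (X i * hc 2 y) := by
    intro i
    rw [← (tf_stab (Z i)).hc (X i * y)]
    congr 1
    exact hc_pm (X_homog i) 2 y
  simp only [h1]
  have h2 := homog2 (hc_mem 2 y)
  generalize hc 2 y = z at h2
  induction h2 using Submodule.span_induction with
  | zero => simp
  | add x y _ _ hx hy => simp only [mul_add, map_add, Finset.sum_add_distrib, hx, hy, add_zero]
  | smul c x _ hx => simp only [mul_smul_comm, map_smul, ← Finset.smul_sum, hx, smul_zero]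
  | mem x hx =>
    obtain ⟨k, l, rfl⟩ := hx
    simp only [← mul_assoc, tf_X]
    exact h k l

def Ztab (i : Fin 4) : List Vec := ([[1], [1, 2, 3], [1, 2, 3, 4, 5, 6, 7], []].getD i.val []).map vec

theorem bet_g0 (i : Fin 4) : bet (Finset.univ.erase i) g0 = X i * X i * X i := by
  simp only [g0, w3, word, map_add, bet_e3]
  fin_cases i <;> simp

theorem g0_not : g0 ∉ HH 9 := by
  intro h
  have h1 : Stab 9 (ZZ fun i => tf (Ztab i)) :=
    ZZ_stab (n := 3) (fun i => tf_stab _) (tf_cond _ (by decide +kernel)) rfl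
  have h2 := h1.HH h
  simp only [ZZ_apply, bet_g0, tf_X] at h2
  revert h2
  decide +kernel

def Ytab (k i j : Fin 4) : List Vec :=
  (([[[], [], [], [1, 4, 5]], [[], [], [], [1, 2, 3, 4, 5, 6, 7]], [[], [], [], [4]],
    [[1, 4, 5], [1, 2, 3, 4, 5, 6, 7], [4], []]].getD (Equiv.swap k 3 i).val []).getD (Equiv.swap k 3 j).val []).map
      fun a l => vec a (Equiv.swap k 3 l)

theorem Ytab_sym : ∀ k i j, Ytab k i j = Ytab k j i := by decide +kernel

theorem YY_cond (Y : Fin 4 → Fin 4 → (P4 →ₗ[kk] kk)) (hs : ∀ i j, Y i j = Y j i)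
    (hd : ∀ q, ∑ i, Y i i (X i * q) = 0) (y : P4) : ∑ i, ZZ (Y i) (X i * y) = 0 := by
  induction y using xx_ind with
  | hadd f g hf hg => simp only [mul_add, map_add, Finset.sum_add_distrib, hf, hg, add_zero]
  | h A q =>
    by_cases hA : A = Finset.univ
    · subst hA
      rw [← hd q]
      refine Finset.sum_congr rfl fun i _ => ?_
      have : X i * (xx Finset.univ * q ^ 2) = e3 i * (X i * q) ^ 2 := by
        rw [e3, xx, xx, ← Finset.mul_prod_erase _ _ (Finset.mem_univ i)]; ring
      rw [this, ZZ_apply, Finset.sum_eq_single i]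
      · rw [bet_e3, if_pos rfl]
      · intro j _ hj; rw [bet_e3, if_neg hj.symm, map_zero]
      · simp
    · have h1 : ∀ i j, Y i j (bet (Finset.univ.erase j) (X i * (xx A * q ^ 2))) =
          if i ≠ j ∧ A = (Finset.univ.erase i).erase j then Y i j q else 0 := by
        intro i j
        by_cases hi : i ∈ A
        · have : X i * (xx A * q ^ 2) = xx (A.erase i) * (X i * q) ^ 2 := by
            rw [xx, xx, ← Finset.mul_prod_erase A _ hi]; ring
          rw [this, bet_xx, if_neg, if_neg, map_zero]
          · rintro ⟨_, rfl⟩; simp at hi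
          · intro h
            have : ∀ (A : Finset (Fin 4)) i j, i ∈ A → A.erase i = Finset.univ.erase j → A = Finset.univ := by
              decide +kernel
            exact hA (this A i j hi h)
        · have : X i * (xx A * q ^ 2) = xx (insert i A) * q ^ 2 := by
            rw [xx, xx, Finset.prod_insert hi]; ring
          rw [this, bet_xx]
          have : ∀ (A : Finset (Fin 4)) i j, i ∉ A → (insert i A = Finset.univ.erase j ↔
              (i ≠ j ∧ A = (Finset.univ.erase i).erase j)) := by decide +kernel
          simp only [this A i j hi]
          split_ifs <;> simp
      simp only [ZZ_apply, h1]
      have h2 : ∀ i j, (if i ≠ j ∧ A = (Finset.univ.erase i).erase j then Y i j q else 0) =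
          if j ≠ i ∧ A = (Finset.univ.erase j).erase i then Y j i q else 0 := by
        intro i j; rw [hs i j, Finset.erase_right_comm]; simp only [ne_comm]
      have h3 : ∀ f : Fin 4 → Fin 4 → kk, (∀ i j, f i j = f j i) → (∀ i, f i i = 0) → ∑ i, ∑ j, f i j = 0 := by
        intro f hf hf0
        have t : ∀ a : kk, a + a = 0 := by decide
        simp only [Fin.sum_univ_four, hf0, hf 1 0, hf 2 0, hf 3 0, hf 2 1, hf 3 1, hf 3 2]
        linear_combination t (f 0 1) + t (f 0 2) + t (f 0 3) + t (f 1 2) + t (f 1 3) + t (f 2 3)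
      refine h3 _ h2 fun i => ?_
      simp

theorem nk_not (k : Fin 4) : nk k ∉ HH 21 := by
  intro h
  have h1 : ∀ i, Stab 9 (ZZ fun j => tf (Ytab k i j)) := fun i =>
    ZZ_stab (n := 3) (fun j => tf_stab _) (tf_cond _ (by clear h; revert k i; decide +kernel)) rfl
  have h2 : Stab 21 (ZZ fun i => ZZ fun j => tf (Ytab k i j)) := by
    refine ZZ_stab h1 (YY_cond (fun i j => tf (Ytab k i j)) (fun i j => by rw [Ytab_sym]) ?_) rfl
    exact tf_cond (fun i => Ytab k i i) (by clear h h1; revert k; decide +kernel)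
  have h3 := h2.HH h
  rw [nk, ZZ_apply, Finset.sum_eq_single k] at h3
  · rw [bet_e3, if_pos rfl] at h3
    simp only [ZZ_apply, bet_g0, tf_X] at h3
    clear h h1 h2; revert h3; revert k
    decide +kernel
  · intro j _ hj; rw [bet_e3, if_neg hj.symm, map_zero]
  · simp

abbrev al : P4 →ₗ[kk] P4 := bet Finset.univ

theorem al_sq (f : P4) : al (sqTotal f) = sqTotal (al f) := by
  induction f using xx_ind with
  | hadd f g hf hg => simp only [map_add, hf, hg]
  | h I q =>
    rw [bet_sq, bet_xx]
    split_ifs with h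
    · subst h
      rw [Finset.sum_eq_single ∅]
      · simp [xx]
      · intro A _ hne
        refine if_neg fun h => hne ?_
        have : ∀ A : Finset (Fin 4), Finset.univ \ A = Finset.univ → A = ∅ := by decide
        exact this A h
      · simp
    · rw [map_zero]
      refine Finset.sum_eq_zero fun A _ => if_neg fun h' => h ?_
      exact Finset.eq_univ_of_forall fun x => (Finset.sdiff_subset (h' ▸ Finset.mem_univ x))

theorem al_hc (s : ℕ) (f : P4) : al (hc (nn (s + 1)) f) = hc (dd s) (al f) := by
  have := bet_hc Finset.univ (dd s) f
  rw [Finset.card_univ, Fintype.card_fin, ← nn_dd] at this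
  exact this

theorem al_HH {s : ℕ} {f : P4} (hf : f ∈ HH (nn (s + 1))) : al f ∈ HH (dd s) := by
  have h1 : hitSub (nn (s + 1)) ≤ (HH (dd s)).comap al := by
    apply HH_sub_of
    intro d hd g hg
    rw [Submodule.mem_comap, al_hc, HH_hc, al_sq]
    refine mem_of_add (sq_HH _ _) (HH_zero_hc ?_)
    rw [← al_hc, hc_of_homog_ne hg (by omega), map_zero]
  have h2 := h1 hf
  rwa [Submodule.mem_comap, al_hc, HH_hc] at h2

theorem al_edge (I : Fin 6) (q : P4) : al (e2 I * q ^ 2) = 0 := by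
  have h : (ed I).1 ≠ (ed I).2 := by revert I; decide
  rw [e2, ← xx_pair h, bet_xx, if_neg]
  intro h'
  have := congrArg Finset.card h'
  rw [Finset.card_pair h] at this
  simp at this

theorem al_B {s : ℕ} {b : P4} (hb : b ∈ B (s + 1)) : al b ∈ HH (dd s) := by
  have : B (s + 1) ≤ (HH (dd s)).comap al := by
    refine sup_le (fun f hf => al_HH hf) (Submodule.span_le.2 ?_)
    rintro _ ⟨L, k, hL, rfl⟩
    obtain ⟨a, l, rfl⟩ := List.exists_cons_of_ne_nil (l := L) (by rintro rfl; simp at hL)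
    change al (w2 (a :: l) k) ∈ HH (dd s)
    rw [w2, word, al_edge]; exact zero_mem _
  exact this hb

def lft (g : P4) : P4 := X 0 * X 1 * X 2 * X 3 * g ^ 2

theorem al_lft (g : P4) : al (lft g) = g := by
  rw [lft, ← xx_univ, bet_xx, if_pos rfl]

theorem lft_add (f g : P4) : lft (f + g) = lft f + lft g := by
  simp only [lft, sq_add2, mul_add]

theorem B_hc {s : ℕ} {f : P4} (hf : f ∈ B s) : hc (nn s) f ∈ B s := by
  refine mem_of_add (HH_le_B _ (HH_zero_hc ?_)) hf
  rw [map_add, hc_hc, add_self2]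

theorem lft_HH {s : ℕ} {g : P4} (hg : g ∈ HH (dd s)) : lft g ∈ B (s + 1) := by
  refine prefG (X4_homog 0 1 2 3) (B (s + 1)) (by rw [← nn_dd]; exact HH_le_B _) ?_
    (by rw [← nn_dd]; exact fun f hf => B_hc hf) hg
  intro g
  have := alpha_B s (sqTotal (lft g))
  change _ + _ * (al _) ^ 2 ∈ _ at this
  rw [al_sq, al_lft] at this
  exact this

theorem in_B {s : ℕ} {f : P4} (hf : al f ∈ HH (dd s)) : f ∈ B (s + 1) :=
  mem_of_add (alpha_B s f) (lft_HH hf)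

/-! transvections -/
def tau (i j : Fin 4) : Mat := Matrix.transvection i j 1

theorem tau_X (i j k : Fin 4) : substM (tau i j) (X k) = X k + if k = i then X j else 0 := by
  simp only [substM_X, tau, Matrix.transvection, Matrix.add_apply, add_smul, Finset.sum_add_distrib]
  congr 1
  · rw [Finset.sum_eq_single k]
    · simp
    · intro b _ hb; rw [Matrix.one_apply_ne hb.symm, zero_smul]
    · simp
  · rw [Finset.sum_eq_single j]
    · by_cases h : k = i
      · subst h; simp
      · simp [Matrix.single_apply, h, Ne.symm h]
    · intro b _ hb; simp [Matrix.single_apply, hb.symm]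
    · simp

theorem gl_ind {P : Mat → Prop} (h1 : P 1) (ht : ∀ i j, i ≠ j → P (tau i j))
    (hm : ∀ M N, P M → P N → P (M * N)) {M : Mat} (hM : IsUnit M) : P M := by
  have hd : M.det ≠ 0 := ((Matrix.isUnit_iff_isUnit_det M).1 hM).ne_zero
  refine Matrix.diagonal_transvection_induction_of_det_ne_zero P M hd ?_ ?_ fun A B _ _ hA hB => hm A B hA hB
  · intro D hD
    have : D = fun _ => 1 := by
      funext i
      rcases kk_cases (D i) with h | h
      · exfalso; apply hD
        rw [Matrix.det_diagonal]; exact Finset.prod_eq_zero (Finset.mem_univ i) h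
      · exact h
    subst this
    rw [Matrix.diagonal_one]; exact h1
  · rintro ⟨i, j, hij, c⟩
    rcases kk_cases c with rfl | rfl
    · simpa [Matrix.TransvectionStruct.toMatrix, Matrix.transvection_zero] using h1
    · exact ht i j hij

theorem xx_tau0 {i : Fin 4} (j : Fin 4) {A : Finset (Fin 4)} (h : i ∉ A) : substM (tau i j) (xx A) = xx A := by
  rw [xx, map_prod]
  refine Finset.prod_congr rfl fun k hk => ?_
  rw [tau_X, if_neg (by rintro rfl; exact h hk), add_zero]

theorem xx_tau {i : Fin 4} (j : Fin 4) {A : Finset (Fin 4)} (h : i ∈ A) :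
    substM (tau i j) (xx A) = xx A + X j * xx (A.erase i) := by
  have e : xx A = X i * xx (A.erase i) := by rw [xx, xx, Finset.mul_prod_erase A _ h]
  rw [e, map_mul, xx_tau0 j (Finset.notMem_erase i A), tau_X, if_pos rfl, add_mul]

theorem al_tau {i j : Fin 4} (hij : i ≠ j) (f : P4) : al (substM (tau i j) f) = substM (tau i j) (al f) := by
  induction f using xx_ind with
  | hadd f g hf hg => simp only [map_add, hf, hg]
  | h A q =>
    rw [map_mul, map_pow, bet_xx]
    by_cases hi : i ∈ A
    · rw [xx_tau j hi, add_mul, map_add, bet_xx]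
      have : al (X j * xx (A.erase i) * (substM (tau i j) q) ^ 2) = 0 := by
        by_cases hj : j ∈ A.erase i
        · have e : X j * xx (A.erase i) * (substM (tau i j) q) ^ 2 =
              xx ((A.erase i).erase j) * (X j * substM (tau i j) q) ^ 2 := by
            rw [xx, xx, ← Finset.mul_prod_erase _ _ hj]; ring
          rw [e, bet_xx, if_neg]
          intro h; have := Finset.mem_univ j; rw [← h] at this; simp at this
        · have e : X j * xx (A.erase i) = xx (insert j (A.erase i)) := by
            rw [xx, xx, Finset.prod_insert hj]
          rw [e, bet_xx, if_neg]
          intro h; have := Finset.mem_univ i; rw [← h] at this; simp [hij] at this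
      rw [this, add_zero]
      split_ifs <;> simp
    · rw [xx_tau0 j hi, bet_xx]
      split_ifs <;> simp

theorem al_gl {M : Mat} (hM : IsUnit M) : ∀ f, al (substM M f) = substM M (al f) := by
  refine gl_ind (P := fun M => ∀ f, al (substM M f) = substM M (al f)) ?_ ?_ ?_ hM
  · intro f; rw [substM_one, substM_one]
  · intro i j hij f; exact al_tau hij f
  · intro M N h h' f
    rw [← substM_comp, h', h, substM_comp]

/-! matrices from columns -/
def colM (v w u d : Vec) : Mat := Matrix.of fun r => ![v r, w r, u r, d r]

theorem kneg (a : kk) : -a = a := by revert a; decide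

theorem det_col (v w u d : Vec) : (colM v w u d).det = ∑ r, d r * lam v w u r := by
  rw [Matrix.det_succ_row_zero]
  simp only [Fin.sum_univ_four, lam, tr, colM]
  simp [Matrix.det_fin_three, Fin.succAbove, Matrix.submatrix_apply]
  simp only [sub_eq_add_neg, kneg]
  ring

theorem mul_col (M : Mat) (v w u d : Vec) :
    M * colM v w u d = colM (M.mulVec v) (M.mulVec w) (M.mulVec u) (M.mulVec d) := by
  ext i j
  fin_cases j <;> simp [colM, Matrix.mul_apply, Matrix.mulVec, dotProduct]

theorem lam_v (v w u : Vec) : ∑ i, lam v w u i * v i = 0 := by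
  have h := det_col v w u v
  rw [Matrix.det_zero_of_column_eq (i := 0) (j := 3) (by decide) (by intro k; simp [colM])] at h
  rw [h]; exact Finset.sum_congr rfl fun i _ => mul_comm _ _

theorem lam_M {M : Mat} (hM : IsUnit M) {v w u : Vec} (h : lam v w u ≠ 0) :
    lam (M.mulVec v) (M.mulVec w) (M.mulVec u) ≠ 0 := by
  intro h0
  obtain ⟨i, hi⟩ := Function.ne_iff.1 h
  have h1 : (colM v w u (Pi.single i 1)).det ≠ 0 := by
    rw [det_col, Finset.sum_eq_single i]
    · simpa using hi
    · intro b _ hb; simp [hb]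
    · simp
  have h2 := congrArg Matrix.det (mul_col M v w u (Pi.single i 1))
  rw [Matrix.det_mul, det_col (M.mulVec v) (M.mulVec w) (M.mulVec u), h0] at h2
  have h3 : M.det ≠ 0 := ((Matrix.isUnit_iff_isUnit_det M).1 hM).ne_zero
  simp at h2
  rcases h2 with h2 | h2
  · exact h3 h2
  · exact h1 h2

theorem ex_gl {v w u : Vec} (h : lam v w u ≠ 0) : ∃ M : Mat, IsUnit M ∧ M.mulVec (Pi.single 0 1) = v ∧
    M.mulVec (Pi.single 1 1) = w ∧ M.mulVec (Pi.single 2 1) = u := by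
  obtain ⟨i, hi⟩ := Function.ne_iff.1 h
  refine ⟨colM v w u (Pi.single i 1), ?_, ?_, ?_, ?_⟩
  · rw [Matrix.isUnit_iff_isUnit_det, det_col, Finset.sum_eq_single i]
    · rcases kk_cases (lam v w u i) with h' | h'
      · exact absurd h' hi
      · rw [h']; simp
    · intro b _ hb; simp [hb]
    · simp
  all_goals
    rw [Matrix.mulVec_single_one]; ext r; simp [colM, Matrix.col]

theorem ex_vec : ∀ v : Vec, ∃ a : Fin 16, v = vec a := by decide +kernel

theorem flag_ok : ∀ l a : Fin 16, l.val ≠ 0 → a.val ≠ 0 → (∑ i, vec l i * vec a i) = 0 →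
    pts3.any (fun p => Nat.beq p.1 l && Nat.beq p.2.1 a) = true := by decide +kernel

theorem pts3_ne : ∀ p ∈ pts3, lam (vec p.2.1) (vec p.2.2.1) (vec p.2.2.2) ≠ 0 := by decide +kernel

theorem F3_eq (n : ℕ) {v w u w' u' : Vec} (h : lam v w u = lam v w' u') (f : P4) :
    F3 n v w u f = F3 n v w' u' f := by
  have h1 := B3_all n f
  obtain ⟨y, hy, z, hz, rfl⟩ := Submodule.mem_sup.1 h1
  rw [map_add, map_add, (F3_stab n _ _ _).HH hy, (F3_stab n _ _ _).HH hy, zero_add, zero_add]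
  induction hz using Submodule.span_induction with
  | zero => simp
  | add x y _ _ hx hy => 
    simp only [map_add, hx (B3_all _ _), hy (B3_all _ _)]
  | smul c x _ hx => simp only [map_smul, hx (B3_all _ _)]
  | mem x hx =>
    obtain ⟨L, t, rfl, rfl⟩ := hx
    rw [F3_word, F3_word, h]

theorem F3_flag {n : ℕ} {f : P4} {c : kk} (h : ∀ p ∈ pts3, FF3 n p f = c) {v w u : Vec} (hl : lam v w u ≠ 0) :
    F3 n v w u f = c := by
  obtain ⟨a, rfl⟩ := ex_vec v
  obtain ⟨l, hl'⟩ := ex_vec (lam (vec a) w u)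
  have h1 := lam_v (vec a) w u
  have h2 : l.val ≠ 0 := by
    intro h0; rw [h0] at hl'; apply hl; rw [hl']; ext i; simp [vec, bk]
  have h3 : a.val ≠ 0 := by
    intro h0; apply hl; rw [h0]; ext i; simp [vec, bk, lam]
  rw [hl'] at h1
  have h4 := flag_ok l a h2 h3 h1
  rw [List.any_eq_true] at h4
  obtain ⟨⟨l', a', b', c'⟩, hp, h5⟩ := h4
  simp only [Bool.and_eq_true, Nat.beq_eq] at h5
  obtain ⟨rfl, rfl⟩ := h5
  rw [← h _ hp]
  refine F3_eq n ?_ f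
  rw [hl']; ext e
  exact (pts3_lam _ hp e).symm

theorem ex_third : ∀ a b : Fin 16, a.val ≠ 0 → b.val ≠ 0 → a ≠ b → ∃ c : Fin 16, ∃ i,
    lam (vec a) (vec b) (vec c) i ≠ 0 := by decide +kernel

def Ind (v w : Vec) : Prop := ∃ u, lam v w u ≠ 0

theorem pts2_ok : ∀ p ∈ pts2, p.2.1 < 16 ∧ p.2.2 < 16 ∧ p.2.1 ≠ 0 ∧ p.2.2 ≠ 0 ∧ p.2.1 ≠ p.2.2 := by
  decide +kernel

theorem pts2_cov : ∀ a b : Fin 16, a.val ≠ 0 → b.val ≠ 0 → a ≠ b → ∃ p ∈ pts2, (p.1, p.2.2, p.2.1) ∈ pts2 ∧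
    ((a.val = p.2.1 ∧ b.val = p.2.2) ∨ (a.val = p.2.1 ∧ b.val = p.2.1 ^^^ p.2.2) ∨
     (a.val = p.2.1 ^^^ p.2.2 ∧ b.val = p.2.2)) := by
  decide +kernel

theorem Ind_pts2 {p : Pt2} (hp : p ∈ pts2) : Ind (vec p.2.1) (vec p.2.2) := by
  obtain ⟨h1, h2, h3, h4, h5⟩ := pts2_ok p hp
  obtain ⟨c, i, h⟩ := ex_third ⟨p.2.1, h1⟩ ⟨p.2.2, h2⟩ h3 h4 (by simpa using h5)
  exact ⟨vec c, fun h0 => h (by rw [h0]; rfl)⟩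

theorem vec_xor (a b : ℕ) : vec (a ^^^ b) = vec a + vec b := by
  funext i
  simp only [vec, Pi.add_apply, Nat.testBit_xor]
  exact bk_xor _ _

theorem vec_zero : vec 0 = 0 := by
  funext i; simp [vec, bk]

theorem Ind_ne {v w : Vec} (h : Ind v w) : v ≠ 0 ∧ w ≠ 0 ∧ v ≠ w := by
  obtain ⟨u, hu⟩ := h
  refine ⟨?_, ?_, ?_⟩
  · rintro rfl; apply hu; funext i; simp [lam]
  · rintro rfl; apply hu; funext i; simp [lam]
  · rintro rfl; apply hu; funext i; simp only [lam, Pi.zero_apply]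
    generalize v (tr i).1 = a; generalize v (tr i).2.1 = b; generalize v (tr i).2.2 = c
    generalize u (tr i).1 = a'; generalize u (tr i).2.1 = b'; generalize u (tr i).2.2 = c'
    revert a b c a' b' c'; decide

theorem F2_Ind {s : ℕ} {f : P4} (h : ∀ p ∈ pts2, FF2 s p f = 0) {v w : Vec} (hi : Ind v w) :
    F2 s v w f = 0 := by
  obtain ⟨a, rfl⟩ := ex_vec v
  obtain ⟨b, rfl⟩ := ex_vec w
  obtain ⟨h1, h2, h3⟩ := Ind_ne hi
  obtain ⟨p, hp, hp', h4⟩ := pts2_cov a b (fun h => h1 (by rw [h, vec_zero]))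
    (fun h => h2 (by rw [h, vec_zero])) (fun h => h3 (by rw [h]))
  have e1 := h p hp
  have e2 := h _ hp'
  simp only [FF2] at e1 e2
  rcases h4 with ⟨ha, hb⟩ | ⟨ha, hb⟩ | ⟨ha, hb⟩
  · rw [ha, hb, e1]
  · rw [ha, hb, vec_xor, F2_shear, e1]
  · rw [ha, hb, vec_xor, F2_add, e1, e2, add_zero]

def IsInv (n : ℕ) (f : P4) : Prop := ∀ M : Mat, IsUnit M → substM M f + f ∈ HH n

abbrev E0 : Vec := Pi.single 0 1
abbrev E1 : Vec := Pi.single 1 1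
abbrev E2 : Vec := Pi.single 2 1

theorem kk_eq {a b : kk} (h : a + b = 0) : a = b := by
  revert a b; decide

theorem inv2 {s : ℕ} {f : P4} (hf : IsInv (nn s) f) {v w : Vec} (hi : Ind v w) : F2 s v w f = 0 := by
  have key : ∀ {v w : Vec}, Ind v w → F2 s v w f = F2 s E0 E1 f := by
    rintro v w ⟨u, hu⟩
    obtain ⟨M, hM, h0, h1, -⟩ := ex_gl hu
    have := (F2_stab s E0 E1).HH (hf M hM)
    rw [map_add, F2_subst, h0, h1] at this
    exact kk_eq this
  have a1 : Ind (E0 + E1) E1 := ⟨E2, fun h => absurd (congrFun h 3) (by simp [lam, tr])⟩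
  have a2 : Ind E1 E0 := ⟨E2, fun h => absurd (congrFun h 3) (by simp [lam, tr])⟩
  have := F2_add s E0 E1 f
  rw [key a1, key a2] at this
  rw [key hi]
  revert this; generalize F2 s E0 E1 f = x; revert x; decide

theorem B_of {s : ℕ} {f : P4} (h : al f ∈ HH (dd s)) (h2 : ∀ v w, Ind v w → F2 (s + 1) v w f = 0) :
    f ∈ HH (nn (s + 1)) :=
  D2 (by omega) f (in_B h) fun _ hp => h2 _ _ (Ind_pts2 hp)

theorem iv_final {s : ℕ} {f : P4} (hf : IsInv (nn (s + 1)) f) (h : al f ∈ HH (dd s)) :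
    f ∈ HH (nn (s + 1)) := B_of h fun _ _ hi => inv2 hf hi

theorem al_inv {s : ℕ} {f : P4} (hf : IsInv (nn (s + 1)) f) : IsInv (dd s) (al f) := by
  intro M hM
  rw [← al_gl hM, ← map_add]
  exact al_HH (hf M hM)

theorem inv3 {m : ℕ} {g : P4} (hg : IsInv (dd (m + 1)) g) :
    ∀ p ∈ pts3, FF3 m p g = F3 m E0 E1 E2 g := by
  intro p hp
  obtain ⟨M, hM, h0, h1, h2⟩ := ex_gl (pts3_ne p hp)
  have := (F3_stab m E0 E1 E2).HH (hg M hM)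
  rw [map_add, F3_subst, h0, h1, h2] at this
  exact kk_eq this

theorem inv3_small {m : ℕ} (hm : m ≤ 2) {g : P4} (hg : IsInv (dd (m + 1)) g) :
    ∀ p ∈ pts3, FF3 m p g = 0 := by
  have h := par3 hm g
  rw [List.map_congr_left (inv3 hg), List.map_const'] at h
  have hl : pts3.length = 105 := by decide +kernel
  rw [hl, List.sum_replicate] at h
  intro p hp
  rw [inv3 hg p hp]
  have h5 : ((105 : ℕ) : kk) = 1 := by decide
  rwa [nsmul_eq_mul, h5, one_mul] at h

theorem iv_add {n : ℕ} {f g : P4} (hf : IsInv n f) (hg : IsInv n g) (c : kk) : IsInv n (f + c • g) := by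
  intro M hM
  have : substM M (f + c • g) + (f + c • g) = (substM M f + f) + c • (substM M g + g) := by
    rw [map_add, map_smul, smul_add]; abel
  rw [this]
  exact add_mem (hf M hM) (Submodule.smul_mem _ _ (hg M hM))

theorem iv_hc {n : ℕ} {f : P4} (hf : IsInv n f) : IsInv n (hc n f) := by
  intro M hM
  rw [← substM_hc, ← map_add, HH_hc]; exact hf M hM

theorem iv_exists {t : ℕ} (ht : 2 ≤ t) {g : P4} (hg : IsInv (dd t) g) :
    ∃ f ∈ homog (nn (t + 1)), IsInv (nn (t + 1)) f ∧ al f + g ∈ HH (dd t) := by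
  obtain ⟨b, hb, hF⟩ := surj2 (s := t + 1) (by omega) (fun p => FF2 (t + 1) p (lft g))
  have h1 : ∀ v w, Ind v w → F2 (t + 1) v w (lft g + b) = 0 := by
    intro v w hi
    refine F2_Ind (fun p hp => ?_) hi
    rw [map_add, hF p hp]; generalize FF2 (t + 1) p (lft g) = x; revert x; decide
  have h2 : al (lft g + b) + g ∈ HH (dd t) := by
    rw [map_add, al_lft]
    have : g + al b + g = (g + g) + al b := by abel
    rw [this, add_self2, zero_add]; exact al_B hb
  refine ⟨hc (nn (t + 1)) (lft g + b), hc_mem _ _, iv_hc ?_, ?_⟩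
  · intro M hM
    refine B_of ?_ ?_
    · rw [map_add, al_gl hM]
      have : substM M (al (lft g + b)) + al (lft g + b) =
        substM M (al (lft g + b) + g) + (al (lft g + b) + g) + (substM M g + g) := by
        rw [map_add (substM M)]
        have := add_self2 g
        have := add_self2 (substM M g)
        linear_combination (-1 : P4) * add_self2 g - add_self2 (substM M g)
      rw [this]
      exact add_mem (add_mem (substM_HH M h2) h2) (hg M hM)
    · intro v w hi
      rw [map_add, F2_subst, h1 v w hi, add_zero]
      obtain ⟨u, hu⟩ := hi
      exact h1 _ _ ⟨_, lam_M hM hu⟩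
  · rw [al_hc, ← HH_hc, map_add, hc_hc, ← map_add, HH_hc]; exact h2

theorem iv_unique {t : ℕ} {g f0 f : P4} (h0 : IsInv (nn (t + 1)) f0) (ha : al f0 + g ∈ HH (dd t))
    (hf : IsInv (nn (t + 1)) f) {c : kk} (hc' : al f + c • g ∈ HH (dd t)) :
    f + c • f0 ∈ HH (nn (t + 1)) := by
  refine iv_final (iv_add hf h0 c) ?_
  rw [map_add, map_smul]
  have : al f + c • al f0 = (al f + c • g) + c • (al f0 + g) := by
    rw [smul_add]
    linear_combination - add_self2 (c • g)
  rw [this]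
  exact add_mem hc' (Submodule.smul_mem _ _ ha)

theorem gl_of_tau {n : ℕ} {g : P4} (h : ∀ i j, i ≠ j → substM (tau i j) g + g ∈ HH n) : IsInv n g := by
  intro M hM
  refine gl_ind (P := fun M => substM M g + g ∈ HH n) ?_ h ?_ hM
  · simp only [substM_one, add_self2]; exact zero_mem _
  · intro M N h1 h2
    have : substM (M * N) g + g = substM N (substM M g + g) + (substM N g + g) := by
      rw [map_add, substM_comp]; linear_combination - add_self2 (substM N g)
    simp only [this]
    exact add_mem (substM_HH _ h1) h2

theorem Ind_of {v w : Vec} (h1 : v ≠ 0) (h2 : w ≠ 0) (h3 : v ≠ w) : Ind v w := by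
  obtain ⟨a, rfl⟩ := ex_vec v
  obtain ⟨b, rfl⟩ := ex_vec w
  obtain ⟨c, i, h⟩ := ex_third a b (fun h => h1 (by rw [h, vec_zero]))
    (fun h => h2 (by rw [h, vec_zero])) (fun h => h3 (by rw [h]))
  exact ⟨vec c, fun h0 => h (by rw [h0]; rfl)⟩

theorem F2_zero (s : ℕ) (w : Vec) (f : P4) : F2 s 0 w f = 0 := by
  have h1 := F2_shear s w 0 f
  have h2 := F2_add s 0 w f
  rw [add_zero] at h1
  rw [zero_add, h1] at h2
  revert h2; generalize F2 s 0 w f = x; generalize F2 s w 0 f = y; revert x y; decide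

abbrev V3 (t : kk × kk × kk) : Vec := ![0, t.1, t.2.1, t.2.2]

theorem F2_top (t : kk × kk × kk) : F2 1 (V3 t) E0 (lft 1) = t.1 * t.2.1 * t.2.2 := by
  obtain ⟨a, b, c⟩ := t
  have h : substM (N2 (V3 (a, b, c)) E0) (lft 1) = (a * b * c) • (xx {0, 1} * (xx {0} * 1 ^ 2) ^ 2) := by
    rw [lft, map_mul, map_mul, map_mul, map_mul, substN2, substN2, substN2, substN2]
    simp [xx, V3, smul_eq_C_mul]
    ring
  simp only [F2, LinearMap.comp_apply, AlgHom.toLinearMap_apply, c2, h]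
  rw [map_smul, bet_xx, if_pos rfl, map_smul, bet_xx, if_pos rfl, map_smul]
  simp [c0]

theorem F2_low : ∀ (I : Fin 6) (k : Fin 4),
    ∑ t : kk × kk × kk, pl (V3 t) E0 I * V3 t k = 0 := by decide +kernel

theorem case_one {f : P4} (hf : IsInv (nn 1) f) : f ∈ HH (nn 1) := by
  set f' := hc (nn 1) f with hf'
  have h1 : IsInv (nn 1) f' := iv_hc hf
  rw [← HH_hc, ← hf']
  have ha : al f' = hc 0 (al f) := al_hc 0 f
  rw [hc, homogeneousComponent_zero] at ha
  rcases kk_cases (coeff 0 (al f)) with h0 | h0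
  · refine iv_final h1 ?_
    rw [ha, h0, C_0]; exact zero_mem _
  · exfalso
    rw [h0, C_1] at ha
    have hb : f' + lft 1 ∈ B 1 := by have := alpha_B 0 f'; rwa [ha] at this
    have key : ∀ b ∈ B 1, ∑ t : kk × kk × kk, F2 1 (V3 t) E0 b = 0 := by
      intro b hb
      let φ : P4 →ₗ[kk] kk := ∑ t : kk × kk × kk, F2 1 (V3 t) E0
      have hφ : ∀ x, φ x = ∑ t : kk × kk × kk, F2 1 (V3 t) E0 x := fun x => by
        simp only [φ, LinearMap.sum_apply]
      rw [← hφ]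
      have : B 1 ≤ LinearMap.ker φ := by
        refine sup_le (fun x hx => ?_) (Submodule.span_le.2 ?_)
        · rw [LinearMap.mem_ker, hφ]
          exact Finset.sum_eq_zero fun t _ => (F2_stab 1 _ _).HH hx
        · rintro _ ⟨L, k, hL, rfl⟩
          change φ _ = 0
          rw [hφ]
          obtain ⟨I, rfl⟩ := List.length_eq_one_iff.1 hL
          have hw : ∀ t : kk × kk × kk, F2 1 (V3 t) E0 (w2 [I] k) = pl (V3 t) E0 I * V3 t k := fun t => by
            have := F2_word (V3 t) E0 [I] k
            simpa using this
          rw [Finset.sum_congr rfl fun t _ => hw t]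
          exact F2_low I k
      exact this hb
    have h2 := key _ hb
    simp only [map_add, F2_top] at h2
    have h3 : ∀ t : kk × kk × kk, F2 1 (V3 t) E0 f' = 0 := by
      intro t
      by_cases h : V3 t = 0
      · rw [h, F2_zero]
      · refine inv2 h1 (Ind_of h (fun h => ?_) (fun h => ?_))
        · have := congrFun h 0; simp at this
        · have := congrFun h 0; simp at this
    simp only [h3, zero_add] at h2
    revert h2; decide +kernel

theorem ex_fourth : ∀ p q k : Fin 4, p ≠ q → ¬k = q → ¬k = p →
    ∃ l, k ≠ p ∧ k ≠ q ∧ k ≠ l ∧ p ≠ q ∧ p ≠ l ∧ q ≠ l := by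
  intro p q k h1 h2 h3
  have : ∀ p q k : Fin 4, ∃ l, k ≠ l ∧ p ≠ l ∧ q ≠ l := by decide
  obtain ⟨l, a, b, c⟩ := this p q k
  exact ⟨l, h3, h2, a, h1, b, c⟩

theorem te3 {p q : Fin 4} (h : p ≠ q) (k : Fin 4) : ∃ l, substM (tau p q) (e3 k) =
    e3 k + if k = q then e3 p else if k = p then 0 else X l * X q ^ 2 := by
  by_cases h1 : k = q
  · subst h1
    obtain ⟨b, c, hb⟩ : ∃ b c, p ≠ k ∧ p ≠ b ∧ p ≠ c ∧ k ≠ b ∧ k ≠ c ∧ b ≠ c := by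
      revert p k; decide
    refine ⟨0, ?_⟩
    rw [if_pos rfl, e3_of hb, e3_of (p := k) (q := p) (b := b) (c := c) (by tauto)]
    rw [map_mul, map_mul, tau_X, tau_X, tau_X, if_pos rfl, if_neg (by tauto), if_neg (by tauto)]
    ring
  · by_cases h2 : k = p
    · subst h2
      obtain ⟨b, c, hb⟩ : ∃ b c, k ≠ q ∧ k ≠ b ∧ k ≠ c ∧ q ≠ b ∧ q ≠ c ∧ b ≠ c := by
        revert k q; decide
      refine ⟨0, ?_⟩
      rw [if_neg h, if_pos rfl, e3_of hb, map_mul, map_mul, tau_X, tau_X, tau_X, if_neg (by tauto),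
        if_neg (by tauto), if_neg (by tauto)]
      ring
    · obtain ⟨l, hb⟩ : ∃ l, k ≠ p ∧ k ≠ q ∧ k ≠ l ∧ p ≠ q ∧ p ≠ l ∧ q ≠ l := by
        exact ex_fourth p q k h h1 h2
      refine ⟨l, ?_⟩
      rw [if_neg h1, if_neg h2, e3_of hb, map_mul, map_mul, tau_X, tau_X, tau_X, if_pos rfl, if_neg (by tauto),
        if_neg (by tauto)]
      ring

theorem g0_sum : g0 = ∑ k, e3 k * (X k ^ 3) ^ 2 := by
  simp only [g0, w3, word, Fin.sum_univ_four]
  ring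

theorem g0_tau {p q : Fin 4} (h : p ≠ q) : substM (tau p q) g0 + g0 ∈ HH (dd 2) := by
  have key : ∀ k, (substM (tau p q) (e3 k * (X k ^ 3) ^ 2) + e3 k * (X k ^ 3) ^ 2) +
      (if k = p ∨ k = q then e3 p * (X q ^ 3) ^ 2 else 0) ∈ HH (dd 2) := by
    intro k
    obtain ⟨l, hl⟩ := te3 h k
    rw [map_mul, hl, map_pow, map_pow, tau_X]
    by_cases h1 : k = q
    · subst h1
      rw [if_pos rfl, if_neg h.symm, if_pos (Or.inr rfl)]
      convert zero_mem (HH (dd 2)) using 1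
      linear_combination add_self2 (e3 k * (X k ^ 3) ^ 2) + add_self2 (e3 p * (X k ^ 3) ^ 2)
    · rw [if_neg h1]
      by_cases h2 : k = p
      · subst h2
        rw [if_pos rfl, if_pos rfl, if_pos (Or.inl rfl)]
        have h3 := pref3' (r := 0) k (rel2 (n := dd 1) (by decide) k q 1)
        convert h3 using 1
        have e : (X k + X q : P4) ^ 3 = X k ^ 3 + (X q * (X k * 1) ^ 2 + X k * (X q * 1) ^ 2) + X q ^ 3 := by
          linear_combination add_self2 (X k ^ 2 * X q + X k * X q ^ 2)
        rw [e, sq_add2, sq_add2]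
        linear_combination add_self2 (e3 k * (X k ^ 3) ^ 2) + add_self2 (e3 k * (X q ^ 3) ^ 2)
      · rw [if_neg h2, if_neg h2, if_neg (by tauto)]
        convert T0 0 l (X q * X k ^ 3) using 1
        linear_combination add_self2 (e3 k * (X k ^ 3) ^ 2)
  have h2 := Submodule.sum_mem (HH (dd 2)) (fun k (_ : k ∈ Finset.univ) => key k)
  rw [Finset.sum_add_distrib, Finset.sum_add_distrib, ← map_sum, ← g0_sum] at h2
  have h3 : ∑ k, (if k = p ∨ k = q then e3 p * (X q ^ 3) ^ 2 else 0) = (0 : P4) := by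
    rw [← Finset.sum_filter, Finset.sum_const]
    have : (Finset.univ.filter fun k => k = p ∨ k = q).card = 2 := by
      clear * - h
      revert p q; decide
    rw [this, two_nsmul, add_self2]
  rwa [h3, add_zero] at h2

theorem nk_tau {p q : Fin 4} (h : p ≠ q) (k : Fin 4) :
    substM (tau p q) (nk k) + nk k + (if k = q then nk p else 0) ∈ HH (dd 3) := by
  obtain ⟨l, hl⟩ := te3 h k
  have h0 := g0_tau h
  have e : substM (tau p q) g0 = g0 + (substM (tau p q) g0 + g0) := by
    linear_combination - add_self2 g0
  rw [nk, map_mul, map_pow, hl, e]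
  generalize substM (tau p q) g0 + g0 = z at h0
  have a := pref3' (r := 1) k h0
  rw [sq_add2]
  by_cases h1 : k = q
  · rw [if_pos h1, if_pos h1, nk]
    convert add_mem a (pref3' (r := 1) p h0) using 1
    linear_combination add_self2 (e3 k * g0 ^ 2) + add_self2 (e3 p * g0 ^ 2)
  · rw [if_neg h1, if_neg h1]
    by_cases h2 : k = p
    · rw [if_pos h2]
      convert a using 1
      linear_combination add_self2 (e3 k * g0 ^ 2)
    · rw [if_neg h2]
      convert add_mem a (T0 1 l (X q * (g0 + z))) using 1
      rw [mul_pow, sq_add2]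
      linear_combination add_self2 (e3 k * g0 ^ 2)

theorem nk_inv {c : Fin 4 → kk} (h : IsInv (dd 3) (∑ k, c k • nk k)) : c = 0 := by
  funext q
  obtain ⟨p, hp⟩ : ∃ p, p ≠ q := by revert q; decide
  have hu : IsUnit (tau p q) := by
    rw [Matrix.isUnit_iff_isUnit_det, tau, Matrix.det_transvection_of_ne _ _ hp]; exact isUnit_one
  have h1 := h _ hu
  have h2 := Submodule.sum_mem (HH (dd 3)) (fun k (_ : k ∈ Finset.univ) =>
    Submodule.smul_mem _ (c k) (nk_tau hp k))
  simp only [smul_add, Finset.sum_add_distrib] at h2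
  rw [map_sum] at h1
  simp only [map_smul] at h1
  have h3 := (Submodule.add_mem_iff_right _ h1).1 h2
  simp at h3
  rcases kk_cases (c q) with h0 | h0
  · simpa using h0
  · rw [h0, one_smul] at h3; exact absurd h3 (nk_not p)

theorem iv_congr {n : ℕ} {f g : P4} (hf : IsInv n f) (h : f + g ∈ HH n) : IsInv n g := by
  intro M hM
  convert add_mem (hf M hM) (add_mem (substM_HH M h) h) using 1
  rw [map_add]
  linear_combination - add_self2 f - add_self2 (substM M f)

theorem case_two {g : P4} (hg : IsInv (dd 1) g) : g ∈ HH (dd 1) :=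
  D3_0 (inv3_small (m := 0) (by omega) hg)

theorem case_four {g : P4} (hg : IsInv (dd 3) g) : g ∈ HH (dd 3) := by
  obtain ⟨c, hc'⟩ := D3_2 (inv3_small (m := 2) (by omega) hg)
  have := nk_inv (iv_congr hg hc')
  subst this
  rw [show g = g + ∑ k, (0 : Fin 4 → kk) k • nk k by simp]
  exact hc'

def Good (t : ℕ) : Prop := ∃ g, IsInv (dd t) g ∧ g ∉ HH (dd t) ∧
  ∀ f, IsInv (dd t) f → ∃ c : kk, f + c • g ∈ HH (dd t)

theorem good_two : Good 2 :=
  ⟨g0, gl_of_tau fun _ _ h => g0_tau h, g0_not, fun _ hf => D3_1 (inv3_small (m := 1) (by omega) hf)⟩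

theorem good_big {m : ℕ} (hm : 3 ≤ m) : Good (m + 1) := by
  obtain ⟨g, hg⟩ := surj3 hm (fun _ => 1)
  have h1 : ∀ {v w u : Vec}, lam v w u ≠ 0 → F3 m v w u g = 1 := fun h => F3_flag hg h
  refine ⟨g, ?_, ?_, ?_⟩
  · intro M hM
    refine D3_big hm fun p hp => ?_
    rw [map_add, FF3, F3_subst, h1 (lam_M hM (pts3_ne p hp)), h1 (pts3_ne p hp)]; decide
  · intro h
    have h2 : lam E0 E1 E2 ≠ 0 := fun h => absurd (congrFun h 3) (by simp [lam, tr])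
    have := (F3_stab m E0 E1 E2).HH h
    rw [h1 h2] at this
    exact one_ne_zero this
  · intro f hf
    refine ⟨F3 m E0 E1 E2 f, D3_big hm fun p hp => ?_⟩
    rw [map_add, map_smul, inv3 hf p hp, hg p hp, smul_eq_mul, mul_one]
    generalize F3 m E0 E1 E2 f = x; revert x; decide

theorem Qmk_zero {n : ℕ} {f : P4} : Qmk n f = 0 ↔ f ∈ HH n := by
  rw [mem_HH, Qmk, LinearMap.comp_apply, Submodule.mkQ_apply, Submodule.Quotient.mk_eq_zero]
  rfl

theorem mem_inv {n : ℕ} {f : P4} : f ∈ invPre n glSet ↔ f ∈ homog n ∧ IsInv n f := by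
  rw [invPre, Submodule.mem_inf]
  refine and_congr_right fun hf => ?_
  simp only [Submodule.mem_iInf, Submodule.mem_comap, LinearMap.sub_apply, AlgHom.toLinearMap_apply,
    LinearMap.id_apply, sub2, IsInv]
  refine forall_congr' fun M => forall_congr' fun _ => ?_
  exact ⟨HH_of_hit, hit_of_HH (add_mem (substM_homog M hf) hf)⟩

theorem rank0 {n : ℕ} (h : ∀ f, IsInv n f → f ∈ HH n) : Module.finrank kk ↥(QInv n glSet) = 0 := by
  have : QInv n glSet = ⊥ := by
    rw [eq_bot_iff]
    rintro _ ⟨f, hf, rfl⟩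
    exact Qmk_zero.2 (h f (mem_inv.1 hf).2)
  rw [this]; exact finrank_bot _ _

theorem rank1 {n : ℕ} {f0 : P4} (hh : f0 ∈ homog n) (hi : IsInv n f0) (hn : f0 ∉ HH n)
    (h : ∀ f, IsInv n f → ∃ c : kk, f + c • f0 ∈ HH n) : Module.finrank kk ↥(QInv n glSet) = 1 := by
  have : QInv n glSet = Submodule.span kk {Qmk n f0} := by
    apply le_antisymm
    · rintro _ ⟨f, hf, rfl⟩
      obtain ⟨c, hc'⟩ := h f (mem_inv.1 hf).2
      have h1 := Qmk_zero.2 hc'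
      rw [map_add, map_smul] at h1
      rw [eq_neg_of_add_eq_zero_left h1]
      exact neg_mem (Submodule.smul_mem _ _ (Submodule.mem_span_singleton_self _))
    · rw [Submodule.span_singleton_le_iff_mem]
      exact ⟨f0, mem_inv.2 ⟨hh, hi⟩, rfl⟩
  rw [this]
  exact finrank_span_singleton fun h0 => hn (Qmk_zero.1 h0)

theorem good_rank {t : ℕ} (ht : 2 ≤ t) (hg : Good t) :
    Module.finrank kk ↥(QInv (nn (t + 1)) glSet) = 1 := by
  obtain ⟨g, h1, h2, h3⟩ := hg
  obtain ⟨f0, hh, hi, ha⟩ := iv_exists ht h1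
  refine rank1 hh hi ?_ ?_
  · intro h
    exact h2 ((Submodule.add_mem_iff_right _ (al_HH h)).1 ha)
  · intro f hf
    obtain ⟨c, hc'⟩ := h3 _ (al_inv hf)
    exact ⟨c, iv_unique hi ha hf hc'⟩

theorem nn_eq (s : ℕ) : 2 * (2 ^ s - 1) + 2 ^ s = nn s := by
  induction s with
  | zero => rfl
  | succ s ih =>
    rw [nn, ← ih, pow_succ]
    have := Nat.one_le_two_pow (n := s)
    omega

theorem main_thm (s n : ℕ) (hs : 1 ≤ s)
    (hn : n = 2 * (2 ^ s - 1) + 2 ^ s) :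
    (s = 1 ∨ s = 2 ∨ s = 4 → Module.finrank kk ↥(QInv n glSet) = 0) ∧
    (s ≠ 1 → s ≠ 2 → s ≠ 4 → Module.finrank kk ↥(QInv n glSet) = 1) := by
  rw [nn_eq] at hn
  subst hn
  refine ⟨?_, fun h1 h2 h4 => ?_⟩
  · rintro (rfl | rfl | rfl)
    · exact rank0 fun f hf => case_one hf
    · exact rank0 fun f hf => iv_final hf (case_two (al_inv hf))
    · exact rank0 fun f hf => iv_final hf (case_four (al_inv hf))
  · by_cases h3 : s = 3
    · subst h3; exact good_rank le_rfl good_two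
    · obtain ⟨m, rfl⟩ : ∃ m, s = m + 1 + 1 := ⟨s - 2, by omega⟩
      exact good_rank (by omega) (good_big (by omega))

/-- In degree `n = 2(2^s-1) + 2^s = 3·2^s - 2` (`s ≥ 1`), the space of
`GL_4(F_2)`-invariants of `Q_n` has dimension `0` if `s ∈ {1,2,4}` and `1` otherwise. -/
theorem statement_4 (s n : ℕ) (hs : 1 ≤ s)
    (hn : n = 2 * (2 ^ s - 1) + 2 ^ s) :
    (s = 1 ∨ s = 2 ∨ s = 4 → Module.finrank kk ↥(QInv n glSet) = 0) ∧
    (s ≠ 1 → s ≠ 2 → s ≠ 4 → Module.finrank kk ↥(QInv n glSet) = 1) := by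
  exact main_thm s n hs hn

end
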